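/- Let p ≥ q ≥ 1 and n = p + q. For γ = (γ₁ ≥ … ≥ γ_n ≥ 0) ∈ ℝⁿ, s = (s₁ ≥ … ≥ s_p ≥ 0) ∈ ℝ^p and t = (t₁ ≥ … ≥ t_q ≥ 0) ∈ ℝ^q, the triple (γ, s, t) belongs to T(p,q) (i.e. there exists an n×n complex matrix X with s(X) = γ, s(X₁₁) = s and s(X₂₂) = t) if and only if (γ̂, ŝ, t̂) ∈ LR(2p, 2q). -/

import Mathlib

open Matrix

/-- Eigenvalues of a (Hermitian) complex matrix, listed in decreasing order. -/
noncomputable def eigVec {k : ℕ} (X : Matrix (Fin k) (Fin k) ℂ) (hX : X.IsHermitian) :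
    Fin k → ℝ :=
  fun i => hX.eigenvalues (Tuple.sort hX.eigenvalues i.rev)

/-- The `i`-th (0-based) singular value of a rectangular complex matrix:
the square root of the `i`-th largest eigenvalue of `Y * Yᴴ` (and `0` for `i ≥ a`). -/
noncomputable def sval {a b : ℕ} (Y : Matrix (Fin a) (Fin b) ℂ) (i : ℕ) : ℝ :=
  if h : i < a then
    Real.sqrt (eigVec (Y * Yᴴ) (Matrix.isHermitian_mul_conjTranspose_self Y) ⟨i, h⟩)
  else 0

/-- The Horn cone `Horn(k)`. -/
def Horn (k : ℕ) : Set ((Fin k → ℝ) × (Fin k → ℝ) × (Fin k → ℝ)) :=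
  { v | ∃ (X Y : Matrix (Fin k) (Fin k) ℂ) (hX : X.IsHermitian) (hY : Y.IsHermitian),
      v.1 = eigVec X hX ∧ v.2.1 = eigVec Y hY ∧ v.2.2 = eigVec (X + Y) (hX.add hY) }

/-- The Littlewood–Richardson cone `LR(m,n)`. -/
def LRcone (m n : ℕ) : Set ((Fin (m + n) → ℝ) × (Fin m → ℝ) × (Fin n → ℝ)) :=
  { v | ∃ (M : Matrix (Fin (m + n)) (Fin (m + n)) ℂ) (hM : M.IsHermitian),
      v.1 = eigVec M hM ∧
      v.2.1 = eigVec (M.submatrix (Fin.castAdd n) (Fin.castAdd n))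
        (hM.submatrix (Fin.castAdd n)) ∧
      v.2.2 = eigVec (M.submatrix (Fin.natAdd m) (Fin.natAdd m))
        (hM.submatrix (Fin.natAdd m)) }

/-- Top-left `p × p` block. -/
def blockTL (p q : ℕ) (X : Matrix (Fin (p + q)) (Fin (p + q)) ℂ) : Matrix (Fin p) (Fin p) ℂ :=
  X.submatrix (Fin.castAdd q) (Fin.castAdd q)

/-- Top-right `p × q` block. -/
def blockTR (p q : ℕ) (X : Matrix (Fin (p + q)) (Fin (p + q)) ℂ) : Matrix (Fin p) (Fin q) ℂ :=
  X.submatrix (Fin.castAdd q) (Fin.natAdd p)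

/-- Bottom-left `q × p` block. -/
def blockBL (p q : ℕ) (X : Matrix (Fin (p + q)) (Fin (p + q)) ℂ) : Matrix (Fin q) (Fin p) ℂ :=
  X.submatrix (Fin.natAdd p) (Fin.castAdd q)

/-- Bottom-right `q × q` block. -/
def blockBR (p q : ℕ) (X : Matrix (Fin (p + q)) (Fin (p + q)) ℂ) : Matrix (Fin q) (Fin q) ℂ :=
  X.submatrix (Fin.natAdd p) (Fin.natAdd p)

/-- `λ* = (−λ_k, …, −λ_1)`. -/
def starVec {k : ℕ} (x : Fin k → ℝ) : Fin k → ℝ := fun i => -x i.rev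

/-- `ŝ^{p,q} = (s₁, …, s_q, 0, …, 0, −s_q, …, −s₁) ∈ ℝ^{p+q}` (with `p − q` middle zeros). -/
noncomputable def hatPQ (p q : ℕ) (s : Fin q → ℝ) : Fin (p + q) → ℝ :=
  fun i =>
    if h : (i : ℕ) < q then s ⟨i, h⟩
    else if h' : (i : ℕ) < p then 0
    else -s ⟨p + q - 1 - i, by have := i.isLt; omega⟩

/-- The cone `A(p,q)`: pairs `(e(X), s(X₁₂))` for `X` Hermitian of size `p+q`. -/
def coneA (p q : ℕ) : Set ((Fin (p + q) → ℝ) × (Fin q → ℝ)) :=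
  { v | ∃ (X : Matrix (Fin (p + q)) (Fin (p + q)) ℂ) (hX : X.IsHermitian),
      v.1 = eigVec X hX ∧ ∀ i : Fin q, v.2 i = sval (blockTR p q X) (i : ℕ) }

/-- The cone `S(p,q)`: triples `(s(X), s(X₁₂), s(X₂₁))`. -/
def coneS (p q : ℕ) : Set ((Fin (p + q) → ℝ) × (Fin q → ℝ) × (Fin q → ℝ)) :=
  { v | ∃ X : Matrix (Fin (p + q)) (Fin (p + q)) ℂ,
      (∀ i : Fin (p + q), v.1 i = sval X (i : ℕ)) ∧
      (∀ i : Fin q, v.2.1 i = sval (blockTR p q X) (i : ℕ)) ∧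
      (∀ i : Fin q, v.2.2 i = sval (blockBL p q X) (i : ℕ)) }

/-- The cone `T(p,q)`: triples `(s(X), s(X₁₁), s(X₂₂))`. -/
def coneT (p q : ℕ) : Set ((Fin (p + q) → ℝ) × (Fin p → ℝ) × (Fin q → ℝ)) :=
  { v | ∃ X : Matrix (Fin (p + q)) (Fin (p + q)) ℂ,
      (∀ i : Fin (p + q), v.1 i = sval X (i : ℕ)) ∧
      (∀ i : Fin p, v.2.1 i = sval (blockTL p q X) (i : ℕ)) ∧
      (∀ i : Fin q, v.2.2 i = sval (blockBR p q X) (i : ℕ)) }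

/-- `μ(A) = (a_r − r ≥ … ≥ a₂ − 2 ≥ a₁ − 1)` as a decreasing real vector, for
`A = {a₁ < … < a_r}` a subset of `[n]` (0-based indexing internally). -/
noncomputable def muVec {n r : ℕ} (A : Finset (Fin n)) (h : A.card = r) : Fin r → ℝ :=
  fun k => (((A.orderIsoOfFin h k.rev : Fin n) : ℕ) : ℝ) - ((k.rev : ℕ) : ℝ)

/-- `A^o = {ℓ + 1 − a : a ∈ A}` inside `[ℓ]`. -/
def opp {n : ℕ} (A : Finset (Fin n)) : Finset (Fin n) := A.image Fin.rev

/-- `|s|_{K ∩ [q]}` where `K ⊆ [n]`, `s ∈ ℝ^q` and `[q]` is viewed inside `[n]`. -/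
noncomputable def sumRestr {n q : ℕ} (s : Fin q → ℝ) (K : Finset (Fin n)) : ℝ :=
  ∑ i ∈ K, (if h : (i : ℕ) < q then s ⟨i, h⟩ else 0)

/-- The augmented matrix `Ŷ^{p,q} = [[0, Y], [Yᴴ, 0]]` of size `p + q`. -/
def hatM (p q : ℕ) (Y : Matrix (Fin p) (Fin q) ℂ) : Matrix (Fin (p + q)) (Fin (p + q)) ℂ :=
  Matrix.reindex finSumFinEquiv finSumFinEquiv (Matrix.fromBlocks 0 Y Yᴴ 0)

set_option linter.unusedSectionVars false

namespace FlagMoment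

open scoped ComplexOrder Matrix.Norms.Frobenius
open Metric (sphere ball)

section LinearAlgebra

variable {ι κ : Type*} [Fintype ι] [Fintype κ] [DecidableEq ι] [DecidableEq κ]

/-- The orthogonal projection onto the column space of a matrix of full column rank. -/
noncomputable def colProj (A : Matrix ι κ ℂ) : Matrix ι ι ℂ := A * (Aᴴ * A)⁻¹ * Aᴴ

/-- The logarithm of the Gram determinant. -/
noncomputable def logGram (A : Matrix ι κ ℂ) : ℝ := Real.log ‖(Aᴴ * A).det‖

lemma posDef_gram_mul {A : Matrix ι κ ℂ} (hA : (Aᴴ * A).PosDef) {g : Matrix ι ι ℂ}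
    (hg : IsUnit g) : ((g * A)ᴴ * (g * A)).PosDef := by
  have hinj : Function.Injective A.mulVec := by
    have := Matrix.mulVec_injective_of_isUnit hA.isUnit
    intro x y h
    apply this
    simp only [← Matrix.mulVec_mulVec, h]
  apply Matrix.PosDef.conjTranspose_mul_self
  intro x y h
  simp only [← Matrix.mulVec_mulVec] at h
  exact hinj (Matrix.mulVec_injective_of_isUnit hg h)

lemma gram_mul_right (A : Matrix ι κ ℂ) (R : Matrix κ κ ℂ) :
    (A * R)ᴴ * (A * R) = Rᴴ * (Aᴴ * A) * R := by
  simp only [conjTranspose_mul, Matrix.mul_assoc]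

lemma colProj_mul_right (A : Matrix ι κ ℂ) {R : Matrix κ κ ℂ}
    (hR : IsUnit R) : colProj (A * R) = colProj A := by
  have hR' : IsUnit R.det := (Matrix.isUnit_iff_isUnit_det R).1 hR
  have hRs : IsUnit Rᴴ.det := by rw [det_conjTranspose]; exact hR'.star
  unfold colProj
  rw [gram_mul_right, Matrix.mul_inv_rev, Matrix.mul_inv_rev, conjTranspose_mul]
  have h1 : R * R⁻¹ = 1 := Matrix.mul_nonsing_inv R hR'
  have h2 : Rᴴ⁻¹ * Rᴴ = 1 := Matrix.nonsing_inv_mul _ hRs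
  calc A * R * (R⁻¹ * ((Aᴴ * A)⁻¹ * Rᴴ⁻¹)) * (Rᴴ * Aᴴ)
      = A * (R * R⁻¹) * (Aᴴ * A)⁻¹ * (Rᴴ⁻¹ * Rᴴ) * Aᴴ := by simp only [Matrix.mul_assoc]
    _ = _ := by rw [h1, h2]; simp

lemma colProj_of_isometry {Q : Matrix ι κ ℂ} (hQ : Qᴴ * Q = 1) : colProj Q = Q * Qᴴ := by
  simp [colProj, hQ]

lemma logGram_mul_right {A : Matrix ι κ ℂ} (hA : IsUnit (Aᴴ * A)) {R : Matrix κ κ ℂ}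
    (hR : IsUnit R) : logGram (A * R) = logGram A + 2 * Real.log ‖R.det‖ := by
  have hR' : R.det ≠ 0 := ((Matrix.isUnit_iff_isUnit_det R).1 hR).ne_zero
  have hA' : (Aᴴ * A).det ≠ 0 := ((Matrix.isUnit_iff_isUnit_det _).1 hA).ne_zero
  unfold logGram
  rw [gram_mul_right, det_mul, det_mul, det_conjTranspose, norm_mul, norm_mul, norm_star,
    Real.log_mul (by positivity) (by positivity), Real.log_mul (by positivity) (by positivity)]
  ring

lemma exists_unitary_diagonal {Z : Matrix κ κ ℂ} (hZ : Z.IsHermitian) :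
    ∃ U : Matrix κ κ ℂ, Uᴴ * U = 1 ∧ U * Uᴴ = 1 ∧
      Z = U * diagonal (fun i => (hZ.eigenvalues i : ℂ)) * Uᴴ := by
  refine ⟨hZ.eigenvectorUnitary, ?_, ?_, ?_⟩
  · exact Unitary.coe_star_mul_self hZ.eigenvectorUnitary
  · exact Unitary.coe_mul_star_self hZ.eigenvectorUnitary
  · conv_lhs => rw [hZ.spectral_theorem]
    rfl

lemma exists_isometry {A : Matrix ι κ ℂ} (hA : (Aᴴ * A).PosDef) :
    ∃ (Q : Matrix ι κ ℂ) (R : Matrix κ κ ℂ), Qᴴ * Q = 1 ∧ IsUnit R ∧ A = Q * R := by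
  obtain ⟨B, hB, hAB⟩ : ∃ B : Matrix κ κ ℂ, IsUnit B ∧ Aᴴ * A = Bᴴ * B := by
    obtain ⟨U, hU, hU', hAU⟩ := exists_unitary_diagonal hA.1
    set lam := hA.1.eigenvalues with hlam
    have hB : Aᴴ * A = (diagonal (fun i => (Real.sqrt (lam i) : ℂ)) * Uᴴ)ᴴ *
        (diagonal (fun i => (Real.sqrt (lam i) : ℂ)) * Uᴴ) := by
      rw [conjTranspose_mul, conjTranspose_conjTranspose, diagonal_conjTranspose]
      have : diagonal (star fun i => (Real.sqrt (lam i) : ℂ)) *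
          diagonal (fun i => (Real.sqrt (lam i) : ℂ)) = diagonal (fun i => (lam i : ℂ)) := by
        rw [diagonal_mul_diagonal]
        congr 1
        funext i
        simp only [Pi.star_apply, Complex.star_def, Complex.conj_ofReal]
        rw [← Complex.ofReal_mul, Real.mul_self_sqrt (hA.eigenvalues_pos i).le]
      rw [hAU, ← this]
      simp only [Matrix.mul_assoc]
    refine ⟨_, ?_, hB⟩
    have h := hA.isUnit
    rw [hB, Matrix.isUnit_iff_isUnit_det, det_mul] at h
    exact (Matrix.isUnit_iff_isUnit_det _).2 (isUnit_of_mul_isUnit_right h)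
  have hB' : IsUnit B.det := (Matrix.isUnit_iff_isUnit_det B).1 hB
  have hBs : IsUnit Bᴴ.det := by rw [det_conjTranspose]; exact hB'.star
  refine ⟨A * B⁻¹, B, ?_, hB, ?_⟩
  · rw [gram_mul_right, hAB, Matrix.conjTranspose_nonsing_inv]
    calc Bᴴ⁻¹ * (Bᴴ * B) * B⁻¹ = (Bᴴ⁻¹ * Bᴴ) * (B * B⁻¹) := by simp only [Matrix.mul_assoc]
      _ = 1 := by rw [Matrix.nonsing_inv_mul _ hBs, Matrix.mul_nonsing_inv _ hB']; simp
  · rw [Matrix.mul_assoc, Matrix.nonsing_inv_mul _ hB', Matrix.mul_one]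

lemma isHermitian_colProj (A : Matrix ι κ ℂ) : (colProj A).IsHermitian := by
  unfold colProj Matrix.IsHermitian
  have h : ((Aᴴ * A)⁻¹)ᴴ = (Aᴴ * A)⁻¹ := by
    rw [conjTranspose_nonsing_inv, conjTranspose_mul, conjTranspose_conjTranspose]
  rw [conjTranspose_mul, conjTranspose_mul, h, conjTranspose_conjTranspose, Matrix.mul_assoc]

lemma log_det_le {Z : Matrix κ κ ℂ} (hZ : Z.PosDef) {c : ℝ} (hc : 0 < c) :
    Real.log ‖Z.det‖ ≤ Z.trace.re / c - Fintype.card κ + Fintype.card κ * Real.log c := by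
  rw [hZ.1.det_eq_prod_eigenvalues, hZ.1.trace_eq_sum_eigenvalues, norm_prod,
    Real.log_prod (fun i _ => by
      simpa using (hZ.eigenvalues_pos i).ne')]
  have : ∀ i, Real.log ‖(hZ.1.eigenvalues i : ℂ)‖
      ≤ hZ.1.eigenvalues i / c - 1 + Real.log c := by
    intro i
    have hp := hZ.eigenvalues_pos i
    rw [Complex.norm_real, Real.norm_of_nonneg hp.le]
    have := Real.log_le_sub_one_of_pos (div_pos hp hc)
    rw [Real.log_div hp.ne' hc.ne'] at this
    linarith
  refine (Finset.sum_le_sum fun i _ => this i).trans (le_of_eq ?_)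
  simp [Finset.sum_add_distrib, Finset.sum_sub_distrib, Finset.sum_div]

/-- Convexity of the logarithm of the Gram determinant along geodesics. -/
lemma logGram_convex_isometry {Q : Matrix ι κ ℂ} (hQ : Qᴴ * Q = 1) {V : Matrix ι ι ℂ}
    (hV : Vᴴ * V = 1) (h : ι → ℝ) (hpos : ∀ i, 0 < h i)
    (hW : (Qᴴ * (V * diagonal (fun i => (h i : ℂ)) * Vᴴ) * Q).PosDef) :
    (Q * Qᴴ * (V * diagonal (fun i => (Real.log (h i) : ℂ)) * Vᴴ)).trace.re ≤
      Real.log ‖(Qᴴ * (V * diagonal (fun i => (h i : ℂ)) * Vᴴ) * Q).det‖ := by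
  obtain ⟨U, hU, hU', hWU⟩ := exists_unitary_diagonal hW.1
  set lam := hW.1.eigenvalues
  have hlam : ∀ i, 0 < lam i := hW.eigenvalues_pos
  have hV' : V * Vᴴ = 1 := mul_eq_one_comm.1 hV
  set B := Vᴴ * Q * U with hB
  have hBB : Bᴴ * B = 1 := by
    rw [hB]
    simp only [conjTranspose_mul, conjTranspose_conjTranspose]
    calc Uᴴ * (Qᴴ * V) * (Vᴴ * Q * U) = Uᴴ * (Qᴴ * (V * Vᴴ) * Q) * U := by
          simp only [Matrix.mul_assoc]
      _ = 1 := by rw [hV', Matrix.mul_one, hQ, Matrix.mul_one, hU]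
  have hBh : Bᴴ * diagonal (fun i => (h i : ℂ)) * B = diagonal (fun i => (lam i : ℂ)) := by
    have : Uᴴ * (Qᴴ * (V * diagonal (fun i => (h i : ℂ)) * Vᴴ) * Q) * U
        = diagonal (fun i => (lam i : ℂ)) := by
      rw [hWU]
      calc Uᴴ * (U * diagonal (fun i => (lam i : ℂ)) * Uᴴ) * U
          = (Uᴴ * U) * diagonal (fun i => (lam i : ℂ)) * (Uᴴ * U) := by
            simp only [Matrix.mul_assoc]
        _ = _ := by rw [hU]; simp
    rw [← this, hB]
    simp only [conjTranspose_mul, conjTranspose_conjTranspose, Matrix.mul_assoc]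
  have key : ∀ f : ι → ℝ, ∀ j, (Bᴴ * diagonal (fun i => (f i : ℂ)) * B) j j
      = ((∑ i, ‖B i j‖ ^ 2 * f i : ℝ) : ℂ) := by
    intro f j
    rw [Matrix.mul_apply]
    push_cast
    refine Finset.sum_congr rfl fun i _ => ?_
    rw [Matrix.mul_diagonal, conjTranspose_apply, ← Complex.conj_mul']
    simp only [Complex.star_def]
    ring
  have hw : ∀ j, ∑ i, ‖B i j‖ ^ 2 = 1 := by
    intro j
    have := key 1 j
    simp only [Pi.one_apply, Complex.ofReal_one, mul_one, diagonal_one, hBB, Matrix.mul_one,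
      one_apply_eq] at this
    exact_mod_cast this.symm
  have hl : ∀ j, lam j = ∑ i, ‖B i j‖ ^ 2 * h i := by
    intro j
    have := key h j
    rw [hBh, diagonal_apply_eq] at this
    exact_mod_cast this
  have jensen : ∀ j, ∑ i, ‖B i j‖ ^ 2 * Real.log (h i) ≤ Real.log (lam j) := by
    intro j
    rw [hl]
    have := (strictConcaveOn_log_Ioi.concaveOn).le_map_sum (t := Finset.univ)
      (w := fun i => ‖B i j‖ ^ 2) (p := h) (fun i _ => by positivity) (hw j)
      (fun i _ => hpos i)
    simpa using this
  have htr : (Q * Qᴴ * (V * diagonal (fun i => (Real.log (h i) : ℂ)) * Vᴴ)).trace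
      = (Bᴴ * diagonal (fun i => (Real.log (h i) : ℂ)) * B).trace := by
    rw [hB, Matrix.trace_mul_comm (Q * Qᴴ)]
    simp only [conjTranspose_mul, conjTranspose_conjTranspose]
    rw [Matrix.trace_mul_comm _ (Vᴴ * Q * U)]
    calc _ = (V * diagonal (fun i => (Real.log (h i) : ℂ)) * (Vᴴ * Q * Qᴴ)).trace := by
          simp only [Matrix.mul_assoc]
      _ = ((Vᴴ * Q * (U * Uᴴ) * Qᴴ) * (V * diagonal (fun i => (Real.log (h i) : ℂ)))).trace := by
          rw [hU', Matrix.mul_one, Matrix.trace_mul_comm]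
      _ = _ := by simp only [Matrix.mul_assoc]
  rw [htr, Matrix.trace, Complex.re_sum]
  have hdet : Real.log ‖(Qᴴ * (V * diagonal (fun i => (h i : ℂ)) * Vᴴ) * Q).det‖
      = ∑ j, Real.log (lam j) := by
    rw [hW.1.det_eq_prod_eigenvalues, norm_prod,
      Real.log_prod (fun i _ => by simpa using (hlam i).ne')]
    refine Finset.sum_congr rfl fun i _ => ?_
    exact congrArg Real.log ((Complex.norm_real _).trans (Real.norm_of_nonneg (hlam i).le))
  rw [hdet]
  refine Finset.sum_le_sum fun j _ => ?_
  rw [diag_apply, key (fun i => Real.log (h i)) j, Complex.ofReal_re]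
  exact jensen j

lemma logGram_convex {A : Matrix ι κ ℂ} (hA : (Aᴴ * A).PosDef) {g V : Matrix ι ι ℂ}
    (hg : IsUnit g) (hV : Vᴴ * V = 1) (h : ι → ℝ) (hpos : ∀ i, 0 < h i)
    (hgV : gᴴ * g = V * diagonal (fun i => (h i : ℂ)) * Vᴴ) :
    logGram A + (colProj A * (V * diagonal (fun i => (Real.log (h i) : ℂ)) * Vᴴ)).trace.re ≤
      logGram (g * A) := by
  obtain ⟨Q, R, hQ, hR, rfl⟩ := exists_isometry hA
  have hQ1 : (Qᴴ * Q).PosDef := by rw [hQ]; exact Matrix.PosDef.one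
  have hgQ := posDef_gram_mul hQ1 hg
  rw [← Matrix.mul_assoc g, logGram_mul_right hQ1.isUnit hR, logGram_mul_right hgQ.isUnit hR,
    colProj_mul_right _ hR, colProj_of_isometry hQ]
  have e : (g * Q)ᴴ * (g * Q) = Qᴴ * (V * diagonal (fun i => (h i : ℂ)) * Vᴴ) * Q := by
    rw [← hgV]; simp only [conjTranspose_mul, Matrix.mul_assoc]
  have := logGram_convex_isometry hQ hV h hpos (e ▸ hgQ)
  have h0 : logGram Q = 0 := by simp [logGram, hQ]
  have h1 : logGram (g * Q)
      = Real.log ‖(Qᴴ * (V * diagonal (fun i => (h i : ℂ)) * Vᴴ) * Q).det‖ := by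
    rw [logGram, e]
  rw [h0, h1]
  linarith

lemma posSemidef_one_sub_isometry {Q : Matrix ι κ ℂ} (hQ : Qᴴ * Q = 1) :
    (1 - Q * Qᴴ).PosSemidef := by
  have h : (1 - Q * Qᴴ)ᴴ * (1 - Q * Qᴴ) = 1 - Q * Qᴴ := by
    have : Q * Qᴴ * (Q * Qᴴ) = Q * Qᴴ := by
      calc Q * Qᴴ * (Q * Qᴴ) = Q * (Qᴴ * Q) * Qᴴ := by simp only [Matrix.mul_assoc]
        _ = _ := by rw [hQ, Matrix.mul_one]
    simp only [conjTranspose_sub, conjTranspose_one, conjTranspose_mul, conjTranspose_conjTranspose,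
      Matrix.sub_mul, Matrix.mul_sub, Matrix.one_mul, Matrix.mul_one, this]
    simp
  rw [← h]
  exact posSemidef_conjTranspose_mul_self _

/-- The Cauchy–Schwarz inequality for Gram determinants. -/
lemma log_det_cauchy_schwarz {A B : Matrix ι κ ℂ} (hA : (Aᴴ * A).PosDef) (hB : (Bᴴ * B).PosDef)
    (hAB : (Aᴴ * B).det ≠ 0) :
    2 * Real.log ‖(Aᴴ * B).det‖ ≤ logGram A + logGram B := by
  obtain ⟨Q, R, hQ, hR, rfl⟩ := exists_isometry hA
  obtain ⟨Q', R', hQ', hR', rfl⟩ := exists_isometry hB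
  have hQ1 : IsUnit (Qᴴ * Q) := by rw [hQ]; exact isUnit_one
  have hQ1' : IsUnit (Q'ᴴ * Q') := by rw [hQ']; exact isUnit_one
  have hRd : R.det ≠ 0 := ((Matrix.isUnit_iff_isUnit_det R).1 hR).ne_zero
  have hRd' : R'.det ≠ 0 := ((Matrix.isUnit_iff_isUnit_det R').1 hR').ne_zero
  have e : (Q * R)ᴴ * (Q' * R') = Rᴴ * (Qᴴ * Q') * R' := by
    simp only [conjTranspose_mul, Matrix.mul_assoc]
  rw [e, det_mul, det_mul, det_conjTranspose] at hAB ⊢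
  have hd : (Qᴴ * Q').det ≠ 0 := by
    intro h; simp [h] at hAB
  rw [logGram_mul_right hQ1 hR, logGram_mul_right hQ1' hR', norm_mul, norm_mul, norm_star,
    Real.log_mul (by positivity) (by positivity), Real.log_mul (by positivity) (by positivity)]
  have h0 : logGram Q = 0 := by simp [logGram, hQ]
  have h0' : logGram Q' = 0 := by simp [logGram, hQ']
  rw [h0, h0']
  have hu : IsUnit (Qᴴ * Q') := (Matrix.isUnit_iff_isUnit_det _).2 (isUnit_iff_ne_zero.2 hd)
  have hZ : ((Qᴴ * Q')ᴴ * (Qᴴ * Q')).PosDef :=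
    Matrix.PosDef.conjTranspose_mul_self _ (Matrix.mulVec_injective_of_isUnit hu)
  have h1 := log_det_le hZ one_pos
  rw [det_mul, det_conjTranspose, norm_mul, norm_star,
    Real.log_mul (by positivity) (by positivity)] at h1
  have h2 : ((Qᴴ * Q')ᴴ * (Qᴴ * Q')).trace.re ≤ Fintype.card κ := by
    have hp := ((posSemidef_one_sub_isometry hQ).conjTranspose_mul_mul_same Q').trace_nonneg
    have e2 : Q'ᴴ * (1 - Q * Qᴴ) * Q' = 1 - (Qᴴ * Q')ᴴ * (Qᴴ * Q') := by
      rw [Matrix.mul_sub, Matrix.sub_mul, Matrix.mul_one, hQ']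
      simp only [conjTranspose_mul, conjTranspose_conjTranspose, Matrix.mul_assoc]
    rw [e2, trace_sub, trace_one] at hp
    have := (Complex.le_def.1 hp).1
    rw [Complex.sub_re, Complex.natCast_re, Complex.zero_re] at this
    linarith
  rw [div_one, Real.log_one, mul_zero] at h1
  linarith

end LinearAlgebra

section ExpBounds

variable {𝔸 : Type*} [NormedRing 𝔸] [NormedAlgebra ℂ 𝔸] [CompleteSpace 𝔸]

lemma norm_exp_sub_one_le_ring (x : 𝔸) : ‖NormedSpace.exp x - 1‖ ≤ Real.exp ‖x‖ - 1 := by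
  have h1 := (hasSum_nat_add_iff' 1).2 (NormedSpace.exp_series_hasSum_exp' (𝕂 := ℂ) x)
  have h2 := (hasSum_nat_add_iff' 1).2 (NormedSpace.exp_series_hasSum_exp' (𝕂 := ℝ) ‖x‖)
  rw [← Real.exp_eq_exp_ℝ] at h2
  simp only [Finset.sum_range_one, pow_zero, Nat.factorial_zero, Nat.cast_one, inv_one,
    one_smul] at h1 h2
  refine h1.norm_le_of_bounded h2 fun n => ?_
  rw [norm_smul, norm_inv, smul_eq_mul, Complex.norm_natCast]
  gcongr
  exact norm_pow_le' x (Nat.succ_pos n)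

lemma norm_exp_sub_one_sub_id_le_ring (x : 𝔸) :
    ‖NormedSpace.exp x - 1 - x‖ ≤ Real.exp ‖x‖ - 1 - ‖x‖ := by
  have h1 := (hasSum_nat_add_iff' 2).2 (NormedSpace.exp_series_hasSum_exp' (𝕂 := ℂ) x)
  have h2 := (hasSum_nat_add_iff' 2).2 (NormedSpace.exp_series_hasSum_exp' (𝕂 := ℝ) ‖x‖)
  rw [← Real.exp_eq_exp_ℝ] at h2
  simp only [Finset.sum_range_succ, Finset.sum_range_zero, zero_add, pow_zero, pow_one,
    Nat.factorial_zero, Nat.factorial_one, Nat.cast_one, inv_one, one_smul, ← sub_sub] at h1 h2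
  refine h1.norm_le_of_bounded h2 fun n => ?_
  rw [norm_smul, norm_inv, smul_eq_mul, Complex.norm_natCast]
  gcongr
  exact norm_pow_le' x (Nat.succ_pos _)

lemma norm_exp_le_ring (x : 𝔸) : ‖NormedSpace.exp x‖ ≤ (‖(1 : 𝔸)‖ + 1) * Real.exp ‖x‖ := by
  have h := norm_exp_sub_one_le_ring x
  have h1 : NormedSpace.exp x = (NormedSpace.exp x - 1) + 1 := by abel
  have h2 : (1 : ℝ) ≤ Real.exp ‖x‖ := Real.one_le_exp (norm_nonneg x)
  have h3 : 0 ≤ ‖(1 : 𝔸)‖ := norm_nonneg _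
  calc ‖NormedSpace.exp x‖ ≤ ‖NormedSpace.exp x - 1‖ + ‖(1 : 𝔸)‖ := by
        conv_lhs => rw [h1]
        exact norm_add_le _ _
    _ ≤ _ := by nlinarith

end ExpBounds

section Frobenius

variable {ι κ : Type*} [Fintype ι] [Fintype κ] [DecidableEq ι] [DecidableEq κ]

lemma frobenius_norm_sq (X : Matrix ι κ ℂ) : ‖X‖ ^ 2 = ∑ i, ∑ j, ‖X i j‖ ^ 2 := by
  rw [frobenius_norm_def, ← Real.sqrt_eq_rpow, Real.sq_sqrt (by positivity)]
  simp

lemma trace_conjTranspose_mul_self_re (X : Matrix ι κ ℂ) : (Xᴴ * X).trace.re = ‖X‖ ^ 2 := by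
  rw [frobenius_norm_sq, Finset.sum_comm, Matrix.trace, Complex.re_sum]
  refine Finset.sum_congr rfl fun j _ => ?_
  rw [diag_apply, Matrix.mul_apply, Complex.re_sum]
  refine Finset.sum_congr rfl fun i _ => ?_
  rw [conjTranspose_apply, Complex.star_def, Complex.conj_mul']
  norm_cast

lemma norm_trace_mul_le (X : Matrix ι κ ℂ) (Y : Matrix κ ι ℂ) : ‖(X * Y).trace‖ ≤ ‖X‖ * ‖Y‖ := by
  have hX : ‖X‖ = √(∑ x : ι × κ, ‖X x.1 x.2‖ ^ 2) := by
    rw [← Real.sqrt_sq (norm_nonneg X), frobenius_norm_sq, Fintype.sum_prod_type]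
  have hY : ‖Y‖ = √(∑ x : ι × κ, ‖Y x.2 x.1‖ ^ 2) := by
    rw [← Real.sqrt_sq (norm_nonneg Y), frobenius_norm_sq, Fintype.sum_prod_type_right]
  rw [hX, hY]
  refine le_trans ?_ (Real.sum_mul_le_sqrt_mul_sqrt _ _ _)
  have : (X * Y).trace = ∑ x : ι × κ, X x.1 x.2 * Y x.2 x.1 := by
    rw [Fintype.sum_prod_type]
    simp [Matrix.trace, Matrix.mul_apply]
  rw [this]
  exact (norm_sum_le _ _).trans (le_of_eq (Finset.sum_congr rfl fun _ _ => norm_mul _ _))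

lemma abs_trace_mul_re_le (X : Matrix ι κ ℂ) (Y : Matrix κ ι ℂ) :
    |(X * Y).trace.re| ≤ ‖X‖ * ‖Y‖ :=
  (Complex.abs_re_le_norm _).trans (norm_trace_mul_le X Y)

lemma norm_sq_isometry {Q : Matrix ι κ ℂ} (hQ : Qᴴ * Q = 1) : ‖Q‖ ^ 2 = Fintype.card κ := by
  rw [← trace_conjTranspose_mul_self_re, hQ]; simp

lemma norm_isometry_mul_conjTranspose_le {Q : Matrix ι κ ℂ} (hQ : Qᴴ * Q = 1) :
    ‖Q * Qᴴ‖ ≤ Fintype.card κ := by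
  rw [← norm_sq_isometry hQ, sq]
  exact (frobenius_norm_mul _ _).trans (by rw [frobenius_norm_conjTranspose])

lemma norm_colProj_le {A : Matrix ι κ ℂ} (hA : (Aᴴ * A).PosDef) :
    ‖colProj A‖ ≤ Fintype.card κ := by
  obtain ⟨Q, R, hQ, hR, rfl⟩ := exists_isometry hA
  rw [colProj_mul_right _ hR, colProj_of_isometry hQ]
  exact norm_isometry_mul_conjTranspose_le hQ

lemma isUnit_exp' (η : Matrix ι ι ℂ) : IsUnit (NormedSpace.exp η) := Matrix.isUnit_exp η

lemma logGram_exp_isometry_le {Q : Matrix ι κ ℂ} (hQ : Qᴴ * Q = 1) (η : Matrix ι ι ℂ) :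
    logGram (NormedSpace.exp η * Q) ≤ 2 * (Q * Qᴴ * η).trace.re +
      ((‖(1 : Matrix ι ι ℂ)‖ + 1) ^ 2 + 6) * Fintype.card κ * ‖η‖ ^ 2 := by
  have hQ1 : (Qᴴ * Q).PosDef := by rw [hQ]; exact Matrix.PosDef.one
  have hZ := posDef_gram_mul hQ1 (isUnit_exp' η)
  set k : ℝ := (Fintype.card κ : ℝ) with hk
  have hk0 : 0 ≤ k := by positivity
  have hQn : ‖Q‖ ^ 2 = k := norm_sq_isometry hQ
  have hQQ : ‖Q * Qᴴ‖ ≤ k := norm_isometry_mul_conjTranspose_le hQ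
  have hη := norm_nonneg η
  have h1n := norm_nonneg (1 : Matrix ι ι ℂ)
  have hlog : ∀ c : ℝ, 0 < c → logGram (NormedSpace.exp η * Q) ≤
      ‖NormedSpace.exp η * Q‖ ^ 2 / c - k + k * Real.log c := by
    intro c hc
    rw [← trace_conjTranspose_mul_self_re]
    exact log_det_le hZ hc
  rcases le_total ‖η‖ 1 with h | h
  · have hR : ‖NormedSpace.exp η - 1 - η‖ ≤ ‖η‖ ^ 2 := by
      refine (norm_exp_sub_one_sub_id_le_ring η).trans ?_
      have := Real.abs_exp_sub_one_sub_id_le (x := ‖η‖) (by rwa [abs_of_nonneg hη])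
      exact (le_abs_self _).trans this
    set R := NormedSpace.exp η - 1 - η with hRdef
    have hexp : NormedSpace.exp η = 1 + (η + R) := by rw [hRdef]; abel
    have hsplit : ‖NormedSpace.exp η * Q‖ ^ 2
        = k + 2 * (Q * Qᴴ * η).trace.re + 2 * (Q * Qᴴ * R).trace.re + ‖(η + R) * Q‖ ^ 2 := by
      rw [← trace_conjTranspose_mul_self_re, ← trace_conjTranspose_mul_self_re ((η + R) * Q), hexp,
        Matrix.add_mul, Matrix.one_mul, conjTranspose_add, Matrix.add_mul, Matrix.mul_add,
        Matrix.mul_add, hQ, trace_add, trace_add, trace_add, Complex.add_re, Complex.add_re,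
        Complex.add_re, trace_one]
      have e1 : (Qᴴ * ((η + R) * Q)).trace.re = (Q * Qᴴ * η).trace.re + (Q * Qᴴ * R).trace.re := by
        rw [← Matrix.mul_assoc, Matrix.trace_mul_comm, ← Matrix.mul_assoc, Matrix.mul_add,
          trace_add, Complex.add_re]
      have e2 : (((η + R) * Q)ᴴ * Q).trace.re = (Qᴴ * ((η + R) * Q)).trace.re := by
        rw [← Complex.conj_re (Qᴴ * ((η + R) * Q)).trace, ← Complex.star_def,
          ← trace_conjTranspose, conjTranspose_mul Qᴴ, conjTranspose_conjTranspose]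
      rw [e2, e1, Complex.natCast_re]
      ring
    have h2 : (Q * Qᴴ * R).trace.re ≤ k * ‖η‖ ^ 2 :=
      (le_abs_self _).trans ((abs_trace_mul_re_le _ _).trans
        (mul_le_mul hQQ hR (norm_nonneg _) hk0))
    have h3 : ‖(η + R) * Q‖ ^ 2 ≤ 4 * k * ‖η‖ ^ 2 := by
      have hR' : ‖R‖ ≤ ‖η‖ := hR.trans (by nlinarith)
      have : ‖(η + R) * Q‖ ≤ (2 * ‖η‖) * ‖Q‖ :=
        (frobenius_norm_mul _ _).trans (mul_le_mul_of_nonneg_right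
          ((norm_add_le _ _).trans (by linarith)) (norm_nonneg _))
      calc ‖(η + R) * Q‖ ^ 2 ≤ ((2 * ‖η‖) * ‖Q‖) ^ 2 := by gcongr
        _ = 4 * ‖Q‖ ^ 2 * ‖η‖ ^ 2 := by ring
        _ = _ := by rw [hQn]
    have h4 := hlog 1 one_pos
    rw [Real.log_one, div_one, hsplit] at h4
    have : 0 ≤ (‖(1 : Matrix ι ι ℂ)‖ + 1) ^ 2 * k * ‖η‖ ^ 2 := by positivity
    nlinarith
  · have h4 := hlog (Real.exp (2 * ‖η‖)) (Real.exp_pos _)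
    rw [Real.log_exp] at h4
    have hb : ‖NormedSpace.exp η * Q‖ ^ 2 / Real.exp (2 * ‖η‖)
        ≤ (‖(1 : Matrix ι ι ℂ)‖ + 1) ^ 2 * k := by
      rw [div_le_iff₀ (Real.exp_pos _)]
      calc ‖NormedSpace.exp η * Q‖ ^ 2
          ≤ ((‖(1 : Matrix ι ι ℂ)‖ + 1) * Real.exp ‖η‖ * ‖Q‖) ^ 2 := by
            gcongr
            exact (frobenius_norm_mul _ _).trans
              (mul_le_mul_of_nonneg_right (norm_exp_le_ring η) (norm_nonneg _))
        _ = (‖(1 : Matrix ι ι ℂ)‖ + 1) ^ 2 * ‖Q‖ ^ 2 * Real.exp ‖η‖ ^ 2 := by ring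
        _ = _ := by rw [hQn, ← Real.exp_nat_mul]; norm_num
    have h5 : -(Q * Qᴴ * η).trace.re ≤ k * ‖η‖ :=
      (neg_le_abs _).trans ((abs_trace_mul_re_le _ _).trans
        (mul_le_mul_of_nonneg_right hQQ hη))
    have h6 : ‖η‖ ≤ ‖η‖ ^ 2 := by nlinarith
    have h7 : 1 ≤ ‖η‖ ^ 2 := by nlinarith
    have h8 : (‖(1 : Matrix ι ι ℂ)‖ + 1) ^ 2 * k ≤ (‖(1 : Matrix ι ι ℂ)‖ + 1) ^ 2 * k * ‖η‖ ^ 2 :=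
      le_mul_of_one_le_right (by positivity) h7
    have h9 : k * ‖η‖ ≤ k * ‖η‖ ^ 2 := mul_le_mul_of_nonneg_left h6 hk0
    nlinarith

lemma logGram_exp_le (η : Matrix ι ι ℂ) {A : Matrix ι κ ℂ} (hA : (Aᴴ * A).PosDef) :
    logGram (NormedSpace.exp η * A) ≤ logGram A + 2 * (colProj A * η).trace.re +
      ((‖(1 : Matrix ι ι ℂ)‖ + 1) ^ 2 + 6) * Fintype.card κ * ‖η‖ ^ 2 := by
  obtain ⟨Q, R, hQ, hR, rfl⟩ := exists_isometry hA
  have hQ1 : (Qᴴ * Q).PosDef := by rw [hQ]; exact Matrix.PosDef.one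
  have hgQ := posDef_gram_mul hQ1 (isUnit_exp' η)
  rw [← Matrix.mul_assoc (NormedSpace.exp η), logGram_mul_right hQ1.isUnit hR,
    logGram_mul_right hgQ.isUnit hR, colProj_mul_right _ hR, colProj_of_isometry hQ]
  have := logGram_exp_isometry_le hQ η
  have h0 : logGram Q = 0 := by simp [logGram, hQ]
  linarith

end Frobenius

section Circle

lemma circleIntegrable_unit {E : Type*} [NormedAddCommGroup E] {f : ℂ → E}
    (hf : ContinuousOn f (sphere 0 1)) : CircleIntegrable f 0 1 :=
  hf.circleIntegrable zero_le_one

lemma circleAverage_unit_mono {f g : ℂ → ℝ} (hf : ContinuousOn f (sphere 0 1))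
    (hg : ContinuousOn g (sphere 0 1)) (h : ∀ z ∈ sphere (0 : ℂ) 1, f z ≤ g z) :
    Real.circleAverage f 0 1 ≤ Real.circleAverage g 0 1 :=
  Real.circleAverage_mono (circleIntegrable_unit hf) (circleIntegrable_unit hg)
    (by simpa using h)

lemma circleAverage_re {f : ℂ → ℂ} (hf : DiffContOnCl ℂ f (ball 0 1)) :
    Real.circleAverage (fun z => (f z).re) 0 1 = (f 0).re := by
  have hc : ContinuousOn f (sphere 0 1) :=
    hf.continuousOn_ball.mono Metric.sphere_subset_closedBall
  have h1 := Complex.reCLM.circleAverage_comp_comm (circleIntegrable_unit hc)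
  rw [DiffContOnCl.circleAverage (by simpa using hf)] at h1
  exact h1

/-- Every continuous complex function on the circle is a uniform limit of functions whose
real parts are boundary values of real parts of entire functions. -/
lemma exists_entire_re_approx {f : ℂ → ℝ} (hf : ContinuousOn f (sphere 0 1)) {ε : ℝ}
    (hε : 0 < ε) : ∃ q : ℂ → ℂ, Differentiable ℂ q ∧ (q 0).im = 0 ∧
      ∀ z ∈ sphere (0 : ℂ) 1, |(q z).re - f z| ≤ ε := by
  have : Fact (0 < 2 * Real.pi) := ⟨by positivity⟩
  have hcirc : ∀ x : AddCircle (2 * Real.pi), (AddCircle.toCircle x : ℂ) ∈ sphere (0 : ℂ) 1 := by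
    exact fun x => mem_sphere_zero_iff_norm.2 (Circle.norm_coe _)
  let F : C(AddCircle (2 * Real.pi), ℂ) :=
    ⟨fun x => (f (AddCircle.toCircle x : ℂ) : ℂ), by
      refine Complex.continuous_ofReal.comp ?_
      exact hf.comp_continuous (continuous_subtype_val.comp AddCircle.continuous_toCircle) hcirc⟩
  have hF : F ∈ (Submodule.span ℂ (Set.range <| @fourier (2 * Real.pi))).topologicalClosure := by
    rw [span_fourier_closure_eq_top]; trivial
  rw [← SetLike.mem_coe, Submodule.topologicalClosure_coe, Metric.mem_closure_iff] at hF
  obtain ⟨G, hG, hGF⟩ := hF ε hε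
  have key : ∀ g ∈ Submodule.span ℂ (Set.range <| @fourier (2 * Real.pi)),
      ∀ a : ℂ, ∃ q : ℂ → ℂ, Differentiable ℂ q ∧
        ∀ x, (q (AddCircle.toCircle x : ℂ)).re = (a * g x).re := by
    intro g hg
    induction hg using Submodule.span_induction with
    | mem g hg =>
      obtain ⟨n, rfl⟩ := hg
      intro a
      rcases Int.eq_nat_or_neg n with ⟨m, rfl | rfl⟩
      · refine ⟨fun z => a * z ^ m, by fun_prop, fun x => ?_⟩
        rw [fourier_apply, natCast_zsmul, AddCircle.toCircle_nsmul, Circle.coe_pow]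
      · refine ⟨fun z => (starRingEnd ℂ) a * z ^ m, by fun_prop, fun x => ?_⟩
        rw [fourier_apply, neg_zsmul, natCast_zsmul, AddCircle.toCircle_neg,
          AddCircle.toCircle_nsmul, Circle.coe_inv_eq_conj, Circle.coe_pow]
        rw [← Complex.conj_re (a * _), map_mul, Complex.conj_conj]
    | zero => exact fun a => ⟨fun _ => 0, by fun_prop, by simp⟩
    | add g₁ g₂ _ _ h₁ h₂ =>
      intro a
      obtain ⟨q₁, hq₁, e₁⟩ := h₁ a
      obtain ⟨q₂, hq₂, e₂⟩ := h₂ a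
      refine ⟨fun z => q₁ z + q₂ z, by fun_prop, fun x => ?_⟩
      rw [Complex.add_re, e₁, e₂, ContinuousMap.add_apply, mul_add, Complex.add_re]
    | smul c g _ h =>
      intro a
      obtain ⟨q, hq, e⟩ := h (a * c)
      refine ⟨q, hq, fun x => ?_⟩
      rw [e, ContinuousMap.smul_apply, smul_eq_mul, mul_assoc]
  obtain ⟨q, hq, hqe⟩ := key G hG 1
  refine ⟨fun z => q z - Complex.I * ((q 0).im : ℂ), by fun_prop, by simp, fun z hz => ?_⟩
  obtain ⟨x, hx⟩ := (AddCircle.homeomorphCircle (T := 2 * Real.pi) (by positivity)).surjective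
    ⟨z, by simpa [Submonoid.unitSphere] using hz⟩
  rw [AddCircle.homeomorphCircle_apply] at hx
  have hx' : (AddCircle.toCircle x : ℂ) = z := by rw [hx]
  rw [← hx']
  have h1 : (q (AddCircle.toCircle x : ℂ) - Complex.I * ((q 0).im : ℂ)).re
      = (G x).re := by
    rw [Complex.sub_re, hqe x]; simp
  have h2 : f (AddCircle.toCircle x : ℂ) = (F x).re := rfl
  rw [h1, h2, ← Complex.sub_re]
  refine (Complex.abs_re_le_norm _).trans ?_
  rw [← dist_eq_norm, dist_comm]
  exact ((ContinuousMap.dist_apply_le_dist x).trans hGF.le)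

lemma log_norm_le_circleAverage {F : ℂ → ℂ} (hF : DiffContOnCl ℂ F (ball 0 1)) {u : ℂ → ℝ}
    (hu : ContinuousOn u (sphere 0 1)) (h0 : F 0 ≠ 0)
    (h : ∀ z ∈ sphere (0 : ℂ) 1, F z ≠ 0 → Real.log ‖F z‖ ≤ u z) :
    Real.log ‖F 0‖ ≤ Real.circleAverage u 0 1 := by
  refine le_of_forall_pos_le_add fun ε hε => ?_
  obtain ⟨q, hq, -, hqu⟩ := exists_entire_re_approx hu (half_pos hε)
  have hE : DiffContOnCl ℂ (fun z => F z * Complex.exp (-q z)) (ball 0 1) := by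
    have : DiffContOnCl ℂ (fun z => Complex.exp (-q z)) (ball 0 1) :=
      Differentiable.diffContOnCl (by fun_prop)
    exact hF.smul this
  have hb : ∀ z ∈ frontier (ball (0 : ℂ) 1), ‖F z * Complex.exp (-q z)‖ ≤ Real.exp (ε / 2) := by
    intro z hz
    rw [frontier_ball _ one_ne_zero] at hz
    by_cases hFz : F z = 0
    · rw [hFz, zero_mul, norm_zero]; positivity
    have h1 := h z hz hFz
    have h2 := (abs_le.1 (hqu z hz)).1
    rw [norm_mul, Complex.norm_exp, Complex.neg_re, ← Real.exp_log (norm_pos_iff.2 hFz),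
      ← Real.exp_add]
    exact Real.exp_le_exp.2 (by linarith)
  have h3 := Complex.norm_le_of_forall_mem_frontier_norm_le Metric.isBounded_ball hE hb
    (z := 0) (subset_closure (by simp))
  rw [norm_mul, Complex.norm_exp, Complex.neg_re, ← Real.exp_log (norm_pos_iff.2 h0),
    ← Real.exp_add, Real.exp_le_exp] at h3
  have h4 : (q 0).re ≤ Real.circleAverage u 0 1 + ε / 2 := by
    rw [← circleAverage_re (hq.diffContOnCl),
      ← Real.circleAverage_const (ε / 2) (0 : ℂ) 1,
      ← Real.circleAverage_fun_add (circleIntegrable_unit hu)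
        (circleIntegrable_unit continuousOn_const)]
    refine circleAverage_unit_mono ?_ (hu.add continuousOn_const) fun z hz => ?_
    · exact (Complex.continuous_re.comp hq.continuous).continuousOn
    · have := (abs_le.1 (hqu z hz)).2
      linarith
  linarith

end Circle

section MatrixCircle

variable {ι κ : Type*} [Fintype ι] [Fintype κ] [DecidableEq ι] [DecidableEq κ]

lemma differentiable_entry (i : ι) (j : κ) : Differentiable ℂ (fun M : Matrix ι κ ℂ => M i j) :=
  (LinearMap.toContinuousLinearMap (Matrix.entryLinearMap ℂ ℂ i j)).differentiable

lemma differentiable_det : Differentiable ℂ (fun M : Matrix κ κ ℂ => M.det) := by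
  simp only [Matrix.det_apply]
  refine Differentiable.fun_sum fun σ _ => ?_
  refine Differentiable.const_smul ?_ _
  intro M
  exact (HasFDerivAt.finsetProd (u := Finset.univ) (g := fun i (M : Matrix κ κ ℂ) => M (σ i) i)
    fun i _ => (differentiable_entry (σ i) i M).hasFDerivAt).differentiableAt

lemma differentiable_sandwich {ι' κ' : Type*} [Fintype ι'] [Fintype κ'] (B : Matrix ι' ι ℂ)
    (C : Matrix κ κ' ℂ) : Differentiable ℂ (fun M : Matrix ι κ ℂ => B * M * C) := by
  let L : Matrix ι κ ℂ →ₗ[ℂ] Matrix ι' κ' ℂ :=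
    { toFun := fun M => B * M * C
      map_add' := fun X Y => by rw [Matrix.mul_add, Matrix.add_mul]
      map_smul' := fun c X => by simp }
  exact (LinearMap.toContinuousLinearMap L).differentiable

lemma continuousOn_logGram {X : Type*} [TopologicalSpace X] {s : Set X} {G : X → Matrix ι κ ℂ}
    (hG : ContinuousOn G s) (hs : ∀ x ∈ s, ((G x)ᴴ * G x).PosDef) :
    ContinuousOn (fun x => logGram (G x)) s := by
  unfold logGram
  refine ContinuousOn.log ?_ fun x hx => ?_
  · refine ContinuousOn.norm ?_
    have h : Continuous (fun M : Matrix ι κ ℂ => (Mᴴ * M).det) := by fun_prop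
    exact h.comp_continuousOn hG
  · exact norm_ne_zero_iff.2 ((Matrix.isUnit_iff_isUnit_det _).1 (hs x hx).isUnit).ne_zero

/-- The sub-mean value property of the logarithm of a Gram determinant. -/
lemma logGram_le_circleAverage {G : ℂ → Matrix ι ι ℂ} (hG : DiffContOnCl ℂ G (ball 0 1))
    (h0 : IsUnit (G 0)) (hs : ∀ z ∈ sphere (0 : ℂ) 1, IsUnit (G z)) {A : Matrix ι κ ℂ}
    (hA : (Aᴴ * A).PosDef) :
    logGram (G 0 * A) ≤ Real.circleAverage (fun z => logGram (G z * A)) 0 1 := by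
  have hGc : ContinuousOn (fun z => G z * A) (sphere 0 1) := by
    have : Continuous (fun M : Matrix ι ι ℂ => M * A) := by fun_prop
    exact this.comp_continuousOn
      (hG.continuousOn_ball.mono Metric.sphere_subset_closedBall)
  have hLc := continuousOn_logGram hGc fun z hz => posDef_gram_mul hA (hs z hz)
  have hF : DiffContOnCl ℂ (fun z => ((G 0 * A)ᴴ * (G z * A)).det) (ball 0 1) := by
    have h1 : Differentiable ℂ (fun M : Matrix ι ι ℂ => ((G 0 * A)ᴴ * M * A).det) :=
      differentiable_det.comp (differentiable_sandwich _ _)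
    simp only [← Matrix.mul_assoc]
    exact h1.comp_diffContOnCl hG
  have hP0 := posDef_gram_mul hA h0
  have := log_norm_le_circleAverage hF (u := fun z => (1 / 2 : ℝ) • (logGram (G 0 * A)
      + logGram (G z * A))) ?_ ?_ ?_
  · rw [Real.circleAverage_fun_smul, Real.circleAverage_fun_add
      (circleIntegrable_unit continuousOn_const) (circleIntegrable_unit hLc),
      Real.circleAverage_const, smul_eq_mul] at this
    change logGram (G 0 * A) ≤ _ at this
    linarith
  · exact (continuousOn_const.add hLc).const_smul (1 / 2 : ℝ)
  · exact ((Matrix.isUnit_iff_isUnit_det _).1 hP0.isUnit).ne_zero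
  · intro z hz hne
    have := log_det_cauchy_schwarz hP0 (posDef_gram_mul hA (hs z hz)) hne
    rw [smul_eq_mul]
    linarith

lemma frobenius_norm_le_sum (X : Matrix ι κ ℂ) : ‖X‖ ≤ ∑ i, ∑ j, ‖X i j‖ := by
  have h0 : 0 ≤ ∑ i, ∑ j, ‖X i j‖ := by positivity
  refine le_of_sq_le_sq ?_ h0
  rw [frobenius_norm_sq, ← Finset.sum_product', ← Finset.sum_product']
  exact Finset.sum_sq_le_sq_sum_of_nonneg fun _ _ => norm_nonneg _

lemma exists_entire_matrix_approx {m : ℂ → Matrix ι ι ℂ} (hm : ContinuousOn m (sphere 0 1))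
    (hmh : ∀ z ∈ sphere (0 : ℂ) 1, (m z).IsHermitian) {ε : ℝ} (hε : 0 < ε) :
    ∃ ξ : ℂ → Matrix ι ι ℂ, Differentiable ℂ ξ ∧ (ξ 0).IsHermitian ∧
      ∀ z ∈ sphere (0 : ℂ) 1, ‖ξ z + (ξ z)ᴴ - m z‖ ≤ ε := by
  set N : ℝ := (Fintype.card ι : ℝ) with hN
  set δ : ℝ := ε / (2 * N ^ 2 + 1) with hδ
  have hδ0 : 0 < δ := by positivity
  have hent : ∀ i j, ContinuousOn (fun z => m z i j) (sphere 0 1) := fun i j =>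
    (differentiable_entry i j).continuous.comp_continuousOn hm
  have hre : ∀ i j, ∃ q : ℂ → ℂ, Differentiable ℂ q ∧ (q 0).im = 0 ∧
      ∀ z ∈ sphere (0 : ℂ) 1, |(q z).re - (m z i j).re / 2| ≤ δ / 2 := fun i j =>
    exists_entire_re_approx ((Complex.continuous_re.comp_continuousOn (hent i j)).div_const 2)
      (half_pos hδ0)
  have him : ∀ i j, ∃ q : ℂ → ℂ, Differentiable ℂ q ∧ (q 0).im = 0 ∧
      ∀ z ∈ sphere (0 : ℂ) 1, |(q z).re - (m z i j).im / 2| ≤ δ / 2 := fun i j =>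
    exists_entire_re_approx ((Complex.continuous_im.comp_continuousOn (hent i j)).div_const 2)
      (half_pos hδ0)
  choose q hq hq0 hqm using hre
  choose p hp hp0 hpm using him
  let x : ι → ι → ℂ → ℂ := fun i j z =>
    (1 / 2 : ℂ) * ((q i j z + q j i z) + Complex.I * (p i j z - p j i z))
  refine ⟨fun z => ∑ i, ∑ j, x i j z • Matrix.single i j (1 : ℂ), ?_, ?_, ?_⟩
  · refine Differentiable.fun_sum fun i _ => Differentiable.fun_sum fun j _ => ?_
    refine Differentiable.smul_const ?_ _
    have := hq i j
    have := hq j i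
    have := hp i j
    have := hp j i
    fun_prop
  · ext i j
    have e : ∀ z, ∀ i j, (∑ i, ∑ j, x i j z • Matrix.single i j (1 : ℂ)) i j = x i j z := by
      intro z i j
      simp only [Matrix.sum_apply, Matrix.smul_apply, Matrix.single_apply, smul_eq_mul]
      rw [Finset.sum_eq_single i, Finset.sum_eq_single j] <;> simp +contextual
    rw [conjTranspose_apply]
    change star ((∑ i, ∑ j, x i j 0 • Matrix.single i j (1 : ℂ)) j i) =
      (∑ i, ∑ j, x i j 0 • Matrix.single i j (1 : ℂ)) i j
    rw [e, e]
    have r : ∀ w : ℂ, w.im = 0 → (starRingEnd ℂ) w = w := fun w hw => Complex.conj_eq_iff_im.2 hw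
    simp only [x, Complex.star_def, map_mul, map_add, map_sub, Complex.conj_I, r _ (hq0 _ _),
      r _ (hp0 _ _), r (1 / 2) (by norm_num)]
    ring
  · intro z hz
    have e : ∀ z, ∀ i j, (∑ i, ∑ j, x i j z • Matrix.single i j (1 : ℂ)) i j = x i j z := by
      intro z i j
      simp only [Matrix.sum_apply, Matrix.smul_apply, Matrix.single_apply, smul_eq_mul]
      rw [Finset.sum_eq_single i, Finset.sum_eq_single j] <;> simp +contextual
    refine (frobenius_norm_le_sum _).trans ?_
    have hij : ∀ i j, ‖((∑ i, ∑ j, x i j z • Matrix.single i j (1 : ℂ)) +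
        (∑ i, ∑ j, x i j z • Matrix.single i j (1 : ℂ))ᴴ - m z) i j‖ ≤ 2 * δ := by
      intro i j
      have hji : m z j i = star (m z i j) := by rw [← conjTranspose_apply, (hmh z hz).eq]
      rw [Matrix.sub_apply, Matrix.add_apply, conjTranspose_apply, e, e]
      have v : x i j z + star (x j i z) - m z i j =
          (((q i j z).re - (m z i j).re / 2 + ((q j i z).re - (m z j i).re / 2) : ℝ) : ℂ) +
          (((p i j z).re - (m z i j).im / 2 - ((p j i z).re - (m z j i).im / 2) : ℝ) : ℂ)
            * Complex.I := by
        rw [hji]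
        apply Complex.ext <;> simp [x] <;> ring
      rw [v]
      refine (norm_add_le _ _).trans ?_
      rw [norm_mul, Complex.norm_I, mul_one, Complex.norm_real, Complex.norm_real,
        Real.norm_eq_abs, Real.norm_eq_abs]
      have := (abs_add_le ((q i j z).re - (m z i j).re / 2) ((q j i z).re - (m z j i).re / 2))
      have := (abs_sub ((p i j z).re - (m z i j).im / 2) ((p j i z).re - (m z j i).im / 2))
      linarith [hqm i j z hz, hqm j i z hz, hpm i j z hz, hpm j i z hz]
    refine (Finset.sum_le_sum fun i _ => Finset.sum_le_sum fun j _ => hij i j).trans ?_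
    simp only [Finset.sum_const, Finset.card_univ, nsmul_eq_mul]
    rw [← hN, hδ]
    calc N * (N * (2 * (ε / (2 * N ^ 2 + 1)))) = ε * (2 * N ^ 2 / (2 * N ^ 2 + 1)) := by ring
      _ ≤ ε * 1 := by
          refine mul_le_mul_of_nonneg_left ?_ hε.le
          rw [div_le_one (by positivity)]
          linarith
      _ = ε := mul_one _

lemma norm_add_conjTranspose_sq (X : Matrix ι ι ℂ) :
    ‖X + Xᴴ‖ ^ 2 = 2 * ‖X‖ ^ 2 + 2 * (X * X).trace.re := by
  have h1 : (Xᴴ * Xᴴ).trace.re = (X * X).trace.re := by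
    rw [← conjTranspose_mul, trace_conjTranspose, Complex.star_def, Complex.conj_re]
  have h2 : (X * Xᴴ).trace.re = ‖X‖ ^ 2 := by
    rw [Matrix.trace_mul_comm, trace_conjTranspose_mul_self_re]
  rw [← trace_conjTranspose_mul_self_re, conjTranspose_add, conjTranspose_conjTranspose,
    Matrix.add_mul, Matrix.mul_add, Matrix.mul_add, trace_add, trace_add, trace_add,
    Complex.add_re, Complex.add_re, Complex.add_re, h1, h2, trace_conjTranspose_mul_self_re]
  ring

lemma circleAverage_norm_sq_le {ξ : ℂ → Matrix ι ι ℂ} (hξ : Differentiable ℂ ξ)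
    (h0 : (ξ 0).IsHermitian) {B : ℝ}
    (hB : ∀ z ∈ sphere (0 : ℂ) 1, ‖ξ z + (ξ z)ᴴ‖ ≤ B) :
    Real.circleAverage (fun z => ‖ξ z‖ ^ 2) 0 1 ≤ B ^ 2 / 2 := by
  have hc := hξ.continuous
  have hd : Differentiable ℂ (fun z => (ξ z * ξ z).trace) := by
    have h1 : Differentiable ℂ (fun z => ξ z * ξ z) := hξ.mul hξ
    exact (LinearMap.toContinuousLinearMap (Matrix.traceLinearMap ι ℂ ℂ)).differentiable.comp h1
  have h2 : Real.circleAverage (fun z => ‖ξ z‖ ^ 2 + (ξ z * ξ z).trace.re) 0 1 ≤ B ^ 2 / 2 := by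
    refine Real.circleAverage_mono_on_of_le_circle ?_ ?_
    · refine circleIntegrable_unit (Continuous.continuousOn ?_)
      exact (hc.norm.pow 2).add (Complex.continuous_re.comp hd.continuous)
    · intro z hz
      rw [abs_one] at hz
      have h3 := norm_add_conjTranspose_sq (ξ z)
      have h4 : ‖ξ z + (ξ z)ᴴ‖ ^ 2 ≤ B ^ 2 := by
        have := hB z hz
        gcongr
      linarith
  have i1 : ContinuousOn (fun z => ‖ξ z‖ ^ 2) (sphere 0 1) := (hc.norm.pow 2).continuousOn
  have i2 : ContinuousOn (fun z => (ξ z * ξ z).trace.re) (sphere 0 1) :=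
    (Complex.continuous_re.comp hd.continuous).continuousOn
  rw [Real.circleAverage_fun_add (circleIntegrable_unit i1) (circleIntegrable_unit i2),
    circleAverage_re hd.diffContOnCl] at h2
  have h5 : 0 ≤ (ξ 0 * ξ 0).trace.re := by
    nth_rewrite 1 [← h0.eq]
    rw [trace_conjTranspose_mul_self_re]
    positivity
  linarith

lemma norm_zero_le_of_entire {ξ : ℂ → Matrix ι ι ℂ} (hξ : Differentiable ℂ ξ)
    (h0 : (ξ 0).IsHermitian) {B : ℝ}
    (hB : ∀ z ∈ sphere (0 : ℂ) 1, ‖ξ z + (ξ z)ᴴ‖ ≤ B) : ‖ξ 0‖ ≤ B := by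
  have hB0 : 0 ≤ B := (norm_nonneg _).trans (hB 1 (by simp))
  have hd : Differentiable ℂ (fun z => ((ξ 0)ᴴ * ξ z).trace) := by
    have h1 : Differentiable ℂ (fun z => (ξ 0)ᴴ * ξ z) := hξ.const_mul _
    exact (LinearMap.toContinuousLinearMap (Matrix.traceLinearMap ι ℂ ℂ)).differentiable.comp h1
  have h1 := circleAverage_re hd.diffContOnCl
  rw [trace_conjTranspose_mul_self_re] at h1
  have h2 : Real.circleAverage (fun z => ((ξ 0)ᴴ * ξ z).trace.re) 0 1 ≤ ‖ξ 0‖ * B := by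
    refine Real.circleAverage_mono_on_of_le_circle
      (circleIntegrable_unit (Complex.continuous_re.comp hd.continuous).continuousOn) ?_
    intro z hz
    rw [abs_one] at hz
    have e : ((ξ 0)ᴴ * ξ z).trace.re = ((ξ 0)ᴴ * (ξ z + (ξ z)ᴴ)).trace.re / 2 := by
      have : ((ξ 0)ᴴ * (ξ z)ᴴ).trace.re = ((ξ 0)ᴴ * ξ z).trace.re := by
        rw [← conjTranspose_mul, trace_conjTranspose, Complex.star_def, Complex.conj_re,
          Matrix.trace_mul_comm, h0.eq]
      rw [Matrix.mul_add, trace_add, Complex.add_re, this]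
      ring
    have h3 := (le_abs_self _).trans (abs_trace_mul_re_le (ξ 0)ᴴ (ξ z + (ξ z)ᴴ))
    rw [frobenius_norm_conjTranspose] at h3
    have h4 : ‖ξ 0‖ * ‖ξ z + (ξ z)ᴴ‖ ≤ ‖ξ 0‖ * B :=
      mul_le_mul_of_nonneg_left (hB z hz) (norm_nonneg _)
    have h5 : 0 ≤ ‖ξ 0‖ * B := mul_nonneg (norm_nonneg _) hB0
    rw [e]
    linarith
  rw [h1] at h2
  by_contra hcon
  push Not at hcon
  nlinarith [norm_nonneg (ξ 0)]

end MatrixCircle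

section DetExp

variable {ι : Type*} [Fintype ι] [DecidableEq ι]

lemma log_norm_det_exp_le (η : Matrix ι ι ℂ) :
    Real.log ‖(NormedSpace.exp η).det‖ ≤ η.trace.re := by
  have h1 : ((1 : Matrix ι ι ℂ)ᴴ * 1).PosDef := by
    rw [conjTranspose_one, Matrix.mul_one]; exact Matrix.PosDef.one
  have hlog : ∀ X : Matrix ι ι ℂ, logGram X = 2 * Real.log ‖X.det‖ := by
    intro X
    rw [logGram, det_mul, det_conjTranspose, norm_mul, norm_star, ← sq, Real.log_pow]
    norm_num
  have hcol : colProj (1 : Matrix ι ι ℂ) = 1 := by simp [colProj]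
  set C : ℝ := ((‖(1 : Matrix ι ι ℂ)‖ + 1) ^ 2 + 6) * Fintype.card ι with hC
  have key : ∀ N : ℕ, 2 * Real.log ‖(NormedSpace.exp η).det‖ - 2 * η.trace.re
      ≤ C * ‖η‖ ^ 2 * ((N : ℝ) + 1)⁻¹ := by
    intro N
    have h2 := logGram_exp_le (((N : ℝ) + 1)⁻¹ • η) h1
    have h3 : NormedSpace.exp η = NormedSpace.exp (((N : ℝ) + 1)⁻¹ • η) ^ (N + 1) := by
      rw [← Matrix.exp_nsmul, ← Nat.cast_smul_eq_nsmul ℝ, smul_smul]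
      push_cast
      rw [mul_inv_cancel₀ (by positivity), one_smul]
    rw [hlog, hlog, hcol, Matrix.one_mul, Matrix.mul_one, trace_smul, Complex.smul_re, norm_smul,
      det_one, norm_one, Real.log_one, ← hC, smul_eq_mul, Real.norm_of_nonneg (by positivity)] at h2
    rw [h3, det_pow, norm_pow, Real.log_pow]
    have h4 := mul_le_mul_of_nonneg_left h2 (show (0 : ℝ) ≤ N + 1 by positivity)
    have h5 : ((N : ℝ) + 1) * (2 * 0 + 2 * (((N : ℝ) + 1)⁻¹ * η.trace.re)
        + C * (((N : ℝ) + 1)⁻¹ * ‖η‖) ^ 2) =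
        2 * η.trace.re + C * ‖η‖ ^ 2 * ((N : ℝ) + 1)⁻¹ := by
      field_simp
      ring
    rw [h5] at h4
    push_cast
    linarith
  have h6 : Filter.Tendsto (fun N : ℕ => C * ‖η‖ ^ 2 * ((N : ℝ) + 1)⁻¹) Filter.atTop
      (nhds (C * ‖η‖ ^ 2 * 0)) := by
    refine Filter.Tendsto.const_mul _ ?_
    simpa using tendsto_one_div_add_atTop_nhds_zero_nat (𝕜 := ℝ)
  have h7 := ge_of_tendsto' h6 key
  linarith

lemma log_norm_det_exp (η : Matrix ι ι ℂ) :
    Real.log ‖(NormedSpace.exp η).det‖ = η.trace.re := by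
  refine le_antisymm (log_norm_det_exp_le η) ?_
  have h := log_norm_det_exp_le (-η)
  rw [Matrix.exp_neg, det_nonsing_inv, Ring.inverse_eq_inv', norm_inv, Real.log_inv, trace_neg,
    Complex.neg_re] at h
  linarith

end DetExp

/-- Weights attached to a family of subspaces, together with a block decomposition. -/
structure BlockWeights (ι I : Type*) [Fintype ι] [DecidableEq ι] where
  /-- the orthogonal projection onto the first block -/
  proj : Matrix ι ι ℂ
  idem : proj * proj = proj
  herm : projᴴ = proj
  /-- the weights of the subspaces -/
  wt : I → ℝ
  wt_nonneg : ∀ i, 0 ≤ wt i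
  /-- the shift on the first block -/
  shiftFst : ℝ
  /-- the shift on the second block -/
  shiftSnd : ℝ

namespace BlockWeights

variable {ι I : Type*} [Fintype ι] [DecidableEq ι] [Fintype I] (D : BlockWeights ι I)
  {d : I → ℕ}

/-- The complementary projection. -/
def coproj : Matrix ι ι ℂ := 1 - D.proj

lemma coproj_idem : D.coproj * D.coproj = D.coproj := by
  simp [coproj, Matrix.sub_mul, Matrix.mul_sub, D.idem]

lemma coproj_herm : D.coprojᴴ = D.coproj := by
  simp [coproj, D.herm]

lemma proj_mul_coproj : D.proj * D.coproj = 0 := by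
  simp [coproj, Matrix.mul_sub, D.idem]

lemma coproj_mul_proj : D.coproj * D.proj = 0 := by
  simp [coproj, Matrix.sub_mul, D.idem]

lemma proj_add_coproj : D.proj + D.coproj = 1 := by simp [coproj]

lemma commute_coproj {g : Matrix ι ι ℂ} (hg : Commute D.proj g) : Commute D.coproj g :=
  (Commute.one_left g).sub_left hg

/-- The block-diagonal part of a matrix. -/
def blk (X : Matrix ι ι ℂ) : Matrix ι ι ℂ := D.proj * X * D.proj + D.coproj * X * D.coproj

lemma commute_blk (X : Matrix ι ι ℂ) : Commute D.proj (D.blk X) := by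
  rw [Commute, SemiconjBy, blk, Matrix.mul_add, Matrix.add_mul]
  simp only [Matrix.mul_assoc, D.coproj_mul_proj, D.idem, Matrix.mul_zero]
  simp only [← Matrix.mul_assoc, D.proj_mul_coproj, D.idem, Matrix.zero_mul]

lemma blk_of_commute {X : Matrix ι ι ℂ} (hX : Commute D.proj X) : D.blk X = X := by
  have h1 := hX.eq
  have h2 := (D.commute_coproj hX).eq
  rw [blk, h1, h2, Matrix.mul_assoc, Matrix.mul_assoc, D.idem, D.coproj_idem, ← Matrix.mul_add,
    D.proj_add_coproj, Matrix.mul_one]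

lemma blk_add (X Y : Matrix ι ι ℂ) : D.blk (X + Y) = D.blk X + D.blk Y := by
  simp only [blk, Matrix.mul_add, Matrix.add_mul]; abel

lemma blk_sub (X Y : Matrix ι ι ℂ) : D.blk (X - Y) = D.blk X - D.blk Y := by
  simp only [blk, Matrix.mul_sub, Matrix.sub_mul]; abel

lemma blk_conjTranspose (X : Matrix ι ι ℂ) : (D.blk X)ᴴ = D.blk Xᴴ := by
  simp only [blk, conjTranspose_add, conjTranspose_mul, D.herm, D.coproj_herm, Matrix.mul_assoc]

lemma trace_blk_mul {X Y : Matrix ι ι ℂ} (hY : Commute D.proj Y) :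
    (D.blk X * Y).trace = (X * Y).trace := by
  conv_rhs => rw [← D.blk_of_commute hY]
  rw [blk, blk, Matrix.add_mul, Matrix.mul_add, trace_add, trace_add]
  congr 1
  · rw [Matrix.mul_assoc, Matrix.mul_assoc, Matrix.trace_mul_comm D.proj]
    simp only [Matrix.mul_assoc]
  · rw [Matrix.mul_assoc, Matrix.mul_assoc, Matrix.trace_mul_comm D.coproj]
    simp only [Matrix.mul_assoc]

/-- A constant bounding the norm of the block-diagonal part. -/
noncomputable def blkBound : ℝ := ‖D.proj‖ * ‖D.proj‖ + ‖D.coproj‖ * ‖D.coproj‖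

lemma norm_blk_le (X : Matrix ι ι ℂ) : ‖D.blk X‖ ≤ D.blkBound * ‖X‖ := by
  have h : ∀ Q : Matrix ι ι ℂ, ‖Q * X * Q‖ ≤ ‖Q‖ * ‖Q‖ * ‖X‖ := fun Q =>
    (frobenius_norm_mul _ _).trans ((mul_le_mul_of_nonneg_right (frobenius_norm_mul _ _)
      (norm_nonneg _)).trans (le_of_eq (by ring)))
  refine (norm_add_le _ _).trans ?_
  rw [blkBound, add_mul]
  exact add_le_add (h _) (h _)

/-- The scalar-on-blocks shift. -/
noncomputable def shift : Matrix ι ι ℂ :=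
  (D.shiftFst : ℂ) • D.proj + (D.shiftSnd : ℂ) • D.coproj

lemma commute_shift : Commute D.proj D.shift := by
  refine Commute.add_right ?_ ?_
  · exact (Commute.refl D.proj).smul_right _
  · exact (show Commute D.proj D.coproj by
      rw [Commute, SemiconjBy, D.proj_mul_coproj, D.coproj_mul_proj]).smul_right _

lemma shift_isHermitian : D.shift.IsHermitian := by
  simp [IsHermitian, shift, conjTranspose_add, conjTranspose_smul, D.herm, D.coproj_herm]

/-- The moment matrix of a family of subspaces. -/
noncomputable def mom (A : ∀ i, Matrix ι (Fin (d i)) ℂ) : Matrix ι ι ℂ :=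
  D.blk (∑ i, (D.wt i : ℂ) • colProj (A i)) - D.shift

/-- The block-diagonal character. -/
noncomputable def ell (g : Matrix ι ι ℂ) : ℝ :=
  D.shiftFst * (2 * Real.log ‖(g * D.proj + D.coproj).det‖) +
    D.shiftSnd * (2 * Real.log ‖(g * D.coproj + D.proj).det‖)

/-- The Kempf–Ness function. -/
noncomputable def psi (A : ∀ i, Matrix ι (Fin (d i)) ℂ) (g : Matrix ι ι ℂ) : ℝ :=
  ∑ i, D.wt i * logGram (g * A i) - D.ell g

lemma commute_mom (A : ∀ i, Matrix ι (Fin (d i)) ℂ) : Commute D.proj (D.mom A) :=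
  (D.commute_blk _).sub_right D.commute_shift

lemma mom_isHermitian (A : ∀ i, Matrix ι (Fin (d i)) ℂ) : (D.mom A).IsHermitian := by
  refine IsHermitian.sub ?_ D.shift_isHermitian
  rw [IsHermitian, D.blk_conjTranspose, conjTranspose_sum]
  congr 1
  refine Finset.sum_congr rfl fun i _ => ?_
  rw [conjTranspose_smul, (isHermitian_colProj (A i)).eq, Complex.star_def, Complex.conj_ofReal]

lemma trace_mom_mul (A : ∀ i, Matrix ι (Fin (d i)) ℂ) {X : Matrix ι ι ℂ}
    (hX : Commute D.proj X) : (D.mom A * X).trace.re =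
      ∑ i, D.wt i * (colProj (A i) * X).trace.re - (D.shift * X).trace.re := by
  rw [mom, Matrix.sub_mul, trace_sub, D.trace_blk_mul hX, Complex.sub_re, Matrix.sum_mul,
    trace_sum, Complex.re_sum]
  congr 1
  refine Finset.sum_congr rfl fun i _ => ?_
  rw [Matrix.smul_mul, trace_smul, smul_eq_mul, Complex.re_ofReal_mul]

/-- The full rank condition. -/
def Full (A : ∀ i, Matrix ι (Fin (d i)) ℂ) : Prop := ∀ i, ((A i)ᴴ * A i).PosDef

lemma Full.mul {A : ∀ i, Matrix ι (Fin (d i)) ℂ} (hA : Full A) {g : Matrix ι ι ℂ}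
    (hg : IsUnit g) : Full (fun i => g * A i) := fun i => posDef_gram_mul (hA i) hg

/-- A uniform bound for the moment matrix. -/
noncomputable def momBound (d : I → ℕ) : ℝ :=
  D.blkBound * (∑ i, D.wt i * d i) + ‖D.shift‖

lemma norm_mom_le {A : ∀ i, Matrix ι (Fin (d i)) ℂ} (hA : Full A) :
    ‖D.mom A‖ ≤ D.momBound d := by
  refine (norm_sub_le _ _).trans (add_le_add_left ((D.norm_blk_le _).trans ?_) _)
  refine mul_le_mul_of_nonneg_left ((norm_sum_le _ _).trans (Finset.sum_le_sum fun i _ => ?_))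
    (by rw [blkBound]; positivity)
  rw [norm_smul, Complex.norm_real, Real.norm_of_nonneg (D.wt_nonneg i)]
  refine mul_le_mul_of_nonneg_left ?_ (D.wt_nonneg i)
  simpa using norm_colProj_le (hA i)

section Ell

variable {g h : Matrix ι ι ℂ}

private lemma blockDet_mul {P Q : Matrix ι ι ℂ} (hPQ : P * Q = 0) (hQP : Q * P = 0)
    (hP : P * P = P) (hQ : Q * Q = Q) (hh : Commute P h) (hQh : Commute Q h) :
    (g * h * P + Q) = (g * P + Q) * (h * P + Q) := by
  rw [Matrix.add_mul, Matrix.mul_add, Matrix.mul_add, hQ, ← Matrix.mul_assoc Q, hQh.eq,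
    Matrix.mul_assoc h, hQP, Matrix.mul_zero, Matrix.mul_assoc g P Q, hPQ, Matrix.mul_zero,
    Matrix.mul_assoc g P, ← Matrix.mul_assoc P, hh.eq, Matrix.mul_assoc h, hP, Matrix.mul_assoc]
  abel

private lemma blockDet_ne_zero {P Q : Matrix ι ι ℂ} (hPQ : P * Q = 0) (hQP : Q * P = 0)
    (hP : P * P = P) (hQ : Q * Q = Q) (hPQ1 : P + Q = 1) (hg : IsUnit g) (hPg : Commute P g)
    (hQg : Commute Q g) : (g * P + Q).det ≠ 0 := by
  obtain ⟨u, rfl⟩ := hg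
  have h1 : (u : Matrix ι ι ℂ) * (u⁻¹ : (Matrix ι ι ℂ)ˣ) * P + Q = 1 := by
    rw [Units.mul_inv, Matrix.one_mul, hPQ1]
  rw [blockDet_mul hPQ hQP hP hQ hPg.units_inv_right hQg.units_inv_right] at h1
  have h2 := congrArg det h1
  rw [det_mul, det_one] at h2
  exact left_ne_zero_of_mul_eq_one h2

lemma det_fst_ne_zero (hg : IsUnit g) (hPg : Commute D.proj g) :
    (g * D.proj + D.coproj).det ≠ 0 :=
  blockDet_ne_zero D.proj_mul_coproj D.coproj_mul_proj D.idem D.coproj_idem D.proj_add_coproj hg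
    hPg (D.commute_coproj hPg)

lemma det_snd_ne_zero (hg : IsUnit g) (hPg : Commute D.proj g) :
    (g * D.coproj + D.proj).det ≠ 0 :=
  blockDet_ne_zero D.coproj_mul_proj D.proj_mul_coproj D.coproj_idem D.idem
    (by rw [add_comm, D.proj_add_coproj]) hg (D.commute_coproj hPg) hPg

lemma ell_mul (hg : IsUnit g) (hPg : Commute D.proj g) (hh : IsUnit h)
    (hPh : Commute D.proj h) : D.ell (g * h) = D.ell g + D.ell h := by
  rw [ell, blockDet_mul D.proj_mul_coproj D.coproj_mul_proj D.idem D.coproj_idem hPh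
      (D.commute_coproj hPh),
    blockDet_mul D.coproj_mul_proj D.proj_mul_coproj D.coproj_idem D.idem
      (D.commute_coproj hPh) hPh, det_mul, det_mul, norm_mul, norm_mul,
    Real.log_mul (norm_ne_zero_iff.2 (D.det_fst_ne_zero hg hPg))
      (norm_ne_zero_iff.2 (D.det_fst_ne_zero hh hPh)),
    Real.log_mul (norm_ne_zero_iff.2 (D.det_snd_ne_zero hg hPg))
      (norm_ne_zero_iff.2 (D.det_snd_ne_zero hh hPh)), ell, ell]
  ring

lemma ell_one : D.ell 1 = 0 := by
  rw [ell, Matrix.one_mul, Matrix.one_mul, add_comm D.coproj, D.proj_add_coproj]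
  simp

private lemma exp_mul_add {P Q η : Matrix ι ι ℂ} (hPQ : P * Q = 0) (hQP : Q * P = 0)
    (hPQ1 : P + Q = 1) (hη : Commute P η) (hQη : Commute Q η) :
    NormedSpace.exp η * P + Q = NormedSpace.exp (η * P) := by
  have hc : Commute (η * P) (η * Q) := by
    rw [Commute, SemiconjBy, Matrix.mul_assoc, ← Matrix.mul_assoc P, hη.eq, Matrix.mul_assoc η P,
      hPQ, Matrix.mul_assoc η Q, ← Matrix.mul_assoc Q, hQη.eq, Matrix.mul_assoc η Q, hQP]
  have h0 : ∀ {R S : Matrix ι ι ℂ}, S * R = 0 → Commute S η →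
      NormedSpace.exp (η * S) * R = R := by
    intro R S hSR hS
    have h1 : SemiconjBy R 0 (η * S) := by
      rw [SemiconjBy, Matrix.mul_zero, Matrix.mul_assoc, hSR, Matrix.mul_zero]
    have h2 := h1.exp_right
    rw [NormedSpace.exp_zero, SemiconjBy, Matrix.mul_one] at h2
    exact h2.symm
  have h1 : NormedSpace.exp η = NormedSpace.exp (η * P) * NormedSpace.exp (η * Q) := by
    rw [← Matrix.exp_add_of_commute _ _ hc, ← Matrix.mul_add, hPQ1, Matrix.mul_one]
  have h2 : NormedSpace.exp (η * P) * (P + Q) = NormedSpace.exp (η * P) := by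
    rw [hPQ1, Matrix.mul_one]
  rw [Matrix.mul_add, h0 hPQ hη] at h2
  rw [h1, Matrix.mul_assoc, h0 hQP hQη, h2]

lemma ell_exp {η : Matrix ι ι ℂ} (hη : Commute D.proj η) :
    D.ell (NormedSpace.exp η) = 2 * (D.shift * η).trace.re := by
  have hη' := D.commute_coproj hη
  rw [ell, exp_mul_add D.proj_mul_coproj D.coproj_mul_proj D.proj_add_coproj
      hη hη', exp_mul_add D.coproj_mul_proj D.proj_mul_coproj
      (by rw [add_comm, D.proj_add_coproj]) hη' hη, log_norm_det_exp, log_norm_det_exp, shift,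
    Matrix.add_mul, Matrix.smul_mul, Matrix.smul_mul, trace_add, trace_smul, trace_smul, hη.eq,
    hη'.eq, Complex.add_re, smul_eq_mul, smul_eq_mul, Complex.re_ofReal_mul,
    Complex.re_ofReal_mul]
  ring

lemma commute_conjTranspose (hg : Commute D.proj g) : Commute D.proj gᴴ := by
  have := congrArg conjTranspose hg.eq
  rw [conjTranspose_mul, conjTranspose_mul, D.herm] at this
  exact this.symm

lemma commute_exp {η : Matrix ι ι ℂ} (hη : Commute D.proj η) :
    Commute D.proj (NormedSpace.exp η) := SemiconjBy.exp_right hη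

lemma ell_conjTranspose (hg : Commute D.proj g) : D.ell gᴴ = D.ell g := by
  have h : ∀ P Q : Matrix ι ι ℂ, Pᴴ = P → Qᴴ = Q → Commute P g →
      ‖(gᴴ * P + Q).det‖ = ‖(g * P + Q).det‖ := by
    intro P Q hP hQ hPg
    rw [← norm_star, ← det_conjTranspose, conjTranspose_add, conjTranspose_mul,
      conjTranspose_conjTranspose, hP, hQ, hPg.eq]
  rw [ell, ell, h _ _ D.herm D.coproj_herm hg, h _ _ D.coproj_herm D.herm (D.commute_coproj hg)]

end Ell

lemma psi_mul {A : ∀ i, Matrix ι (Fin (d i)) ℂ} {g h : Matrix ι ι ℂ} (hg : IsUnit g)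
    (hPg : Commute D.proj g) (hh : IsUnit h) (hPh : Commute D.proj h) :
    D.psi A (g * h) = D.psi (fun i => h * A i) g - D.ell h := by
  rw [psi, psi, D.ell_mul hg hPg hh hPh]
  simp only [Matrix.mul_assoc]
  ring

lemma psi_one (A : ∀ i, Matrix ι (Fin (d i)) ℂ) :
    D.psi A 1 = ∑ i, D.wt i * logGram (A i) := by
  simp [psi, D.ell_one]

/-- The constant in the second-order upper bound of the Kempf–Ness function. -/
noncomputable def secondBound (d : I → ℕ) : ℝ :=
  ∑ i, D.wt i * (((‖(1 : Matrix ι ι ℂ)‖ + 1) ^ 2 + 6) * d i)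

lemma secondBound_nonneg (d : I → ℕ) : 0 ≤ D.secondBound d :=
  Finset.sum_nonneg fun i _ => mul_nonneg (D.wt_nonneg i) (by positivity)

lemma psi_exp_le {A : ∀ i, Matrix ι (Fin (d i)) ℂ} (hA : Full A) {η : Matrix ι ι ℂ}
    (hη : Commute D.proj η) : D.psi A (NormedSpace.exp η) ≤
      D.psi A 1 + 2 * (D.mom A * η).trace.re + D.secondBound d * ‖η‖ ^ 2 := by
  rw [psi_one, psi, D.ell_exp hη, D.trace_mom_mul A hη, secondBound, Finset.sum_mul]
  have h1 : ∑ i, D.wt i * logGram (NormedSpace.exp η * A i) ≤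
      ∑ i, (D.wt i * logGram (A i) + 2 * (D.wt i * (colProj (A i) * η).trace.re) +
        D.wt i * (((‖(1 : Matrix ι ι ℂ)‖ + 1) ^ 2 + 6) * d i) * ‖η‖ ^ 2) := by
    refine Finset.sum_le_sum fun i _ => ?_
    have h2 := mul_le_mul_of_nonneg_left (logGram_exp_le η (hA i)) (D.wt_nonneg i)
    rw [Fintype.card_fin] at h2
    linarith
  rw [Finset.sum_add_distrib, Finset.sum_add_distrib, ← Finset.mul_sum] at h1
  linarith

end BlockWeights

section Functional

variable {ι : Type*} [Fintype ι] [DecidableEq ι]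

lemma commute_diagonal_comp {P V : Matrix ι ι ℂ} (hV : Vᴴ * V = 1) (h : ι → ℝ) (f : ι → ℂ)
    (hf : ∀ i j, h i = h j → f i = f j)
    (hP : Commute P (V * diagonal (fun i => (h i : ℂ)) * Vᴴ)) :
    Commute P (V * diagonal f * Vᴴ) := by
  have hV' : V * Vᴴ = 1 := mul_eq_one_comm.1 hV
  have key : ∀ w : ι → ℂ, Commute P (V * diagonal w * Vᴴ) ↔
      Vᴴ * P * V * diagonal w = diagonal w * (Vᴴ * P * V) := by
    intro w
    set W := diagonal w
    constructor
    · intro hc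
      have h1 := congrArg (fun X => Vᴴ * X * V) hc.eq
      simp only [Matrix.mul_assoc, hV, Matrix.mul_one] at h1
      rw [← Matrix.mul_assoc Vᴴ V, hV, Matrix.one_mul] at h1
      simpa only [Matrix.mul_assoc] using h1
    · intro hc
      have h1 := congrArg (fun X => V * X * Vᴴ) hc
      simp only [Matrix.mul_assoc, hV', Matrix.mul_one] at h1
      rw [← Matrix.mul_assoc V Vᴴ, hV', Matrix.one_mul] at h1
      rw [Commute, SemiconjBy]
      simpa only [Matrix.mul_assoc] using h1
  rw [key] at hP ⊢
  ext i j
  have h1 := congrFun (congrFun hP i) j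
  rw [mul_diagonal, diagonal_mul] at h1 ⊢
  by_cases hij : h i = h j
  · rw [hf i j hij, mul_comm]
  · have h2 : (Vᴴ * P * V) i j * ((h j : ℂ) - h i) = 0 := by linear_combination h1
    have h3 : ((h j : ℂ) - h i) ≠ 0 := by
      rw [sub_ne_zero]
      exact fun e => hij (by exact_mod_cast e.symm)
    rw [(mul_eq_zero.1 h2).resolve_right h3]
    ring

lemma exp_conj_diagonal {V : Matrix ι ι ℂ} (hV : Vᴴ * V = 1) (f : ι → ℝ) :
    NormedSpace.exp (V * diagonal (fun i => (f i : ℂ)) * Vᴴ) =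
      V * diagonal (fun i => ((Real.exp (f i) : ℝ) : ℂ)) * Vᴴ := by
  have hV' : V * Vᴴ = 1 := mul_eq_one_comm.1 hV
  have hinv : V⁻¹ = Vᴴ := inv_eq_left_inv hV
  have hu : IsUnit V := ⟨⟨V, Vᴴ, hV', hV⟩, rfl⟩
  rw [← hinv, Matrix.exp_conj _ _ hu, Matrix.exp_diagonal]
  congr 3
  ext i
  rw [Pi.coe_exp, Complex.ofReal_exp, Complex.exp_eq_exp_ℂ]

lemma trace_conj_diagonal {V : Matrix ι ι ℂ} (hV : Vᴴ * V = 1) (f : ι → ℝ) :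
    (V * diagonal (fun i => (f i : ℂ)) * Vᴴ).trace.re = ∑ i, f i := by
  rw [Matrix.trace_mul_comm, ← Matrix.mul_assoc, hV, Matrix.one_mul, trace_diagonal]
  simp

lemma norm_conj_diagonal_sq {V : Matrix ι ι ℂ} (hV : Vᴴ * V = 1) (f : ι → ℝ) :
    ‖V * diagonal (fun i => (f i : ℂ)) * Vᴴ‖ ^ 2 = ∑ i, f i ^ 2 := by
  have h : (V * diagonal (fun i => (f i : ℂ)) * Vᴴ)ᴴ * (V * diagonal (fun i => (f i : ℂ)) * Vᴴ)
      = V * diagonal (fun i => ((f i ^ 2 : ℝ) : ℂ)) * Vᴴ := by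
    rw [conjTranspose_mul, conjTranspose_mul, conjTranspose_conjTranspose,
      diagonal_conjTranspose]
    have e : star (fun i => (f i : ℂ)) = fun i => (f i : ℂ) := by
      ext i; simp
    rw [e]
    simp only [Matrix.mul_assoc]
    rw [← Matrix.mul_assoc Vᴴ V, hV, Matrix.one_mul, ← Matrix.mul_assoc (diagonal _) (diagonal _),
      diagonal_mul_diagonal]
    simp [sq]
  rw [← trace_conjTranspose_mul_self_re, h, trace_conj_diagonal hV]

end Functional

namespace BlockWeights

variable {ι I : Type*} [Fintype ι] [DecidableEq ι] [Fintype I] (D : BlockWeights ι I)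
  {d : I → ℕ}

/-- Geodesic convexity gives a linear lower bound for the Kempf–Ness function. -/
lemma psi_ge {A : ∀ i, Matrix ι (Fin (d i)) ℂ} (hA : Full A) {g : Matrix ι ι ℂ} (hg : IsUnit g)
    (hPg : Commute D.proj g) {r : ℝ} (hr : 0 ≤ r) (h1 : ‖g‖ ≤ Real.exp r)
    (h2 : ‖g⁻¹‖ ≤ Real.exp r) :
    D.psi A 1 - ‖D.mom A‖ * (2 * Fintype.card ι * r) ≤ D.psi A g := by
  have hH : (gᴴ * g).PosDef := by
    have := posDef_gram_mul (A := (1 : Matrix ι ι ℂ)) (g := g)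
      (by rw [conjTranspose_one, Matrix.mul_one]; exact Matrix.PosDef.one) hg
    rwa [Matrix.mul_one] at this
  obtain ⟨V, hV, hV', hVH⟩ := exists_unitary_diagonal hH.1
  set h := hH.1.eigenvalues
  have hpos : ∀ i, 0 < h i := hH.eigenvalues_pos
  have hsum : ∑ i, h i = ‖g‖ ^ 2 := by
    rw [← trace_conjTranspose_mul_self_re, hVH, trace_conj_diagonal hV]
  have hinv : (gᴴ * g)⁻¹ = V * diagonal (fun i => (((h i)⁻¹ : ℝ) : ℂ)) * Vᴴ := by
    refine inv_eq_left_inv ?_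
    rw [hVH]
    simp only [Matrix.mul_assoc]
    rw [← Matrix.mul_assoc Vᴴ V, hV, Matrix.one_mul, ← Matrix.mul_assoc (diagonal _) (diagonal _),
      diagonal_mul_diagonal]
    have : (fun i => (((h i)⁻¹ : ℝ) : ℂ) * (h i : ℂ)) = fun _ => 1 := by
      ext i
      rw [← Complex.ofReal_mul, inv_mul_cancel₀ (hpos i).ne', Complex.ofReal_one]
    rw [this, diagonal_one, Matrix.one_mul, hV']
  have hsum' : ∑ i, (h i)⁻¹ = ‖g⁻¹‖ ^ 2 := by
    rw [← trace_conj_diagonal hV, ← hinv, Matrix.mul_inv_rev, ← conjTranspose_nonsing_inv,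
      ← frobenius_norm_conjTranspose, ← trace_conjTranspose_mul_self_re,
      conjTranspose_conjTranspose]
  have hlog : ∀ i, |Real.log (h i)| ≤ 2 * r := by
    intro i
    have e : Real.exp r ^ 2 = Real.exp (2 * r) := by rw [← Real.exp_nat_mul]; norm_num
    rw [abs_le]
    constructor
    · have h3 : (h i)⁻¹ ≤ Real.exp (2 * r) := by
        rw [← e]
        refine le_trans ?_ (pow_le_pow_left₀ (norm_nonneg _) h2 2)
        rw [← hsum']
        exact Finset.single_le_sum (f := fun i => (h i)⁻¹)
          (fun j _ => (inv_pos.2 (hpos j)).le) (Finset.mem_univ i)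
      have h4 := Real.log_le_log (inv_pos.2 (hpos i)) h3
      rw [Real.log_exp, Real.log_inv] at h4
      linarith
    · have h3 : h i ≤ Real.exp (2 * r) := by
        rw [← e]
        refine le_trans ?_ (pow_le_pow_left₀ (norm_nonneg _) h1 2)
        rw [← hsum]
        exact Finset.single_le_sum (f := fun i => h i)
          (fun j _ => (hpos j).le) (Finset.mem_univ i)
      have h4 := Real.log_le_log (hpos i) h3
      rwa [Real.log_exp] at h4
  set X := V * diagonal (fun i => (Real.log (h i) : ℂ)) * Vᴴ with hX
  have hPX : Commute D.proj X := by
    refine commute_diagonal_comp hV h _ (fun i j e => by rw [e]) ?_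
    rw [← hVH]
    exact (D.commute_conjTranspose hPg).mul_right hPg
  have hXn : ‖X‖ ≤ 2 * Fintype.card ι * r := by
    refine le_of_sq_le_sq ?_ (by positivity)
    rw [norm_conj_diagonal_sq hV]
    have h3 : ∑ i, Real.log (h i) ^ 2 ≤ ∑ _i : ι, (2 * r) ^ 2 := by
      refine Finset.sum_le_sum fun i _ => ?_
      rw [← sq_abs]
      exact pow_le_pow_left₀ (abs_nonneg _) (hlog i) 2
    rw [Finset.sum_const, Finset.card_univ, nsmul_eq_mul] at h3
    have h4 : (Fintype.card ι : ℝ) ≤ (Fintype.card ι : ℝ) ^ 2 := by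
      exact_mod_cast Nat.le_self_pow two_ne_zero _
    nlinarith [sq_nonneg (2 * r)]
  have hexp : NormedSpace.exp X = gᴴ * g := by
    rw [hX, exp_conj_diagonal hV, hVH]
    congr 3
    ext i
    rw [Real.exp_log (hpos i)]
  have hell : D.ell g = (D.shift * X).trace.re := by
    have h3 := D.ell_exp hPX
    rw [hexp, D.ell_mul (by simpa using hg) (D.commute_conjTranspose hPg) hg hPg,
      D.ell_conjTranspose hPg] at h3
    linarith
  have h5 : ∑ i, D.wt i * (logGram (A i) + (colProj (A i) * X).trace.re) ≤
      ∑ i, D.wt i * logGram (g * A i) := Finset.sum_le_sum fun i _ =>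
    mul_le_mul_of_nonneg_left (logGram_convex (hA i) hg hV h hpos hVH) (D.wt_nonneg i)
  simp only [mul_add, Finset.sum_add_distrib] at h5
  have h6 := (neg_le_abs _).trans (abs_trace_mul_re_le (D.mom A) X)
  rw [D.trace_mom_mul A hPX] at h6
  have h7 := mul_le_mul_of_nonneg_left hXn (norm_nonneg (D.mom A))
  rw [psi_one, psi, hell]
  linarith

/-- The descent step of the Kempf–Ness function. -/
lemma psi_exp_mul_le {A : ∀ i, Matrix ι (Fin (d i)) ℂ} (hA : Full A) {g η : Matrix ι ι ℂ}
    (hg : IsUnit g) (hPg : Commute D.proj g) (hη : Commute D.proj η) :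
    D.psi A (NormedSpace.exp η * g) ≤ D.psi A g +
      2 * (D.mom (fun i => g * A i) * η).trace.re + D.secondBound d * ‖η‖ ^ 2 := by
  have h1 := D.psi_mul (A := A) (isUnit_exp' η) (D.commute_exp hη) hg hPg
  have h2 := D.psi_mul (A := A) isUnit_one (Commute.one_right _) hg hPg
  have h3 := D.psi_exp_le (hA.mul hg) hη
  rw [Matrix.one_mul] at h2
  linarith

end BlockWeights

section Continuity

variable {ι κ : Type*} [Fintype ι] [DecidableEq ι] [Fintype κ] [DecidableEq κ]

lemma continuousOn_colProj {X : Type*} [TopologicalSpace X] {s : Set X} {G : X → Matrix ι κ ℂ}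
    (hG : ContinuousOn G s) (hs : ∀ x ∈ s, ((G x)ᴴ * G x).PosDef) :
    ContinuousOn (fun x => colProj (G x)) s := by
  unfold colProj
  have hgram : ContinuousOn (fun x => (G x)ᴴ * G x) s := by
    have h : Continuous (fun M : Matrix ι κ ℂ => Mᴴ * M) := by fun_prop
    exact h.comp_continuousOn hG
  have hdet : Continuous (fun M : Matrix κ κ ℂ => M.det) := Continuous.matrix_det continuous_id
  have hadj : Continuous (fun M : Matrix κ κ ℂ => M.adjugate) :=
    Continuous.matrix_adjugate continuous_id
  have hinv : ContinuousOn (fun x => ((G x)ᴴ * G x)⁻¹) s := by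
    simp only [Matrix.inv_def, Ring.inverse_eq_inv']
    have h1 : ContinuousOn (fun x => ((G x)ᴴ * G x).det⁻¹) s :=
      (hdet.comp_continuousOn hgram).inv₀ fun x hx =>
        ((Matrix.isUnit_iff_isUnit_det _).1 (hs x hx).isUnit).ne_zero
    exact h1.smul (hadj.comp_continuousOn hgram)
  have h : Continuous (fun M : Matrix ι κ ℂ × Matrix κ κ ℂ => M.1 * M.2 * M.1ᴴ) := by fun_prop
  have h2 : ContinuousOn (fun x => (G x, ((G x)ᴴ * G x)⁻¹)) s := hG.prodMk hinv
  have h3 := h.comp_continuousOn h2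
  simp only [Function.comp_def] at h3
  exact h3

lemma le_of_forall_nat_mul_le {a c x : ℝ} (h : ∀ k : ℕ, k * c ≤ a + k * x) : c ≤ x := by
  by_contra hcon
  push Not at hcon
  obtain ⟨k, hk⟩ := exists_nat_gt (a / (c - x))
  rw [div_lt_iff₀ (by linarith)] at hk
  have := h k
  nlinarith

end Continuity

namespace BlockWeights

variable {ι I : Type*} [Fintype ι] [DecidableEq ι] [Fintype I] (D : BlockWeights ι I)
  {d : I → ℕ}

lemma continuousOn_mom {X : Type*} [TopologicalSpace X] {s : Set X}
    {G : X → ∀ i, Matrix ι (Fin (d i)) ℂ} (hG : ∀ i, ContinuousOn (fun x => G x i) s)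
    (hs : ∀ x ∈ s, Full (G x)) : ContinuousOn (fun x => D.mom (G x)) s := by
  have h1 : ContinuousOn (fun x => ∑ i, (D.wt i : ℂ) • colProj (G x i)) s :=
    continuousOn_finsetSum _ fun i _ =>
      (continuousOn_colProj (hG i) fun x hx => hs x hx i).const_smul (D.wt i : ℂ)
  have h2 : Continuous (fun M : Matrix ι ι ℂ => D.blk M - D.shift) := by
    unfold blk; fun_prop
  exact h2.comp_continuousOn h1

lemma trace_mom_sq (A : ∀ i, Matrix ι (Fin (d i)) ℂ) :
    (D.mom A * D.mom A).trace.re = ‖D.mom A‖ ^ 2 := by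
  nth_rewrite 1 [← (D.mom_isHermitian A).eq]
  exact trace_conjTranspose_mul_self_re _

/-- Along a family which is invariant under the negative gradient flow and on which the moment
matrix is bounded below, the moment matrix is bounded below on the whole orbits of the block
diagonal group. -/
lemma exists_norm_mom_ge_of_invariant {S : Set (∀ i, Matrix ι (Fin (d i)) ℂ)}
    (hfull : ∀ A ∈ S, Full A)
    (hflow : ∀ A ∈ S, ∀ ε : ℝ, (fun i => NormedSpace.exp (-(ε • D.mom A)) * A i) ∈ S) {δ : ℝ}
    (hδ : 0 < δ) (hS : ∀ A ∈ S, δ ≤ ‖D.mom A‖) :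
    ∃ δ' > 0, ∀ A ∈ S, ∀ g, IsUnit g → Commute D.proj g →
      δ' ≤ ‖D.mom (fun i => g * A i)‖ := by
  set C := D.secondBound d with hC
  have hC0 : 0 ≤ C := D.secondBound_nonneg d
  set ε : ℝ := 1 / (C + 1) with hε
  have hε0 : 0 < ε := by positivity
  have hCε : C * ε ≤ 1 := by
    rw [hε, mul_one_div, div_le_one (by positivity)]; linarith
  set M := D.momBound d
  set ρ : ℝ := Real.log ((‖(1 : Matrix ι ι ℂ)‖ + 1) * Real.exp (ε * M)) with hρ
  have hexpρ : Real.exp ρ = (‖(1 : Matrix ι ι ℂ)‖ + 1) * Real.exp (ε * M) :=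
    Real.exp_log (by positivity)
  set n : ℝ := (Fintype.card ι : ℝ) with hn
  refine ⟨ε * δ ^ 2 / (|2 * n * ρ| + 1), by positivity, fun A hA g hg hPg => ?_⟩
  have hM0 : 0 ≤ M := (norm_nonneg _).trans (D.norm_mom_le (hfull A hA))
  have h1ρ : ‖(1 : Matrix ι ι ℂ)‖ + 1 ≤ Real.exp ρ := by
    rw [hexpρ]
    exact le_mul_of_one_le_right (by positivity) (Real.one_le_exp (by positivity))
  have hρ0 : 0 ≤ ρ := by
    rw [← Real.one_le_exp_iff]
    linarith [norm_nonneg (1 : Matrix ι ι ℂ)]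
  have iter : ∀ k : ℕ, ∃ h : Matrix ι ι ℂ, IsUnit h ∧ Commute D.proj h ∧
      (fun i => h * A i) ∈ S ∧ ‖h‖ ≤ Real.exp (ρ * (k + 1)) ∧
      ‖h⁻¹‖ ≤ Real.exp (ρ * (k + 1)) ∧ D.psi A h ≤ D.psi A 1 - k * (ε * δ ^ 2) := by
    intro k
    induction k with
    | zero =>
      refine ⟨1, isUnit_one, Commute.one_right _, by simpa using hA, ?_, ?_, by simp⟩
      · simp only [Nat.cast_zero, zero_add, mul_one]; linarith
      · simp only [Nat.cast_zero, zero_add, mul_one, inv_one]; linarith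
    | succ k ih =>
      obtain ⟨h, hh, hPh, hhS, hn1, hn2, hpsi⟩ := ih
      set m := D.mom (fun i => h * A i) with hm
      have hmM : ‖m‖ ≤ M := D.norm_mom_le (hfull _ hhS)
      have hεm : ‖ε • m‖ ≤ ε * M := by
        rw [norm_smul, Real.norm_of_nonneg hε0.le]
        exact mul_le_mul_of_nonneg_left hmM hε0.le
      have hcomm : Commute D.proj (-(ε • m)) := ((D.commute_mom _).smul_right ε).neg_right
      have hb : ∀ η : Matrix ι ι ℂ, ‖η‖ ≤ ε * M → ‖NormedSpace.exp η‖ ≤ Real.exp ρ := by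
        intro η hη
        rw [hexpρ]
        refine (norm_exp_le_ring η).trans ?_
        gcongr
      have hexp : Real.exp (ρ * ((k + 1 : ℕ) + 1)) = Real.exp ρ * Real.exp (ρ * (k + 1)) := by
        rw [← Real.exp_add]; congr 1; push_cast; ring
      refine ⟨NormedSpace.exp (-(ε • m)) * h, (isUnit_exp' _).mul hh,
        (D.commute_exp hcomm).mul_right hPh, ?_, ?_, ?_, ?_⟩
      · simpa only [Matrix.mul_assoc] using hflow _ hhS ε
      · rw [hexp]
        refine (frobenius_norm_mul _ _).trans ?_
        exact mul_le_mul (hb _ (by rwa [norm_neg])) hn1 (norm_nonneg _) (Real.exp_pos _).le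
      · rw [hexp, Matrix.mul_inv_rev, ← Matrix.exp_neg, neg_neg, mul_comm (Real.exp ρ)]
        refine (frobenius_norm_mul _ _).trans ?_
        exact mul_le_mul hn2 (hb _ hεm) (norm_nonneg _) (Real.exp_pos _).le
      · have h3 := D.psi_exp_mul_le (hfull A hA) hh hPh hcomm
        rw [← hm, Matrix.mul_neg, trace_neg, Complex.neg_re, Matrix.mul_smul, trace_smul,
          Complex.smul_re, hm, D.trace_mom_sq, ← hm, norm_neg, norm_smul,
          Real.norm_of_nonneg hε0.le, smul_eq_mul, ← hC] at h3
        have h4 : δ ^ 2 ≤ ‖m‖ ^ 2 := pow_le_pow_left₀ hδ.le (hS _ hhS) 2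
        have h5 : C * (ε * ‖m‖) ^ 2 ≤ ε * ‖m‖ ^ 2 := by
          have : C * (ε * ‖m‖) ^ 2 = (C * ε) * (ε * ‖m‖ ^ 2) := by ring
          rw [this]
          exact mul_le_of_le_one_left (by positivity) hCε
        have h6 : ε * δ ^ 2 ≤ ε * ‖m‖ ^ 2 := mul_le_mul_of_nonneg_left h4 hε0.le
        push_cast
        linarith
  obtain ⟨u, rfl⟩ := hg
  set σ : ℝ := Real.log (1 + ‖(u : Matrix ι ι ℂ)‖ + ‖(u : Matrix ι ι ℂ)⁻¹‖) with hσ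
  have hexpσ : Real.exp σ = 1 + ‖(u : Matrix ι ι ℂ)‖ + ‖(u : Matrix ι ι ℂ)⁻¹‖ :=
    Real.exp_log (by positivity)
  have hσ0 : 0 ≤ σ := by
    rw [← Real.one_le_exp_iff, hexpσ]
    linarith [norm_nonneg (u : Matrix ι ι ℂ), norm_nonneg (u : Matrix ι ι ℂ)⁻¹]
  set x := ‖D.mom (fun i => (u : Matrix ι ι ℂ) * A i)‖ with hx
  have hmain : ∀ k : ℕ, k * (ε * δ ^ 2) ≤ (D.psi A 1 - D.psi A u + x * (2 * n * (ρ + σ))) +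
      k * (x * (2 * n * ρ)) := by
    intro k
    obtain ⟨h, hh, hPh, hhS, hn1, hn2, hpsi⟩ := iter k
    have hPi : Commute D.proj (u : Matrix ι ι ℂ)⁻¹ := by
      rw [← Matrix.coe_units_inv]; exact hPg.units_inv_right
    have hui : IsUnit (u : Matrix ι ι ℂ)⁻¹ := by
      rw [← Matrix.coe_units_inv]; exact Units.isUnit _
    have huu : (u : Matrix ι ι ℂ)⁻¹ * u = 1 := by
      rw [← Matrix.coe_units_inv, Units.inv_mul]
    have e1 := D.psi_mul (A := A) (hh.mul hui) (hPh.mul_right hPi) u.isUnit hPg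
    have e2 := D.psi_mul (A := A) isUnit_one (Commute.one_right _) u.isUnit hPg
    rw [Matrix.mul_assoc, huu, Matrix.mul_one] at e1
    rw [Matrix.one_mul] at e2
    have e3 := D.psi_ge ((hfull A hA).mul u.isUnit) (hh.mul hui) (hPh.mul_right hPi)
      (r := ρ * (k + 1) + σ) (by positivity) ?_ ?_
    · rw [← hx, ← hn] at e3
      linarith
    · rw [Real.exp_add]
      refine (frobenius_norm_mul _ _).trans ?_
      refine mul_le_mul hn1 ?_ (norm_nonneg _) (Real.exp_pos _).le
      rw [hexpσ]
      linarith [norm_nonneg (u : Matrix ι ι ℂ)]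
    · rw [Matrix.mul_inv_rev, add_comm, Real.exp_add,
        nonsing_inv_nonsing_inv _ ((Matrix.isUnit_iff_isUnit_det _).1 u.isUnit)]
      refine (frobenius_norm_mul _ _).trans ?_
      refine mul_le_mul ?_ hn2 (norm_nonneg _) (Real.exp_pos _).le
      rw [hexpσ]
      linarith [norm_nonneg (u : Matrix ι ι ℂ)⁻¹]
  have h7 := le_of_forall_nat_mul_le hmain
  rw [div_le_iff₀ (by positivity)]
  refine h7.trans (mul_le_mul_of_nonneg_left ?_ (norm_nonneg _))
  linarith [le_abs_self (2 * n * ρ)]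

end BlockWeights

namespace BlockWeights

variable {ι I : Type*} [Fintype ι] [DecidableEq ι] [Fintype I] (D : BlockWeights ι I)
  {d : I → ℕ}

lemma differentiable_blk_comp {ξ : ℂ → Matrix ι ι ℂ} (hξ : Differentiable ℂ ξ) :
    Differentiable ℂ (fun z => D.blk (ξ z)) := by
  unfold blk
  exact ((hξ.const_mul _).mul_const _).add ((hξ.const_mul _).mul_const _)

lemma differentiable_exp_comp {ξ : ℂ → Matrix ι ι ℂ} (hξ : Differentiable ℂ ξ) :
    Differentiable ℂ (fun z => NormedSpace.exp (ξ z)) := fun z =>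
  (NormedSpace.exp_analytic (𝕂 := ℂ) (ξ z)).differentiableAt.comp z (hξ z)

lemma differentiable_mul_comp {F G : ℂ → Matrix ι ι ℂ} (hF : Differentiable ℂ F)
    (hG : Differentiable ℂ G) : Differentiable ℂ (fun z => F z * G z) :=
  hF.mul hG

lemma differentiable_trace_mul_comp (K : Matrix ι ι ℂ) {ξ : ℂ → Matrix ι ι ℂ}
    (hξ : Differentiable ℂ ξ) : Differentiable ℂ (fun z => (K * ξ z).trace) := by
  have h1 : Differentiable ℂ (fun z => K * ξ z) := hξ.const_mul K
  have h2 : ∀ i j, Differentiable ℂ (fun z => (K * ξ z) i j) := fun i j =>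
    (FlagMoment.differentiable_entry i j).comp h1
  simp only [trace, diag_apply]
  exact Differentiable.fun_sum fun i _ => h2 i i

lemma continuousOn_psi {s : Set ℂ} {y : ℂ → ∀ i, Matrix ι (Fin (d i)) ℂ}
    {H : ℂ → Matrix ι ι ℂ} {f : ℂ → ℂ} (hy : ∀ i, ContinuousOn (fun z => y z i) s)
    (hfull : ∀ z ∈ s, Full (y z)) (hH : ContinuousOn H s) (hu : ∀ z, IsUnit (H z))
    (hf : ContinuousOn f s) (hHf : ∀ z, D.ell (H z) = (f z).re) :
    ContinuousOn (fun z => D.psi (y z) (H z)) s := by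
  unfold psi
  simp only [hHf]
  refine ContinuousOn.sub (continuousOn_finsetSum _ fun i _ => ContinuousOn.mul
    continuousOn_const (continuousOn_logGram ?_ fun z hz => (hfull z hz).mul (hu z) i))
    (Complex.continuous_re.comp_continuousOn hf)
  have h : Continuous (fun M : Matrix ι ι ℂ × Matrix ι (Fin (d i)) ℂ => M.1 * M.2) := by fun_prop
  have h2 : ContinuousOn (fun z => (H z, y z i)) s := hH.prodMk (hy i)
  exact h.comp_continuousOn h2

set_option maxHeartbeats 4000000 in
/-- A holomorphic family of systems whose boundary values have block-diagonal orbits with moment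
matrices bounded below has a moment matrix bounded below at the origin. -/
lemma exists_norm_mom_zero_ge (d : I → ℕ) {δ : ℝ} (hδ : 0 < δ) :
    ∃ δ' > 0, ∀ (A : ∀ i, Matrix ι (Fin (d i)) ℂ) (Φ : I → ℂ → Matrix ι ι ℂ), Full A →
      (∀ i, DiffContOnCl ℂ (Φ i) (ball 0 1)) → (∀ i, IsUnit (Φ i 0)) →
      (∀ i, ∀ z ∈ sphere (0 : ℂ) 1, IsUnit (Φ i z)) →
      (∀ z ∈ sphere (0 : ℂ) 1, ∀ g, IsUnit g → Commute D.proj g →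
        δ ≤ ‖D.mom (fun i => g * (Φ i z * A i))‖) →
      δ' ≤ ‖D.mom (fun i => Φ i 0 * A i)‖ := by
  set C := D.secondBound d with hC
  have hC0 : 0 ≤ C := D.secondBound_nonneg d
  set M := D.momBound d with hM
  set B : ℝ := |M| + δ with hB
  have hB0 : 0 < B := by positivity
  set ε : ℝ := δ ^ 2 / (2 * (C + 1) * B ^ 2) with hε
  have hε0 : 0 < ε := by positivity
  have hCε : C * ε ^ 2 * (B ^ 2 / 2) ≤ ε * δ ^ 2 / 4 := by
    have h1 : C * ε ^ 2 * (B ^ 2 / 2) = (C / (C + 1)) * (ε * δ ^ 2 / 4) := by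
      rw [hε]; field_simp; ring
    rw [h1]
    refine mul_le_of_le_one_left (by positivity) ?_
    rw [div_le_one (by positivity)]; linarith
  have hβ : 0 ≤ D.blkBound := by rw [blkBound]; positivity
  set ε' : ℝ := δ / (2 * (D.blkBound + 1)) with hε'
  have hε'0 : 0 < ε' := by positivity
  have hβε : D.blkBound * ε' ≤ δ / 2 := by
    have h1 : D.blkBound * ε' = (D.blkBound / (D.blkBound + 1)) * (δ / 2) := by
      rw [hε']; field_simp
    rw [h1]
    refine mul_le_of_le_one_left (by positivity) ?_
    rw [div_le_one (by positivity)]; linarith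
  set ρ : ℝ := Real.log ((‖(1 : Matrix ι ι ℂ)‖ + 1) * Real.exp (ε * B)) with hρ
  have hexpρ : Real.exp ρ = (‖(1 : Matrix ι ι ℂ)‖ + 1) * Real.exp (ε * B) :=
    Real.exp_log (by positivity)
  have h1ρ : ‖(1 : Matrix ι ι ℂ)‖ + 1 ≤ Real.exp ρ := by
    rw [hexpρ]
    exact le_mul_of_one_le_right (by positivity) (Real.one_le_exp (by positivity))
  have hρ0 : 0 ≤ ρ := by
    rw [← Real.one_le_exp_iff]
    linarith [norm_nonneg (1 : Matrix ι ι ℂ)]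
  set n : ℝ := (Fintype.card ι : ℝ) with hn
  set c : ℝ := ε * δ ^ 2 / 4 with hc
  refine ⟨c / (|2 * n * ρ| + 1), by positivity, fun A Φ hA hΦ hΦ0 hΦu hlow => ?_⟩
  set y : ℂ → ∀ i, Matrix ι (Fin (d i)) ℂ := fun z i => Φ i z * A i with hy
  have hyfull : ∀ z ∈ sphere (0 : ℂ) 1, Full (y z) := fun z hz i =>
    posDef_gram_mul (hA i) (hΦu i z hz)
  have hyc : ∀ i, ContinuousOn (fun z => y z i) (sphere 0 1) := by
    intro i
    have h : Continuous (fun X : Matrix ι ι ℂ => X * A i) := by fun_prop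
    exact h.comp_continuousOn ((hΦ i).continuousOn_ball.mono Metric.sphere_subset_closedBall)
  have iter : ∀ k : ℕ, ∃ (H : ℂ → Matrix ι ι ℂ) (f : ℂ → ℂ), Differentiable ℂ H ∧
      Differentiable ℂ f ∧ (∀ z, IsUnit (H z)) ∧ (∀ z, Commute D.proj (H z)) ∧
      (∀ z, D.ell (H z) = (f z).re) ∧ ‖H 0‖ ≤ Real.exp (ρ * (k + 1)) ∧
      ‖(H 0)⁻¹‖ ≤ Real.exp (ρ * (k + 1)) ∧
      Real.circleAverage (fun z => D.psi (y z) (H z)) 0 1 ≤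
        Real.circleAverage (fun z => D.psi (y z) 1) 0 1 - k * c := by
    intro k
    induction k with
    | zero =>
      refine ⟨fun _ => 1, fun _ => 0, differentiable_const _, differentiable_const _,
        fun _ => isUnit_one, fun _ => Commute.one_right _, fun _ => by simp [D.ell_one], ?_, ?_,
        by simp⟩
      · simp only [Nat.cast_zero, zero_add, mul_one]; linarith
      · simp only [Nat.cast_zero, zero_add, mul_one, inv_one]; linarith
    | succ k ih =>
      obtain ⟨H, f, hH, hf, hHu, hHP, hHf, hn1, hn2, hpsi⟩ := ih
      set m : ℂ → Matrix ι ι ℂ := fun z => D.mom (fun i => H z * y z i) with hm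
      have hmc : ContinuousOn m (sphere 0 1) := by
        refine D.continuousOn_mom (fun i => ?_) fun z hz => (hyfull z hz).mul (hHu z)
        have h : Continuous (fun M : Matrix ι ι ℂ × Matrix ι (Fin (d i)) ℂ => M.1 * M.2) := by
          fun_prop
        have h2 : ContinuousOn (fun z => (H z, y z i)) (sphere 0 1) :=
          hH.continuous.continuousOn.prodMk (hyc i)
        exact h.comp_continuousOn h2
      have hmM : ∀ z ∈ sphere (0 : ℂ) 1, ‖m z‖ ≤ |M| := fun z hz =>
        (D.norm_mom_le ((hyfull z hz).mul (hHu z))).trans (le_abs_self _)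
      have hmδ : ∀ z ∈ sphere (0 : ℂ) 1, δ ≤ ‖m z‖ := fun z hz => hlow z hz _ (hHu z) (hHP z)
      obtain ⟨ξ₀, hξ₀, hξ₀h, hξ₀m⟩ := exists_entire_matrix_approx hmc
        (fun z _ => D.mom_isHermitian _) hε'0
      set ξ : ℂ → Matrix ι ι ℂ := fun z => D.blk (ξ₀ z) with hξ
      have hξd : Differentiable ℂ ξ := D.differentiable_blk_comp hξ₀
      have hξh : (ξ 0).IsHermitian := by
        rw [hξ, IsHermitian, D.blk_conjTranspose, hξ₀h.eq]
      have hξm : ∀ z ∈ sphere (0 : ℂ) 1, ‖ξ z + (ξ z)ᴴ - m z‖ ≤ δ / 2 := by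
        intro z hz
        have h1 : ξ z + (ξ z)ᴴ - m z = D.blk (ξ₀ z + (ξ₀ z)ᴴ - m z) := by
          rw [D.blk_sub, D.blk_add, hξ, D.blk_conjTranspose, D.blk_of_commute (D.commute_mom _)]
        rw [h1]
        exact (D.norm_blk_le _).trans ((mul_le_mul_of_nonneg_left (hξ₀m z hz) hβ).trans hβε)
      have hξB : ∀ z ∈ sphere (0 : ℂ) 1, ‖ξ z + (ξ z)ᴴ‖ ≤ B := by
        intro z hz
        have h1 : ξ z + (ξ z)ᴴ = (ξ z + (ξ z)ᴴ - m z) + m z := by abel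
        rw [h1]
        refine (norm_add_le _ _).trans ?_
        linarith [hξm z hz, hmM z hz]
      have hξ0 := norm_zero_le_of_entire hξd hξh hξB
      have hξavg := circleAverage_norm_sq_le hξd hξh hξB
      have htr : ∀ z ∈ sphere (0 : ℂ) 1, δ ^ 2 / 2 ≤ 2 * (m z * ξ z).trace.re := by
        intro z hz
        have h1 : (m z * (ξ z)ᴴ).trace.re = (m z * ξ z).trace.re := by
          rw [← Complex.conj_re, ← Complex.star_def, ← trace_conjTranspose, conjTranspose_mul,
            conjTranspose_conjTranspose, (D.mom_isHermitian _).eq, Matrix.trace_mul_comm]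
        have h2 : 2 * (m z * ξ z).trace.re =
            ‖m z‖ ^ 2 + (m z * (ξ z + (ξ z)ᴴ - m z)).trace.re := by
          rw [Matrix.mul_sub, Matrix.mul_add, trace_sub, trace_add, Complex.sub_re,
            Complex.add_re, h1, D.trace_mom_sq]
          ring
        have h3 := (neg_le_abs _).trans (abs_trace_mul_re_le (m z) (ξ z + (ξ z)ᴴ - m z))
        have h4 := mul_le_mul_of_nonneg_left (hξm z hz) (norm_nonneg (m z))
        have h5 := hmδ z hz
        nlinarith
      have hcomm : ∀ z, Commute D.proj (-(ε • ξ z)) := fun z =>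
        ((D.commute_blk _).smul_right ε).neg_right
      have hb : ∀ η : Matrix ι ι ℂ, ‖η‖ ≤ ε * B → ‖NormedSpace.exp η‖ ≤ Real.exp ρ := by
        intro η hη
        rw [hexpρ]
        refine (norm_exp_le_ring η).trans ?_
        gcongr
      have hεξ : ‖ε • ξ 0‖ ≤ ε * B := by
        rw [norm_smul, Real.norm_of_nonneg hε0.le]
        exact mul_le_mul_of_nonneg_left hξ0 hε0.le
      have hexp : Real.exp (ρ * ((k + 1 : ℕ) + 1)) = Real.exp ρ * Real.exp (ρ * (k + 1)) := by
        rw [← Real.exp_add]; congr 1; push_cast; ring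
      have hsm : Differentiable ℂ (fun z => -(ε • ξ z)) := (hξd.const_smul ε).neg
      have htrd := differentiable_trace_mul_comp D.shift hsm
      set H' : ℂ → Matrix ι ι ℂ := fun z => NormedSpace.exp (-(ε • ξ z)) * H z with hH'
      set f' : ℂ → ℂ := fun z => 2 * (D.shift * -(ε • ξ z)).trace + f z with hf'
      have hH'd : Differentiable ℂ H' := differentiable_mul_comp (differentiable_exp_comp hsm) hH
      have hf'd : Differentiable ℂ f' := (htrd.const_mul 2).add hf
      have hH'u : ∀ z, IsUnit (H' z) := fun z => (isUnit_exp' _).mul (hHu z)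
      have hH'f : ∀ z, D.ell (H' z) = (f' z).re := by
        intro z
        rw [D.ell_mul (isUnit_exp' _) (D.commute_exp (hcomm z)) (hHu z) (hHP z),
          D.ell_exp (hcomm z), hHf, Complex.add_re, Complex.mul_re]
        simp
      refine ⟨H', f', hH'd, hf'd, hH'u, fun z => (D.commute_exp (hcomm z)).mul_right (hHP z),
        hH'f, ?_, ?_, ?_⟩
      · rw [hexp]
        refine (frobenius_norm_mul _ _).trans ?_
        exact mul_le_mul (hb _ (by rwa [norm_neg])) hn1 (norm_nonneg _) (Real.exp_pos _).le
      · rw [hexp, hH', Matrix.mul_inv_rev, ← Matrix.exp_neg, neg_neg, mul_comm (Real.exp ρ)]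
        refine (frobenius_norm_mul _ _).trans ?_
        exact mul_le_mul hn2 (hb _ hεξ) (norm_nonneg _) (Real.exp_pos _).le
      · have c1 : ContinuousOn (fun z => D.psi (y z) (H' z)) (sphere 0 1) :=
          D.continuousOn_psi hyc hyfull hH'd.continuous.continuousOn hH'u
            hf'd.continuous.continuousOn hH'f
        have c2 : ContinuousOn (fun z => D.psi (y z) (H z)) (sphere 0 1) :=
          D.continuousOn_psi hyc hyfull hH.continuous.continuousOn hHu
            hf.continuous.continuousOn hHf
        have c3 : ContinuousOn (fun z => ‖ξ z‖ ^ 2) (sphere 0 1) :=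
          (hξd.continuous.norm.pow 2).continuousOn
        have c4 : ContinuousOn (fun z => (C * ε ^ 2) • ‖ξ z‖ ^ 2) (sphere 0 1) :=
          c3.const_smul (C * ε ^ 2)
        have c5 : ContinuousOn (fun z => D.psi (y z) (H z) + -(ε * δ ^ 2 / 2)) (sphere 0 1) :=
          c2.add continuousOn_const
        have hle := circleAverage_unit_mono c1 (ContinuousOn.fun_add c5 c4) fun z hz => by
          have h3 := D.psi_exp_mul_le (hyfull z hz) (hHu z) (hHP z) (hcomm z)
          change _ ≤ _ + 2 * (m z * _).trace.re + _ at h3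
          rw [Matrix.mul_neg, trace_neg, Complex.neg_re, Matrix.mul_smul, trace_smul,
            Complex.smul_re, norm_neg, norm_smul, Real.norm_of_nonneg hε0.le, smul_eq_mul,
            ← hC] at h3
          have h4 := mul_le_mul_of_nonneg_left (htr z hz) hε0.le
          rw [smul_eq_mul]
          change D.psi (y z) (NormedSpace.exp (-(ε • ξ z)) * H z) ≤ _
          linarith
        rw [Real.circleAverage_fun_add (circleIntegrable_unit c5) (circleIntegrable_unit c4),
          Real.circleAverage_fun_add (circleIntegrable_unit c2)
            (circleIntegrable_unit continuousOn_const), Real.circleAverage_const,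
          Real.circleAverage_fun_smul, smul_eq_mul] at hle
        have h5 := mul_le_mul_of_nonneg_left hξavg (show 0 ≤ C * ε ^ 2 by positivity)
        push_cast
        linarith
  set x := ‖D.mom (y 0)‖ with hx
  have hy0 : Full (y 0) := fun i => posDef_gram_mul (hA i) (hΦ0 i)
  have hmain : ∀ k : ℕ, k * c ≤ (Real.circleAverage (fun z => D.psi (y z) 1) 0 1
      - D.psi (y 0) 1 + x * (2 * n * ρ)) + k * (x * (2 * n * ρ)) := by
    intro k
    obtain ⟨H, f, hH, hf, hHu, hHP, hHf, hn1, hn2, hpsi⟩ := iter k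
    have e3 := D.psi_ge hy0 (hHu 0) (hHP 0) (r := ρ * (k + 1)) (by positivity) hn1 hn2
    have hGd : ∀ i, DiffContOnCl ℂ (fun z => H z * Φ i z) (ball 0 1) := fun i =>
      ⟨hH.differentiableOn.mul (hΦ i).1, hH.continuous.continuousOn.mul (hΦ i).2⟩
    have hGu : ∀ i, ∀ z ∈ sphere (0 : ℂ) 1, IsUnit (H z * Φ i z) := fun i z hz =>
      (hHu z).mul (hΦu i z hz)
    have hsub : ∀ i, logGram (H 0 * y 0 i) ≤
        Real.circleAverage (fun z => logGram (H z * y z i)) 0 1 := by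
      intro i
      have := logGram_le_circleAverage (hGd i) ((hHu 0).mul (hΦ0 i)) (hGu i) (hA i)
      simpa only [Matrix.mul_assoc] using this
    have hlc : ∀ i, ContinuousOn (fun z => logGram (H z * y z i)) (sphere 0 1) := by
      intro i
      have h : Continuous (fun M : Matrix ι ι ℂ × Matrix ι (Fin (d i)) ℂ => M.1 * M.2) := by
        fun_prop
      have h2 : ContinuousOn (fun z => (H z, y z i)) (sphere 0 1) :=
        hH.continuous.continuousOn.prodMk (hyc i)
      exact continuousOn_logGram (h.comp_continuousOn h2)
        fun z hz => (hyfull z hz).mul (hHu z) i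
    have c1 : ∀ i, ContinuousOn (fun z => D.wt i • logGram (H z * y z i)) (sphere 0 1) :=
      fun i => (hlc i).const_smul (D.wt i)
    have c2 : ContinuousOn (fun z => ∑ i, D.wt i • logGram (H z * y z i)) (sphere 0 1) :=
      continuousOn_finsetSum _ fun i _ => c1 i
    have c3 : ContinuousOn (fun z => (f z).re) (sphere 0 1) :=
      (Complex.continuous_re.comp hf.continuous).continuousOn
    have havg : D.psi (y 0) (H 0) ≤ Real.circleAverage (fun z => D.psi (y z) (H z)) 0 1 := by
      have e : (fun z => D.psi (y z) (H z)) =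
          fun z => (∑ i, D.wt i • logGram (H z * y z i)) - (f z).re := by
        ext z; rw [psi, hHf]; rfl
      rw [e, Real.circleAverage_fun_sub (circleIntegrable_unit c2) (circleIntegrable_unit c3),
        circleAverage_re hf.diffContOnCl, Real.circleAverage_fun_sum
          (fun i _ => circleIntegrable_unit (c1 i)), psi, hHf]
      refine sub_le_sub_right (Finset.sum_le_sum fun i _ => ?_) _
      rw [Real.circleAverage_fun_smul, smul_eq_mul]
      exact mul_le_mul_of_nonneg_left (hsub i) (D.wt_nonneg i)
    rw [← hx, ← hn] at e3
    linarith
  have h7 := le_of_forall_nat_mul_le hmain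
  rw [div_le_iff₀ (by positivity)]
  refine h7.trans (mul_le_mul_of_nonneg_left ?_ (norm_nonneg _))
  linarith [le_abs_self (2 * n * ρ)]

end BlockWeights

section Flags

variable {ι : Type*} [Fintype ι] [DecidableEq ι] {m : ℕ}

/-- The first `i + 1` columns of a matrix. -/
def firstCols (c : Matrix ι (Fin m) ℂ) (i : Fin m) : Matrix ι (Fin (i + 1)) ℂ :=
  c.submatrix id (Fin.castLE i.2)

lemma firstCols_posDef {c : Matrix ι (Fin m) ℂ} (hc : (cᴴ * c).PosDef) (i : Fin m) :
    ((firstCols c i)ᴴ * firstCols c i).PosDef :=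
  hc.submatrix (Fin.castLE_injective i.2)

/-- Entries strictly below the diagonal vanish and the matrix is invertible. -/
structure IsUpper (R : Matrix (Fin m) (Fin m) ℂ) : Prop where
  zero : ∀ i j, j < i → R i j = 0
  unit : IsUnit R

lemma IsUpper.diag_ne_zero {R : Matrix (Fin m) (Fin m) ℂ} (hR : IsUpper R) (i : Fin m) :
    R i i ≠ 0 := by
  have h1 : R.det = ∏ i, R i i := det_of_isUpperTriangular fun i j hij => hR.zero i j hij
  have h2 : R.det ≠ 0 := ((Matrix.isUnit_iff_isUnit_det R).mp hR.unit).ne_zero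
  rw [h1] at h2
  exact fun h => h2 (Finset.prod_eq_zero (Finset.mem_univ i) h)

lemma colProj_firstCols_mul (c : Matrix ι (Fin m) ℂ) {R : Matrix (Fin m) (Fin m) ℂ}
    (hR : IsUpper R) (i : Fin m) :
    colProj (firstCols (c * R) i) = colProj (firstCols c i) := by
  set R' : Matrix (Fin (i + 1)) (Fin (i + 1)) ℂ :=
    R.submatrix (Fin.castLE i.2) (Fin.castLE i.2) with hR'
  have h1 : firstCols (c * R) i = firstCols c i * R' := by
    ext a b
    simp only [firstCols, submatrix_apply, Matrix.mul_apply, hR', id]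
    refine (Fintype.sum_of_injective _ (Fin.castLE_injective i.2) _ _ (fun k hk => ?_)
      fun k => rfl).symm
    rw [hR.zero, mul_zero]
    rw [Fin.lt_def, Fin.val_castLE]
    by_contra hlt
    exact hk ⟨⟨k, by omega⟩, by ext; rfl⟩
  have h2 : IsUnit R' := by
    have h3 : R'.det = ∏ a, R' a a := det_of_isUpperTriangular fun a b hab => hR.zero _ _ hab
    rw [Matrix.isUnit_iff_isUnit_det, h3, isUnit_iff_ne_zero]
    exact Finset.prod_ne_zero_iff.mpr fun a _ => hR.diag_ne_zero _
  rw [h1, colProj_mul_right _ h2]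

lemma exists_isometry_upper {c : Matrix ι (Fin m) ℂ} (hc : (cᴴ * c).PosDef) :
    ∃ R : Matrix (Fin m) (Fin m) ℂ, IsUpper R ∧ (c * R)ᴴ * (c * R) = 1 := by
  set L := LDL.lowerInv hc with hL
  have hLu : IsUnit L := isUnit_of_invertible L
  have hD := LDL.diag_eq_lowerInv_conj hc
  rw [← hL] at hD
  have hDp : (LDL.diag hc).PosDef := by
    rw [hD]
    have h1 : (L * (cᴴ * c) * Lᴴ).PosDef := by
      refine hc.mul_mul_conjTranspose_same ?_
      exact Matrix.vecMul_injective_of_isUnit hLu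
    exact h1
  set e : Fin m → ℂ := LDL.diagEntries hc with he
  have hde : LDL.diag hc = diagonal e := rfl
  rw [hde, posDef_diagonal_iff] at hDp
  have hre : ∀ i, e i = ((e i).re : ℂ) := fun i => (Complex.eq_re_of_ofReal_le (hDp i).le)
  have hpos : ∀ i, 0 < (e i).re := fun i => (Complex.pos_iff.mp (hDp i)).1
  set f : Fin m → ℂ := fun i => ((Real.sqrt (e i).re)⁻¹ : ℝ) with hf
  have hf0 : ∀ i, f i ≠ 0 := fun i => by
    exact Complex.ofReal_ne_zero.mpr (inv_ne_zero (Real.sqrt_ne_zero'.mpr (hpos i)))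
  have hfe : ∀ i, f i * (e i * f i) = 1 := fun i => by
    have h2 := Real.mul_self_sqrt (hpos i).le
    have h3 := Real.sqrt_ne_zero'.mpr (hpos i)
    have h4 : (Real.sqrt (e i).re)⁻¹ * ((e i).re * (Real.sqrt (e i).re)⁻¹) = 1 := by
      rw [inv_mul_eq_div, ← div_eq_mul_inv, div_div, h2]
      exact div_self (hpos i).ne'
    rw [hre i]
    simp only [hf]
    exact_mod_cast h4
  refine ⟨Lᴴ * diagonal f, ⟨fun i j hij => ?_, ?_⟩, ?_⟩
  · have h0 : L j i = 0 := LDL.lowerInv_triangular hc hij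
    rw [mul_diagonal, conjTranspose_apply, h0, star_zero, zero_mul]
  · refine IsUnit.mul (by rwa [isUnit_conjTranspose]) ?_
    rw [Matrix.isUnit_iff_isUnit_det, det_diagonal, isUnit_iff_ne_zero]
    exact Finset.prod_ne_zero_iff.mpr fun i _ => hf0 i
  · have hfs : (diagonal f)ᴴ = diagonal f := by
      rw [diagonal_conjTranspose]; congr 1; ext i; simp [hf]
    calc (c * (Lᴴ * diagonal f))ᴴ * (c * (Lᴴ * diagonal f))
        = diagonal f * (L * (cᴴ * c) * Lᴴ) * diagonal f := by
          rw [conjTranspose_mul, conjTranspose_mul, conjTranspose_conjTranspose, hfs]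
          simp only [Matrix.mul_assoc]
      _ = 1 := by
          rw [← hD, hde, diagonal_mul_diagonal, diagonal_mul_diagonal, ← diagonal_one]
          congr 1; ext i; rw [mul_assoc]; exact hfe i

/-- A real vector shifted to be nonnegative and extended by zero. -/
noncomputable def shiftedExt (w : Fin m → ℝ) (j : ℕ) : ℝ :=
  if h : j < m then w ⟨j, h⟩ + ∑ i, |w i| else 0

/-- The weight of the subspace spanned by the first `i + 1` vectors of a flag. -/
noncomputable def flagWt (w : Fin m → ℝ) (i : Fin m) : ℝ :=
  shiftedExt w i - shiftedExt w (i + 1)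

lemma flagWt_nonneg {w : Fin m → ℝ} (hw : Antitone w) (i : Fin m) : 0 ≤ flagWt w i := by
  rw [flagWt, shiftedExt, shiftedExt, dif_pos i.2]
  split_ifs with h
  · have : w ⟨i + 1, h⟩ ≤ w ⟨i, i.2⟩ := hw (by rw [Fin.le_def]; simp)
    linarith
  · have h1 := Finset.single_le_sum (f := fun i => |w i|) (fun i _ => abs_nonneg (w i))
      (Finset.mem_univ i)
    have h2 := neg_abs_le (w i)
    simp only [Fin.eta] at h1 ⊢
    linarith

lemma sum_flagWt (w : Fin m → ℝ) (j : Fin m) :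
    ∑ i : Fin m, (if j ≤ i then flagWt w i else 0) = w j + ∑ i, |w i| := by
  have h1 : ∑ i : Fin m, (if j ≤ i then flagWt w i else 0) =
      ∑ i ∈ Finset.range m, (if (j : ℕ) ≤ i then shiftedExt w i - shiftedExt w (i + 1) else 0) :=
    (Fin.sum_univ_eq_sum_range
      (fun i => if (j : ℕ) ≤ i then shiftedExt w i - shiftedExt w (i + 1) else 0) m)
  rw [h1, ← Finset.sum_filter]
  have h2 : (Finset.range m).filter (fun i => (j : ℕ) ≤ i) = Finset.Ico (j : ℕ) m := by
    ext i; simp [and_comm]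
  have h3 := Finset.sum_Ico_sub (f := shiftedExt w) (j.2.le)
  have h4 : ∑ i ∈ Finset.Ico (j : ℕ) m, (shiftedExt w i - shiftedExt w (i + 1)) =
      -∑ i ∈ Finset.Ico (j : ℕ) m, (shiftedExt w (i + 1) - shiftedExt w i) := by
    rw [← Finset.sum_neg_distrib]; simp
  rw [h2, h4, h3]
  simp [shiftedExt]

/-- The weighted sum of the projections onto the subspaces of a flag. -/
noncomputable def flagMom (w : Fin m → ℝ) (c : Matrix ι (Fin m) ℂ) : Matrix ι ι ℂ :=
  ∑ i, (flagWt w i : ℂ) • colProj (firstCols c i)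

/-- The Hermitian matrix with eigenvalues `w` along the columns of `Q`. -/
noncomputable def spec (w : Fin m → ℝ) (Q : Matrix ι (Fin m) ℂ) : Matrix ι ι ℂ :=
  Q * diagonal (fun i => (w i : ℂ)) * Qᴴ

lemma flagMom_mul (w : Fin m → ℝ) (c : Matrix ι (Fin m) ℂ) {R : Matrix (Fin m) (Fin m) ℂ}
    (hR : IsUpper R) : flagMom w (c * R) = flagMom w c := by
  simp only [flagMom, colProj_firstCols_mul c hR]

lemma flagMom_of_isometry (w : Fin m → ℝ) {Q : Matrix ι (Fin m) ℂ} (hQ : Qᴴ * Q = 1) :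
    flagMom w Q = spec w Q + ((∑ i, |w i| : ℝ) : ℂ) • (Q * Qᴴ) := by
  have h1 : ∀ i, colProj (firstCols Q i) =
      Q * diagonal (fun k => if k ≤ i then (1 : ℂ) else 0) * Qᴴ := by
    intro i
    have h2 : (firstCols Q i)ᴴ * firstCols Q i = 1 := by
      have : (firstCols Q i)ᴴ * firstCols Q i =
          (Qᴴ * Q).submatrix (Fin.castLE i.2) (Fin.castLE i.2) := rfl
      rw [this, hQ, submatrix_one _ (Fin.castLE_injective _)]
    rw [colProj_of_isometry h2]
    ext a b
    rw [Matrix.mul_apply, Matrix.mul_apply]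
    simp only [firstCols, mul_diagonal, conjTranspose_apply, submatrix_apply, id]
    refine Fintype.sum_of_injective _ (Fin.castLE_injective i.2) _ _ (fun k hk => ?_)
      fun k => ?_
    · rw [if_neg, mul_zero, zero_mul]
      exact fun hle => hk ⟨⟨k, by rw [Fin.le_def] at hle; omega⟩, by ext; rfl⟩
    · rw [if_pos, mul_one]
      rw [Fin.le_def, Fin.val_castLE]; omega
  have h3 : ∑ i, (flagWt w i : ℂ) • diagonal (fun k => if k ≤ i then (1 : ℂ) else 0) =
      diagonal (fun k => (w k : ℂ)) + ((∑ i, |w i| : ℝ) : ℂ) • (1 : Matrix (Fin m) (Fin m) ℂ) := by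
    rw [smul_one_eq_diagonal, diagonal_add]
    ext a b
    rw [Matrix.sum_apply]
    by_cases hab : a = b
    · subst hab
      simp only [Matrix.smul_apply, diagonal_apply_eq, smul_eq_mul]
      rw [← Complex.ofReal_add, ← sum_flagWt w a]
      push_cast
      refine Finset.sum_congr rfl fun i _ => ?_
      by_cases h : a ≤ i
      · rw [if_pos h, if_pos h, mul_one]
      · rw [if_neg h, if_neg h, mul_zero, Complex.ofReal_zero]
    · simp [Matrix.smul_apply, hab]
  simp only [flagMom, h1]
  have h4 : ∀ i, (flagWt w i : ℂ) • (Q * diagonal (fun k => if k ≤ i then (1 : ℂ) else 0) * Qᴴ) =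
      Q * ((flagWt w i : ℂ) • diagonal (fun k => if k ≤ i then (1 : ℂ) else 0)) * Qᴴ := by
    intro i; rw [Matrix.mul_smul, Matrix.smul_mul]
  simp only [h4]
  rw [← Matrix.sum_mul, ← Matrix.mul_sum, h3, Matrix.mul_add, Matrix.add_mul, Matrix.mul_smul,
    Matrix.smul_mul, Matrix.mul_one, spec]

/-- The columns of `c` form a basis of the range of the projection `E` whose associated flag is
isotropic for the Hermitian form `J`. -/
structure IsIsotropic (J E : Matrix ι ι ℂ) (c : Matrix ι (Fin m) ℂ) : Prop where
  posDef : (cᴴ * c).PosDef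
  range : E * c = c
  isotropic : ∀ i j : Fin m, (i : ℕ) + j + 1 < m → (cᴴ * J * c) i j = 0

lemma IsIsotropic.mul_left {J E : Matrix ι ι ℂ} {c : Matrix ι (Fin m) ℂ}
    (hc : IsIsotropic J E c) {g : Matrix ι ι ℂ} (hg : IsUnit g) (hgE : Commute E g)
    (hgJ : gᴴ * J * g = J) : IsIsotropic J E (g * c) := by
  refine ⟨posDef_gram_mul hc.posDef hg, ?_, fun i j hij => ?_⟩
  · rw [← Matrix.mul_assoc, hgE.eq, Matrix.mul_assoc, hc.range]
  · have : (g * c)ᴴ * J * (g * c) = cᴴ * J * c := by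
      conv_rhs => rw [← hgJ]
      rw [conjTranspose_mul]; simp only [Matrix.mul_assoc]
    rw [this]; exact hc.isotropic i j hij

lemma IsIsotropic.mul_right {J E : Matrix ι ι ℂ} {c : Matrix ι (Fin m) ℂ}
    (hc : IsIsotropic J E c) {R : Matrix (Fin m) (Fin m) ℂ} (hR : IsUpper R) :
    IsIsotropic J E (c * R) := by
  refine ⟨?_, ?_, fun i j hij => ?_⟩
  · rw [gram_mul_right]
    have := hc.posDef.conjTranspose_mul_mul_same (B := R)
      (Matrix.mulVec_injective_of_isUnit hR.unit)
    simpa only [Matrix.mul_assoc] using this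
  · rw [← Matrix.mul_assoc, hc.range]
  · have : (c * R)ᴴ * J * (c * R) = Rᴴ * (cᴴ * J * c) * R := by
      rw [conjTranspose_mul]; simp only [Matrix.mul_assoc]
    rw [this, Matrix.mul_apply]
    refine Finset.sum_eq_zero fun l _ => ?_
    by_cases hl : j < l
    · rw [hR.zero l j hl, mul_zero]
    rw [Matrix.mul_apply, Finset.sum_eq_zero, zero_mul]
    intro k _
    by_cases hk : i < k
    · rw [conjTranspose_apply, hR.zero k i hk, star_zero, zero_mul]
    · rw [hc.isotropic, mul_zero]
      rw [Fin.lt_def] at hl hk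
      omega

lemma eq_of_isometry_of_trace {E : Matrix ι ι ℂ} (hE : Eᴴ = E) (hE2 : E * E = E)
    (htr : E.trace = m) {Q : Matrix ι (Fin m) ℂ} (hQ : Qᴴ * Q = 1) (hEQ : E * Q = Q) :
    Q * Qᴴ = E := by
  have h2 : Qᴴ * E = Qᴴ := by
    have := congrArg conjTranspose hEQ
    rwa [conjTranspose_mul, hE] at this
  have h1 : (E - Q * Qᴴ)ᴴ * (E - Q * Qᴴ) = E - Q * Qᴴ := by
    rw [conjTranspose_sub, conjTranspose_mul, conjTranspose_conjTranspose, hE, Matrix.mul_sub,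
      Matrix.sub_mul, Matrix.sub_mul, hE2, Matrix.mul_assoc Q, h2, ← Matrix.mul_assoc E, hEQ,
      Matrix.mul_assoc Q, ← Matrix.mul_assoc Qᴴ, hQ, Matrix.one_mul, sub_self, sub_zero]
  have h3 : (E - Q * Qᴴ).trace = 0 := by
    rw [trace_sub, htr, Matrix.trace_mul_comm, hQ, trace_one, Fintype.card_fin, sub_self]
  rw [← h1, Matrix.trace_conjTranspose_mul_self_eq_zero_iff] at h3
  exact (sub_eq_zero.mp h3).symm

/-- Translates of isotropic flags by invertible matrices commuting with `J` and `E`. -/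
def isoTranslates (J E : Matrix ι ι ℂ) (m : ℕ) : Set (Matrix ι (Fin m) ℂ) :=
  {c | ∃ g b, IsUnit g ∧ Commute J g ∧ Commute E g ∧ IsIsotropic J E b ∧ c = g * b}

/-- An isotropic isometry diagonalises a matrix anticommuting with `J`. -/
lemma IsIsotropic.anticommute {J E : Matrix ι ι ℂ} (hJ : Jᴴ = J) (hJ2 : J * J = 1)
    (hJE : Commute J E) {Q : Matrix ι (Fin m) ℂ} (hc : IsIsotropic J E Q)
    (hQ : Qᴴ * Q = 1) (hQE : Q * Qᴴ = E)
    {w : Fin m → ℝ} (hw : ∀ i, w i.rev = -w i) : J * spec w Q * J = -spec w Q := by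
  set T := Qᴴ * J * Q with hT
  have hTh : Tᴴ = T := by
    rw [hT, conjTranspose_mul, conjTranspose_mul, conjTranspose_conjTranspose, hJ,
      Matrix.mul_assoc]
  have hJQ : J * Q = Q * T := by
    calc J * Q = J * (E * Q) := by rw [hc.range]
      _ = E * J * Q := by rw [← Matrix.mul_assoc, hJE.eq]
      _ = Q * T := by rw [hT, ← hQE]; simp only [Matrix.mul_assoc]
  have hQJ : Qᴴ * J = T * Qᴴ := by
    have := congrArg conjTranspose hJQ
    rwa [conjTranspose_mul, conjTranspose_mul, hJ, hTh] at this
  have hTT : T * T = 1 := by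
    calc T * T = Qᴴ * J * (Q * T) := by rw [hT]; simp only [Matrix.mul_assoc]
      _ = 1 := by
        rw [← hJQ, Matrix.mul_assoc, ← Matrix.mul_assoc J, hJ2, Matrix.one_mul, hQ]
  set U : Matrix (Fin m) (Fin m) ℂ := T.submatrix id Fin.rev with hU
  have hUlow : ∀ i j, i < j → U i j = 0 := by
    intro i j hij
    refine hc.isotropic _ _ ?_
    rw [Fin.val_rev]
    have h1 := j.2
    rw [Fin.lt_def] at hij
    simp only [id]
    omega
  have hUU : Uᴴ * U = 1 := by
    have h1 : Uᴴ * U = (Tᴴ * T).submatrix Fin.rev Fin.rev := rfl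
    rw [h1, hTh, hTT, submatrix_one _ Fin.rev_injective]
  have hUinv : U⁻¹ = Uᴴ := Matrix.inv_eq_left_inv hUU
  have hUup : ∀ i j, j < i → U i j = 0 := by
    intro i j hij
    let _ : Invertible U := invertibleOfLeftInverse U Uᴴ hUU
    have h1 : BlockTriangular U OrderDual.toDual := fun a b hab => hUlow a b hab
    have h2 := blockTriangular_inv_of_blockTriangular h1
    rw [hUinv] at h2
    have h3 := h2 (show OrderDual.toDual i < OrderDual.toDual j from hij)
    rw [conjTranspose_apply] at h3
    exact star_eq_zero.mp h3
  have hTz : ∀ i j, j ≠ i.rev → T i j = 0 := by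
    intro i j hij
    have h1 : T i j = U i j.rev := by rw [hU, submatrix_apply, Fin.rev_rev]; rfl
    rw [h1]
    rcases lt_trichotomy i j.rev with h | h | h
    · exact hUlow _ _ h
    · exact absurd (by rw [h, Fin.rev_rev]) hij
    · exact hUup _ _ h
  have hanti : T * diagonal (fun i => (w i : ℂ)) = -(diagonal (fun i => (w i : ℂ)) * T) := by
    ext i j
    rw [mul_diagonal, neg_apply, diagonal_mul]
    by_cases hij : j = i.rev
    · rw [hij, hw]; push_cast; ring
    · rw [hTz i j hij]; simp
  calc J * spec w Q * J = (J * Q) * diagonal (fun i => (w i : ℂ)) * (Qᴴ * J) := by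
        rw [spec]; simp only [Matrix.mul_assoc]
    _ = Q * (T * diagonal (fun i => (w i : ℂ))) * T * Qᴴ := by
        rw [hJQ, hQJ]; simp only [Matrix.mul_assoc]
    _ = -spec w Q := by
        rw [hanti, Matrix.mul_neg, Matrix.neg_mul, Matrix.neg_mul, spec]
        congr 2
        rw [Matrix.mul_assoc, Matrix.mul_assoc, hTT, Matrix.mul_one]

end Flags

section Disc

variable {ι : Type*} [Fintype ι] [DecidableEq ι]

lemma norm_moebius {t : ℂ} (ht : ‖t‖ = 1) (d : ℝ) : ‖t + d‖ = ‖1 + t * d‖ := by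
  have h1 : t * star t = 1 := by
    rw [Complex.star_def, Complex.mul_conj, Complex.normSq_eq_norm_sq, ht]; simp
  have h2 : 1 + t * d = t * star (t + d) := by
    rw [star_add, mul_add, h1, Complex.star_def, Complex.conj_ofReal]
  rw [h2, norm_mul, ht, one_mul, norm_star]

/-- An invertible matrix is, up to scaling, the centre of an analytic disc whose boundary is
unitary and which commutes with every Hermitian matrix commuting with the given one. -/
lemma exists_disc {g : Matrix ι ι ℂ} (hg : IsUnit g) :
    ∃ (r : ℂ) (Φ : ℂ → Matrix ι ι ℂ), r ≠ 0 ∧ DiffContOnCl ℂ Φ (ball 0 1) ∧ Φ 0 = r • g ∧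
      (∀ z ∈ sphere (0 : ℂ) 1, (Φ z)ᴴ * Φ z = 1) ∧
      ∀ P : Matrix ι ι ℂ, Pᴴ = P → Commute P g → ∀ z, Commute P (Φ z) := by
  have hZ := Matrix.isHermitian_conjTranspose_mul_self g
  obtain ⟨V, hV, hV', hVd⟩ := exists_unitary_diagonal hZ
  set h := hZ.eigenvalues with hh
  have hpos : ∀ i, 0 < h i := by
    have : (gᴴ * g).PosDef := by
      have := posDef_gram_mul (A := (1 : Matrix ι ι ℂ))
        (by rw [conjTranspose_one, Matrix.mul_one]; exact Matrix.PosDef.one) hg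
      simpa using this
    exact this.eigenvalues_pos
  set s : ℝ := 1 + ∑ i, Real.sqrt (h i) with hs
  have hs0 : 0 < s := by positivity
  set d : ι → ℝ := fun i => s⁻¹ * Real.sqrt (h i) with hd
  have hd0 : ∀ i, 0 < d i := fun i => mul_pos (inv_pos.mpr hs0) (Real.sqrt_pos.mpr (hpos i))
  have hd1 : ∀ i, d i < 1 := by
    intro i
    rw [hd, inv_mul_lt_iff₀ hs0, mul_one, hs]
    have := Finset.single_le_sum (f := fun i => Real.sqrt (h i)) (fun i _ => Real.sqrt_nonneg _)
      (Finset.mem_univ i)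
    linarith
  set f : ℂ → ι → ℂ := fun z i => (z + d i) / (1 + z * d i) / d i with hf
  have hden : ∀ i, ∀ z ∈ Metric.closedBall (0 : ℂ) 1, 1 + z * (d i : ℂ) ≠ 0 := by
    intro i z hz h0
    have h1 : ‖z * (d i : ℂ)‖ = 1 := by
      rw [eq_neg_of_add_eq_zero_right h0, norm_neg, norm_one]
    rw [norm_mul, Complex.norm_real, Real.norm_of_nonneg (hd0 i).le] at h1
    have h2 : ‖z‖ ≤ 1 := by simpa using hz
    nlinarith [hd0 i, hd1 i, norm_nonneg z]
  have hdc : ∀ i, (d i : ℂ) ≠ 0 := fun i => Complex.ofReal_ne_zero.mpr (hd0 i).ne'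
  refine ⟨((s⁻¹ : ℝ) : ℂ), fun z => (((s⁻¹ : ℝ) : ℂ) • g) * (V * diagonal (f z) * Vᴴ),
    Complex.ofReal_ne_zero.mpr (inv_pos.mpr hs0).ne', ?_, ?_, ?_, ?_⟩
  · refine DifferentiableOn.diffContOnCl_ball (U := Metric.closedBall 0 1) ?_ subset_rfl
    have h1 : DifferentiableOn ℂ f (Metric.closedBall 0 1) := by
      rw [differentiableOn_pi]
      intro i
      refine DifferentiableOn.div_const (DifferentiableOn.fun_div ?_ ?_ (hden i)) _
      · fun_prop
      · fun_prop
    have h2 : DifferentiableOn ℂ (fun z => diagonal (f z)) (Metric.closedBall 0 1) :=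
      (LinearMap.toContinuousLinearMap
        (Matrix.diagonalLinearMap ι ℂ ℂ)).differentiable.comp_differentiableOn h1
    exact ((h2.const_mul V).mul_const Vᴴ).const_mul _
  · have h1 : f 0 = fun _ => 1 := by
      ext i; simp [hf, hdc i]
    simp only [h1]
    rw [diagonal_one, Matrix.mul_one, hV', Matrix.mul_one]
  · intro z hz
    have hz1 : ‖z‖ = 1 := by simpa using hz
    have hfd : (diagonal (f z))ᴴ * diagonal (fun i => ((s⁻¹ ^ 2 * h i : ℝ) : ℂ)) *
        diagonal (f z) = 1 := by
      rw [diagonal_conjTranspose, diagonal_mul_diagonal, diagonal_mul_diagonal, ← diagonal_one]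
      congr 1
      ext i
      have h1 : s⁻¹ ^ 2 * h i = d i * d i := by
        have := Real.mul_self_sqrt (hpos i).le
        rw [hd]; simp only; nlinarith
      have h2 : star (f z i) * f z i = ((d i * d i : ℝ) : ℂ)⁻¹ := by
        rw [Complex.star_def, ← Complex.normSq_eq_conj_mul_self, Complex.normSq_eq_norm_sq]
        have h3 : ‖f z i‖ = (d i)⁻¹ := by
          simp only [hf]
          rw [norm_div, norm_div, norm_moebius hz1, div_self, Complex.norm_real,
            Real.norm_of_nonneg (hd0 i).le, one_div]
          exact norm_ne_zero_iff.mpr (hden i z (Metric.sphere_subset_closedBall hz))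
        rw [h3]; push_cast; rw [sq, mul_inv]
      rw [Pi.star_apply, h1, mul_right_comm, h2]
      exact inv_mul_cancel₀ (by exact_mod_cast (mul_pos (hd0 i) (hd0 i)).ne')
    have hg2 : (((s⁻¹ : ℝ) : ℂ) • g)ᴴ * (((s⁻¹ : ℝ) : ℂ) • g) =
        V * diagonal (fun i => ((s⁻¹ ^ 2 * h i : ℝ) : ℂ)) * Vᴴ := by
      rw [conjTranspose_smul, Matrix.smul_mul, Matrix.mul_smul, hVd, smul_smul, ← Matrix.smul_mul,
        ← Matrix.mul_smul, ← diagonal_smul]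
      congr 3
      ext i
      simp only [Pi.smul_apply, smul_eq_mul, Complex.star_def, Complex.conj_ofReal]
      push_cast; ring
    calc _ = V * (diagonal (f z))ᴴ * (Vᴴ * ((((s⁻¹ : ℝ) : ℂ) • g)ᴴ * (((s⁻¹ : ℝ) : ℂ) • g)) * V) *
          diagonal (f z) * Vᴴ := by
          rw [conjTranspose_mul, conjTranspose_mul, conjTranspose_mul, conjTranspose_conjTranspose]
          simp only [Matrix.mul_assoc]
      _ = V * ((diagonal (f z))ᴴ * diagonal (fun i => ((s⁻¹ ^ 2 * h i : ℝ) : ℂ)) *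
          diagonal (f z)) * Vᴴ := by
          rw [hg2]
          have : Vᴴ * (V * diagonal (fun i => ((s⁻¹ ^ 2 * h i : ℝ) : ℂ)) * Vᴴ) * V =
              diagonal (fun i => ((s⁻¹ ^ 2 * h i : ℝ) : ℂ)) := by
            rw [Matrix.mul_assoc, Matrix.mul_assoc, hV, Matrix.mul_one, ← Matrix.mul_assoc, hV,
              Matrix.one_mul]
          rw [this]
          simp only [Matrix.mul_assoc]
      _ = 1 := by rw [hfd, Matrix.mul_one, hV']
  · intro P hP hPg z
    have hPg' : Commute P gᴴ := by
      have := congrArg conjTranspose hPg.eq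
      rw [conjTranspose_mul, conjTranspose_mul, hP] at this
      exact this.symm
    have h1 : Commute P (V * diagonal (fun i => (h i : ℂ)) * Vᴴ) := by
      rw [← hVd]; exact hPg'.mul_right hPg
    refine (hPg.smul_right _).mul_right (commute_diagonal_comp hV h (f z) (fun i j hij => ?_) h1)
    simp only [hf, hd, hij]

end Disc

/-- Projections commuting with a Hermitian involution, together with weights for flags in their
ranges which are symmetric about zero. -/
structure FlagSystem (ι T : Type*) [Fintype ι] [DecidableEq ι] where
  form : Matrix ι ι ℂ
  form_herm : formᴴ = form
  form_sq : form * form = 1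
  proj : Matrix ι ι ℂ
  proj_idem : proj * proj = proj
  proj_herm : projᴴ = proj
  comm : Commute form proj
  fst : T → ℝ
  fst_idem : ∀ τ, fst τ * fst τ = fst τ
  snd : T → ℝ
  snd_idem : ∀ τ, snd τ * snd τ = snd τ
  size : T → ℕ
  trace_eq : ∀ τ, ((fst τ : ℂ) • proj + (snd τ : ℂ) • (1 - proj)).trace = size τ
  wt : ∀ τ, Fin (size τ) → ℝ
  wt_antitone : ∀ τ, Antitone (wt τ)
  wt_rev : ∀ τ i, wt τ i.rev = -wt τ i

namespace FlagSystem

variable {ι T : Type*} [Fintype ι] [DecidableEq ι] [Fintype T] (F : FlagSystem ι T)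

/-- The projection whose range is filtered by the flag `τ`. -/
noncomputable def supp (τ : T) : Matrix ι ι ℂ :=
  (F.fst τ : ℂ) • F.proj + (F.snd τ : ℂ) • (1 - F.proj)

lemma supp_herm (τ : T) : (F.supp τ)ᴴ = F.supp τ := by
  simp [supp, conjTranspose_add, conjTranspose_smul, F.proj_herm]

lemma supp_idem (τ : T) : F.supp τ * F.supp τ = F.supp τ := by
  have h1 : F.proj * (1 - F.proj) = 0 := by
    rw [Matrix.mul_sub, Matrix.mul_one, F.proj_idem, sub_self]
  have h2 : (1 - F.proj) * F.proj = 0 := by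
    rw [Matrix.sub_mul, Matrix.one_mul, F.proj_idem, sub_self]
  have h3 : (1 - F.proj) * (1 - F.proj) = 1 - F.proj := by
    rw [Matrix.sub_mul, h1, Matrix.one_mul, sub_zero]
  have h4 : (F.fst τ : ℂ) * F.fst τ = F.fst τ := by exact_mod_cast F.fst_idem τ
  have h5 : (F.snd τ : ℂ) * F.snd τ = F.snd τ := by exact_mod_cast F.snd_idem τ
  rw [supp, Matrix.add_mul, Matrix.mul_add, Matrix.mul_add]
  simp only [Matrix.smul_mul, Matrix.mul_smul, h1, h2, h3, F.proj_idem, smul_smul, h4, h5,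
    smul_zero, add_zero, zero_add]

lemma commute_supp {g : Matrix ι ι ℂ} (hg : Commute F.proj g) (τ : T) : Commute (F.supp τ) g :=
  (hg.smul_left _).add_left (((Commute.one_left g).sub_left hg).smul_left _)

/-- The weights attached to all the subspaces in the flags of the system. -/
noncomputable def weights : BlockWeights ι (Σ τ, Fin (F.size τ)) where
  proj := F.proj
  idem := F.proj_idem
  herm := F.proj_herm
  wt x := flagWt (F.wt x.1) x.2
  wt_nonneg x := flagWt_nonneg (F.wt_antitone x.1) x.2
  shiftFst := ∑ τ, (∑ i, |F.wt τ i|) * F.fst τ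
  shiftSnd := ∑ τ, (∑ i, |F.wt τ i|) * F.snd τ

/-- The subspaces occurring in a family of flags. -/
def sys (c : ∀ τ, Matrix ι (Fin (F.size τ)) ℂ) (x : Σ τ, Fin (F.size τ)) :
    Matrix ι (Fin (x.2 + 1)) ℂ :=
  firstCols (c x.1) x.2

/-- The moment matrix of a family of flags. -/
noncomputable def mom (c : ∀ τ, Matrix ι (Fin (F.size τ)) ℂ) : Matrix ι ι ℂ :=
  F.weights.mom (F.sys c)

lemma mom_eq (c : ∀ τ, Matrix ι (Fin (F.size τ)) ℂ) :
    F.mom c = F.weights.blk (∑ τ, flagMom (F.wt τ) (c τ)) - F.weights.shift := by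
  rw [mom, BlockWeights.mom, Fintype.sum_sigma]
  rfl

lemma shift_eq : F.weights.shift = ∑ τ, ((∑ i, |F.wt τ i| : ℝ) : ℂ) • F.supp τ := by
  have h : F.weights.shift = ((∑ τ, (∑ i, |F.wt τ i|) * F.fst τ : ℝ) : ℂ) • F.proj +
    ((∑ τ, (∑ i, |F.wt τ i|) * F.snd τ : ℝ) : ℂ) • (1 - F.proj) := rfl
  rw [h, Complex.ofReal_sum, Complex.ofReal_sum, Finset.sum_smul, Finset.sum_smul,
    ← Finset.sum_add_distrib]
  refine Finset.sum_congr rfl fun τ _ => ?_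
  rw [supp, smul_add, smul_smul, smul_smul, Complex.ofReal_mul, Complex.ofReal_mul]

lemma mom_of_isometry {Q : ∀ τ, Matrix ι (Fin (F.size τ)) ℂ} (hQ : ∀ τ, (Q τ)ᴴ * Q τ = 1)
    (hQ' : ∀ τ, Q τ * (Q τ)ᴴ = F.supp τ) :
    F.mom Q = F.weights.blk (∑ τ, spec (F.wt τ) (Q τ)) := by
  have h1 : ∑ τ, flagMom (F.wt τ) (Q τ) = ∑ τ, spec (F.wt τ) (Q τ) + F.weights.shift := by
    rw [F.shift_eq, ← Finset.sum_add_distrib]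
    exact Finset.sum_congr rfl fun τ _ => by rw [flagMom_of_isometry _ (hQ τ), hQ' τ]
  rw [F.mom_eq, h1, F.weights.blk_add, F.weights.blk_of_commute F.weights.commute_shift,
    add_sub_cancel_right]

lemma mom_mul_right (c : ∀ τ, Matrix ι (Fin (F.size τ)) ℂ)
    {R : ∀ τ, Matrix (Fin (F.size τ)) (Fin (F.size τ)) ℂ} (hR : ∀ τ, IsUpper (R τ)) :
    F.mom (fun τ => c τ * R τ) = F.mom c := by
  simp only [F.mom_eq, flagMom_mul _ _ (hR _)]

/-- All flags in the family are isotropic. -/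
def Isotropic (c : ∀ τ, Matrix ι (Fin (F.size τ)) ℂ) : Prop :=
  ∀ τ, IsIsotropic F.form (F.supp τ) (c τ)

/-- Orthonormal bases of the supports whose associated Hermitian matrices anticommute with the
form. -/
def IsSolution (Q : ∀ τ, Matrix ι (Fin (F.size τ)) ℂ) : Prop :=
  ∀ τ, (Q τ)ᴴ * Q τ = 1 ∧ Q τ * (Q τ)ᴴ = F.supp τ ∧
    F.form * spec (F.wt τ) (Q τ) * F.form = -spec (F.wt τ) (Q τ)

lemma commute_form_supp (τ : T) : Commute F.form (F.supp τ) := (F.commute_supp F.comm.symm τ).symm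

lemma Isotropic.exists_solution {F : FlagSystem ι T} {c : ∀ τ, Matrix ι (Fin (F.size τ)) ℂ}
    (hc : F.Isotropic c) :
    ∃ Q, F.IsSolution Q ∧ F.mom c = F.weights.blk (∑ τ, spec (F.wt τ) (Q τ)) := by
  choose R hR hQ using fun τ => exists_isometry_upper (hc τ).posDef
  have hiso : ∀ τ, IsIsotropic F.form (F.supp τ) (c τ * R τ) := fun τ => (hc τ).mul_right (hR τ)
  have hQE : ∀ τ, (c τ * R τ) * (c τ * R τ)ᴴ = F.supp τ := fun τ =>
    eq_of_isometry_of_trace (F.supp_herm τ) (F.supp_idem τ) (F.trace_eq τ) (hQ τ) (hiso τ).range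
  refine ⟨fun τ => c τ * R τ, fun τ => ⟨hQ τ, hQE τ, ?_⟩, ?_⟩
  · exact (hiso τ).anticommute F.form_herm F.form_sq (F.commute_form_supp τ) (hQ τ) (hQE τ)
      (F.wt_rev τ)
  · rw [← F.mom_of_isometry hQ hQE, F.mom_mul_right c hR]

lemma exists_gap_of_solution
    (h : ∀ Q, F.IsSolution Q → F.weights.blk (∑ τ, spec (F.wt τ) (Q τ)) ≠ 0) :
    ∃ δ > 0, ∀ Q, F.IsSolution Q → δ ≤ ‖F.weights.blk (∑ τ, spec (F.wt τ) (Q τ))‖ := by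
  set S : Set (∀ τ, Matrix ι (Fin (F.size τ)) ℂ) := {Q | F.IsSolution Q} with hS
  have hspec : ∀ τ, Continuous (fun Q : ∀ τ, Matrix ι (Fin (F.size τ)) ℂ =>
      spec (F.wt τ) (Q τ)) := by
    intro τ; unfold spec; fun_prop
  have hclosed : IsClosed S := by
    have : S = ⋂ τ, ({Q : ∀ τ, Matrix ι (Fin (F.size τ)) ℂ | (Q τ)ᴴ * Q τ = 1} ∩
        ({Q | Q τ * (Q τ)ᴴ = F.supp τ} ∩
        {Q | F.form * spec (F.wt τ) (Q τ) * F.form = -spec (F.wt τ) (Q τ)})) := by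
      ext Q
      simp only [hS, IsSolution, Set.mem_iInter, Set.mem_inter_iff, Set.mem_ofPred_eq]
    rw [this]
    refine isClosed_iInter fun τ => ?_
    refine (isClosed_eq (by fun_prop) continuous_const).inter
      ((isClosed_eq (by fun_prop) continuous_const).inter (isClosed_eq ?_ (hspec τ).neg))
    have h1 : Continuous (fun X : Matrix ι ι ℂ => F.form * X * F.form) := by fun_prop
    exact h1.comp (hspec τ)
  have hbdd : Bornology.IsBounded S := by
    refine Bornology.forall_isBounded_image_eval_iff.mp fun τ => ?_
    rw [isBounded_iff_forall_norm_le]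
    refine ⟨Real.sqrt (F.size τ), ?_⟩
    rintro _ ⟨Q, hQ, rfl⟩
    refine Real.le_sqrt_of_sq_le ?_
    simp only [Function.eval]
    rw [← trace_conjTranspose_mul_self_re, (hQ τ).1, trace_one]
    simp
  have hcomp : IsCompact S := Metric.isCompact_of_isClosed_isBounded hclosed hbdd
  have hcont : Continuous (fun Q : ∀ τ, Matrix ι (Fin (F.size τ)) ℂ =>
      ‖F.weights.blk (∑ τ, spec (F.wt τ) (Q τ))‖) := by
    have h1 : Continuous (fun X : Matrix ι ι ℂ => F.weights.blk X) := by
      unfold BlockWeights.blk; fun_prop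
    exact (h1.comp (continuous_finsetSum _ fun τ _ => hspec τ)).norm
  rcases S.eq_empty_or_nonempty with he | hne
  · exact ⟨1, one_pos, fun Q hQ => absurd (show Q ∈ S from hQ) (by rw [he]; exact id)⟩
  · obtain ⟨Q₀, hQ₀, hmin⟩ := hcomp.exists_isMinOn hne hcont.continuousOn
    exact ⟨_, norm_pos_iff.mpr (h Q₀ hQ₀), fun Q hQ => hmin hQ⟩

lemma form_mul_blk_mul (X : Matrix ι ι ℂ) :
    F.form * F.weights.blk X * F.form = F.weights.blk (F.form * X * F.form) := by
  have h1 : ∀ P : Matrix ι ι ℂ, Commute F.form P →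
      F.form * (P * X * P) * F.form = P * (F.form * X * F.form) * P := by
    intro P hP
    calc F.form * (P * X * P) * F.form = (F.form * P) * X * (P * F.form) := by
          simp only [Matrix.mul_assoc]
      _ = (P * F.form) * X * (F.form * P) :=
          congrArg₂ (fun A B => A * X * B) hP.eq hP.eq.symm
      _ = P * (F.form * X * F.form) * P := by
          simp only [Matrix.mul_assoc]
  rw [BlockWeights.blk, BlockWeights.blk, Matrix.mul_add, Matrix.add_mul,
    h1 F.weights.proj F.comm, h1 F.weights.coproj ((Commute.one_right _).sub_right F.comm)]

lemma Isotropic.form_mul_mom_mul {F : FlagSystem ι T} {c : ∀ τ, Matrix ι (Fin (F.size τ)) ℂ}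
    (hc : F.Isotropic c) : F.form * F.mom c * F.form = -F.mom c := by
  obtain ⟨Q, hQ, hm⟩ := hc.exists_solution
  have h1 : F.form * (∑ τ, spec (F.wt τ) (Q τ)) * F.form = -∑ τ, spec (F.wt τ) (Q τ) := by
    rw [Matrix.mul_sum, Matrix.sum_mul, ← Finset.sum_neg_distrib]
    exact Finset.sum_congr rfl fun τ _ => (hQ τ).2.2
  rw [hm, F.form_mul_blk_mul, h1, ← zero_sub, F.weights.blk_sub, ← zero_sub]
  congr 1
  simp [BlockWeights.blk]

lemma Isotropic.full {F : FlagSystem ι T} {c : ∀ τ, Matrix ι (Fin (F.size τ)) ℂ}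
    (hc : F.Isotropic c) : BlockWeights.Full (F.sys c) := fun x =>
  firstCols_posDef (hc x.1).posDef x.2

lemma Isotropic.flow {F : FlagSystem ι T} {c : ∀ τ, Matrix ι (Fin (F.size τ)) ℂ}
    (hc : F.Isotropic c) (ε : ℝ) :
    F.Isotropic (fun τ => NormedSpace.exp (-(ε • F.mom c)) * c τ) := by
  set X := -(ε • F.mom c) with hX
  have hXc : Commute F.proj X := ((F.weights.commute_mom _).smul_right ε).neg_right
  have hXh : Xᴴ = X := by
    have hh : (F.mom c)ᴴ = F.mom c := F.weights.mom_isHermitian _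
    rw [hX, conjTranspose_neg, conjTranspose_smul, hh]
    simp
  have hJX : F.form * X * F.form = -X := by
    rw [hX, Matrix.mul_neg, Matrix.neg_mul, Matrix.mul_smul, Matrix.smul_mul,
      hc.form_mul_mom_mul, smul_neg]
  clear_value X
  have hinv : F.form⁻¹ = F.form := Matrix.inv_eq_left_inv F.form_sq
  have hu : IsUnit F.form := IsUnit.of_mul_eq_one _ F.form_sq
  have h1 : F.form * NormedSpace.exp X * F.form = NormedSpace.exp (-X) := by
    rw [← hJX]
    have := Matrix.exp_conj F.form X hu
    rw [hinv] at this
    exact this.symm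
  have h2 : (NormedSpace.exp X)ᴴ * F.form * NormedSpace.exp X = F.form := by
    rw [← Matrix.exp_conjTranspose, hXh]
    calc NormedSpace.exp X * F.form * NormedSpace.exp X
        = NormedSpace.exp X * (F.form * NormedSpace.exp X * F.form) * F.form := by
          simp only [Matrix.mul_assoc, F.form_sq, Matrix.mul_one]
      _ = F.form := by
          rw [h1, Matrix.exp_neg, Matrix.mul_nonsing_inv _
            ((Matrix.isUnit_iff_isUnit_det _).mp (isUnit_exp' X)), Matrix.one_mul]
  exact fun τ => (hc τ).mul_left (isUnit_exp' X)
    (F.commute_supp (F.weights.commute_exp hXc) τ) h2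

lemma exists_gap_of_isotropic
    (h : ∀ Q, F.IsSolution Q → F.weights.blk (∑ τ, spec (F.wt τ) (Q τ)) ≠ 0) :
    ∃ δ > 0, ∀ c, F.Isotropic c → ∀ g, IsUnit g → Commute F.proj g →
      δ ≤ ‖F.mom (fun τ => g * c τ)‖ := by
  obtain ⟨δ, hδ, hgap⟩ := F.exists_gap_of_solution h
  obtain ⟨δ', hδ', h'⟩ := F.weights.exists_norm_mom_ge_of_invariant
    (S := F.sys '' {c | F.Isotropic c}) (δ := δ)
    (by rintro _ ⟨c, hc, rfl⟩; exact Isotropic.full hc)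
    (by rintro _ ⟨c, hc, rfl⟩ ε; exact ⟨_, Isotropic.flow hc ε, rfl⟩) hδ
    (by
      rintro _ ⟨c, hc, rfl⟩
      obtain ⟨Q, hQ, hm⟩ := Isotropic.exists_solution hc
      have := hgap Q hQ
      rwa [← hm] at this)
  exact ⟨δ', hδ', fun c hc g hg hgP => h' _ ⟨c, hc, rfl⟩ g hg hgP⟩

lemma exists_gap_of_translates
    (h : ∀ Q, F.IsSolution Q → F.weights.blk (∑ τ, spec (F.wt τ) (Q τ)) ≠ 0) :
    ∃ δ > 0, ∀ c, F.Isotropic c → ∀ g : T → Matrix ι ι ℂ, (∀ τ, IsUnit (g τ)) →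
      (∀ τ, Commute F.form (g τ)) → (∀ τ, Commute (F.supp τ) (g τ)) →
      δ ≤ ‖F.mom (fun τ => g τ * c τ)‖ := by
  obtain ⟨δ, hδ, hgap⟩ := F.exists_gap_of_isotropic h
  obtain ⟨δ', hδ', h'⟩ := F.weights.exists_norm_mom_zero_ge
    (fun x : Σ τ, Fin (F.size τ) => (x.2 : ℕ) + 1) hδ
  refine ⟨δ', hδ', fun c hc g hg hgJ hgE => ?_⟩
  choose r Φ hr hΦ hΦ0 hΦu hΦc using fun τ => exists_disc (hg τ)
  have hR : ∀ τ, IsUpper (r τ • (1 : Matrix (Fin (F.size τ)) (Fin (F.size τ)) ℂ)) := fun τ => by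
    refine ⟨fun i j hij => ?_, ?_⟩
    · rw [Matrix.smul_apply, Matrix.one_apply_ne hij.ne', smul_zero]
    · exact (isUnit_one.smul (Units.mk0 (r τ) (hr τ)))
  have hU : ∀ τ, ∀ z ∈ sphere (0 : ℂ) 1, IsUnit (Φ τ z) := fun τ z hz =>
    IsUnit.of_mul_eq_one_right _ (hΦu τ z hz)
  have h1 := h' (F.sys c) (fun x => Φ x.1) hc.full (fun x => hΦ x.1)
    (fun x => by
      rw [hΦ0]; exact (hg x.1).smul (Units.mk0 (r x.1) (hr x.1)))
    (fun x => hU x.1)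
    (fun z hz k hk hkP => by
      have hiso : F.Isotropic (fun τ => Φ τ z * c τ) := fun τ =>
        (hc τ).mul_left (hU τ z hz) (hΦc τ _ (F.supp_herm τ) (hgE τ) z) (by
          rw [Matrix.mul_assoc, (hΦc τ _ F.form_herm (hgJ τ) z).eq, ← Matrix.mul_assoc,
            hΦu τ z hz, Matrix.one_mul])
      exact hgap _ hiso k hk hkP)
  have h2 : F.mom (fun τ => g τ * c τ) = F.mom (fun τ => Φ τ 0 * c τ) := by
    rw [← F.mom_mul_right (fun τ => g τ * c τ) hR]
    congr 1
    ext1 τ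
    rw [hΦ0, Matrix.mul_smul, Matrix.mul_one, Matrix.smul_mul]
  rw [h2]
  exact h1

/-- If a family of orthonormal bases in the closure of the translates of isotropic flags has
vanishing moment matrix, then there is such a family which anticommutes with the form. -/
theorem exists_solution {k : ∀ τ, Matrix ι (Fin (F.size τ)) ℂ} (hk : ∀ τ, (k τ)ᴴ * k τ = 1)
    (hk' : ∀ τ, k τ * (k τ)ᴴ = F.supp τ)
    (hcl : ∀ τ, k τ ∈ closure (isoTranslates F.form (F.supp τ) (F.size τ)))
    (h0 : F.weights.blk (∑ τ, spec (F.wt τ) (k τ)) = 0) :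
    ∃ Q, F.IsSolution Q ∧ F.weights.blk (∑ τ, spec (F.wt τ) (Q τ)) = 0 := by
  by_contra! hcon
  obtain ⟨δ, hδ, hgap⟩ := F.exists_gap_of_translates hcon
  set Z : Set (∀ τ, Matrix ι (Fin (F.size τ)) ℂ) :=
    Set.univ.pi fun τ => isoTranslates F.form (F.supp τ) (F.size τ) with hZ
  set S : Set (∀ τ, Matrix ι (Fin (F.size τ)) ℂ) := {c | BlockWeights.Full (F.sys c)} with hS
  have hkZ : k ∈ closure Z := by
    rw [hZ, closure_pi_set]; exact fun τ _ => hcl τ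
  have hZδ : ∀ c ∈ Z, c ∈ S ∧ δ ≤ ‖F.mom c‖ := by
    intro c hc
    choose g b hg hgJ hgE hb hcb using fun τ => hc τ (Set.mem_univ τ)
    obtain rfl : c = fun τ => g τ * b τ := funext hcb
    exact ⟨fun x => firstCols_posDef (posDef_gram_mul (hb x.1).posDef (hg x.1)) x.2,
      hgap b hb g hg hgJ hgE⟩
  have hkS : k ∈ S := fun x => firstCols_posDef (by rw [hk]; exact Matrix.PosDef.one) x.2
  have hcont : ContinuousOn (fun c => F.mom c) S := by
    refine F.weights.continuousOn_mom (fun x => ?_) fun c hc => hc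
    refine Continuous.continuousOn ?_
    unfold sys firstCols
    exact (continuous_apply x.1).matrix_submatrix _ _
  have h1 : ContinuousWithinAt (fun c => ‖F.mom c‖) Z k :=
    ((hcont k hkS).norm).mono fun c hc => (hZδ c hc).1
  have := mem_closure_iff_nhdsWithin_neBot.mp hkZ
  have h2 : δ ≤ ‖F.mom k‖ := ge_of_tendsto h1 (by
    filter_upwards [self_mem_nhdsWithin] with c hc using (hZδ c hc).2)
  rw [F.mom_of_isometry hk hk', h0, norm_zero] at h2
  linarith

end FlagSystem

section Density

lemma IsUpper.fromBlocks {m n : ℕ} {A : Matrix (Fin m) (Fin m) ℂ} {D : Matrix (Fin n) (Fin n) ℂ}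
    (hA : IsUpper A) (B : Matrix (Fin m) (Fin n) ℂ) (hD : IsUpper D) :
    IsUpper (reindex finSumFinEquiv finSumFinEquiv (Matrix.fromBlocks A B 0 D)) := by
  refine ⟨fun i j hij => ?_, ?_⟩
  · obtain ⟨i, rfl⟩ := finSumFinEquiv.surjective i
    obtain ⟨j, rfl⟩ := finSumFinEquiv.surjective j
    rw [reindex_apply, submatrix_apply, Equiv.symm_apply_apply, Equiv.symm_apply_apply]
    rw [Fin.lt_def] at hij
    rcases i with i | i <;> rcases j with j | j <;>
      simp only [finSumFinEquiv_apply_left, finSumFinEquiv_apply_right, Fin.val_castAdd,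
        Fin.val_natAdd] at hij
    · exact hA.zero i j hij
    · omega
    · rfl
    · exact hD.zero i j (Fin.lt_def.mpr (by omega))
  · rw [Matrix.isUnit_iff_isUnit_det, det_reindex_self, det_fromBlocks_zero₂₁]
    exact ((Matrix.isUnit_iff_isUnit_det A).mp hA.unit).mul
      ((Matrix.isUnit_iff_isUnit_det D).mp hD.unit)

/-- Matrices with an `LU` decomposition. -/
def luSet (m : ℕ) : Set (Matrix (Fin m) (Fin m) ℂ) :=
  {X | ∃ A B, IsUpper A ∧ IsUpper B ∧ Aᵀ * X = B}

lemma isUnit_of_mem_luSet {m : ℕ} {X : Matrix (Fin m) (Fin m) ℂ} (hX : X ∈ luSet m) :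
    IsUnit X := by
  obtain ⟨A, B, hA, hB, h⟩ := hX
  have h1 : IsUnit (Aᵀ * X).det := by rw [h]; exact (Matrix.isUnit_iff_isUnit_det B).mp hB.unit
  rw [det_mul] at h1
  exact (Matrix.isUnit_iff_isUnit_det X).mpr (isUnit_of_mul_isUnit_right h1)

lemma isUpper_fin_one {D : Matrix (Fin 1) (Fin 1) ℂ} (hD : D 0 0 ≠ 0) : IsUpper D := by
  refine ⟨fun i j hij => absurd hij (by simp [Subsingleton.elim i j]), ?_⟩
  rw [Matrix.isUnit_iff_isUnit_det, det_fin_one]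
  exact hD.isUnit

lemma dense_luSet (m : ℕ) : Dense (luSet m) := by
  induction m with
  | zero =>
    intro X
    refine subset_closure ⟨1, X, ⟨fun i => i.elim0, isUnit_one⟩, ⟨fun i => i.elim0, ?_⟩, ?_⟩
    · rw [Subsingleton.elim X 1]; exact isUnit_one
    · rw [transpose_one, Matrix.one_mul]
  | succ m ih =>
    intro X
    obtain ⟨Y, rfl⟩ := (reindex (α := ℂ) (finSumFinEquiv (m := m) (n := 1))
      (finSumFinEquiv (m := m) (n := 1))).surjective X
    set b := Y.toBlocks₁₂
    set c := Y.toBlocks₂₁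
    let f : Matrix (Fin m) (Fin m) ℂ → Matrix (Fin 1) (Fin 1) ℂ →
        Matrix (Fin (m + 1)) (Fin (m + 1)) ℂ :=
      fun X d => reindex finSumFinEquiv finSumFinEquiv (Matrix.fromBlocks X b c d)
    have h1 : ∀ X ∈ luSet m, ∀ d, f X d ∈ closure (luSet (m + 1)) := by
      intro X hX d
      have hXu : X⁻¹ * X = 1 := Matrix.nonsing_inv_mul X
        ((Matrix.isUnit_iff_isUnit_det X).mp (isUnit_of_mem_luSet hX))
      obtain ⟨A, B, hA, hB, hAB⟩ := hX
      set v : ℂ := (-(c * X⁻¹) * b) 0 0 with hv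
      have h2 : d 0 0 ∈ closure ({-v}ᶜ : Set ℂ) := dense_compl_singleton (-v) _
      have hcont : Continuous (fun z : ℂ => f X (Matrix.of fun _ _ => z)) := by
        have : Continuous (fun z : ℂ => Matrix.fromBlocks X b c (Matrix.of fun _ _ : Fin 1 => z)) :=
          continuous_const.matrix_fromBlocks continuous_const continuous_const
            (continuous_pi fun _ => continuous_pi fun _ => continuous_id)
        exact this.matrix_submatrix _ _
      have hd : d = Matrix.of fun _ _ => d 0 0 := by
        ext i j; rw [Subsingleton.elim i 0, Subsingleton.elim j 0]; rfl
      rw [hd]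
      refine map_mem_closure (f := fun z : ℂ => f X (Matrix.of fun _ _ => z)) hcont h2
        fun z hz => ?_
      refine ⟨reindex finSumFinEquiv finSumFinEquiv (Matrix.fromBlocks A (-(c * X⁻¹))ᵀ 0 1),
        reindex finSumFinEquiv finSumFinEquiv
          (Matrix.fromBlocks B (Aᵀ * b) 0 (-(c * X⁻¹) * b + Matrix.of fun _ _ => z)),
        hA.fromBlocks _ (isUpper_fin_one (by simp)), hB.fromBlocks _ (isUpper_fin_one ?_), ?_⟩
      · rw [Matrix.add_apply, ← hv]
        intro h
        exact hz (eq_neg_of_add_eq_zero_right h)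
      · simp only [f, reindex_apply, transpose_submatrix]
        rw [submatrix_mul_equiv, fromBlocks_transpose, fromBlocks_multiply, transpose_transpose,
          hAB, transpose_zero, transpose_one, Matrix.zero_mul, Matrix.zero_mul, Matrix.one_mul,
          Matrix.one_mul, add_zero, add_zero, Matrix.neg_mul, Matrix.mul_assoc c, hXu,
          Matrix.mul_one, neg_add_cancel]
    have h3 : Continuous (fun X => f X Y.toBlocks₂₂) := by
      have : Continuous (fun X => Matrix.fromBlocks X b c Y.toBlocks₂₂) :=
        continuous_id.matrix_fromBlocks continuous_const continuous_const continuous_const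
      exact this.matrix_submatrix _ _
    have h4 := map_mem_closure h3 (ih Y.toBlocks₁₁) fun X hX => h1 X hX Y.toBlocks₂₂
    rw [closure_closure] at h4
    simpa only [f, b, c, fromBlocks_toBlocks] using h4

lemma dense_isUnit (m : ℕ) : Dense {X : Matrix (Fin m) (Fin m) ℂ | IsUnit X} :=
  (dense_luSet m).mono fun _ => isUnit_of_mem_luSet

/-- The permutation matrix reversing the order of the basis. -/
def revMat (m : ℕ) : Matrix (Fin m) (Fin m) ℂ := (1 : Matrix (Fin m) (Fin m) ℂ).submatrix Fin.rev id

lemma revMat_apply {m : ℕ} (i j : Fin m) : revMat m i j = if i.rev = j then 1 else 0 := by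
  simp [revMat, Matrix.one_apply]

lemma revMat_mul {m n : ℕ} (X : Matrix (Fin m) (Fin n) ℂ) :
    revMat m * X = X.submatrix Fin.rev id := by
  ext i j; simp [Matrix.mul_apply, revMat_apply]

lemma revMat_mul_self (m : ℕ) : revMat m * revMat m = 1 := by
  rw [revMat_mul]; ext i j; simp [revMat, Matrix.one_apply]

lemma revMat_herm (m : ℕ) : (revMat m)ᴴ = revMat m := by
  ext i j
  rw [conjTranspose_apply, revMat_apply, revMat_apply]
  by_cases h : i.rev = j
  · rw [if_pos h, if_pos (by rw [← h, Fin.rev_rev]), star_one]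
  · rw [if_neg h, if_neg (by rintro rfl; exact h (Fin.rev_rev j)), star_zero]

lemma revMat_conj {m : ℕ} (X : Matrix (Fin m) (Fin m) ℂ) :
    revMat m * X * revMat m = X.submatrix Fin.rev Fin.rev := by
  have h : X * revMat m = X.submatrix id Fin.rev := by
    ext i j
    simp only [Matrix.mul_apply, revMat_apply, submatrix_apply, id, Fin.rev_eq_iff]
    simp
  rw [Matrix.mul_assoc, h, revMat_mul]; rfl

/-- The Hermitian form of signature `(m, m)`. -/
def stdForm (ν : Type*) [DecidableEq ν] : Matrix (ν ⊕ ν) (ν ⊕ ν) ℂ := Matrix.fromBlocks 1 0 0 (-1)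

/-- A basis whose associated flag is isotropic for `stdForm`. -/
def stdFrame (m : ℕ) : Matrix (Fin m ⊕ Fin m) (Fin m ⊕ Fin m) ℂ :=
  Matrix.fromBlocks 1 (revMat m) 1 (-revMat m)

lemma isIsotropic_std (m : ℕ) : IsIsotropic (stdForm (Fin m)) 1
    ((stdFrame m).submatrix id (finSumFinEquiv (m := m) (n := m)).symm) := by
  have hr := revMat_mul_self m
  have hr' := revMat_herm m
  refine ⟨?_, Matrix.one_mul _, fun i j hij => ?_⟩
  · have h1 : (stdFrame m)ᴴ * stdFrame m = (2 : ℂ) • 1 := by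
      rw [stdFrame, fromBlocks_conjTranspose, fromBlocks_multiply, ← fromBlocks_one,
        fromBlocks_smul, conjTranspose_neg, hr', conjTranspose_one]
      simp [hr, two_smul]
    rw [conjTranspose_submatrix]
    have h2 := (Matrix.PosDef.one (n := Fin m ⊕ Fin m) (R := ℂ)).smul (two_pos : (0 : ℂ) < 2)
    rw [← h1] at h2
    exact h2.submatrix (Equiv.injective _)
  · have h1 : (stdFrame m)ᴴ * stdForm (Fin m) * stdFrame m =
        Matrix.fromBlocks 0 ((2 : ℂ) • revMat m) ((2 : ℂ) • revMat m) 0 := by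
      rw [stdFrame, stdForm, fromBlocks_conjTranspose, fromBlocks_multiply, fromBlocks_multiply,
        conjTranspose_neg, hr', conjTranspose_one]
      simp [hr, two_smul]
    have h2 := congrFun (congrFun h1 (finSumFinEquiv.symm i)) (finSumFinEquiv.symm j)
    refine Eq.trans ?_ (h2.trans ?_)
    · rfl
    · obtain ⟨i, rfl⟩ := finSumFinEquiv.surjective i
      obtain ⟨j, rfl⟩ := finSumFinEquiv.surjective j
      rw [Equiv.symm_apply_apply, Equiv.symm_apply_apply]
      rcases i with i | i <;> rcases j with j | j
      · rfl
      · simp only [fromBlocks_apply₁₂, Matrix.smul_apply, revMat_apply]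
        rw [if_neg, smul_zero]
        rintro rfl
        simp at hij; omega
      · simp only [fromBlocks_apply₂₁, Matrix.smul_apply, revMat_apply]
        rw [if_neg, smul_zero]
        rintro rfl
        simp at hij; omega
      · rfl

lemma mem_isoTranslates_std {m : ℕ} {K L W : Matrix (Fin m) (Fin m) ℂ} (hK : IsUnit K)
    (hL : IsUnit L) (hW : W ∈ luSet m) (v : Matrix (Fin m) (Fin m) ℂ) :
    (Matrix.fromBlocks K (K * (v + (2 : ℂ) • (revMat m * W))) L (L * v)).submatrix id
      (finSumFinEquiv (m := m) (n := m)).symm ∈ isoTranslates (stdForm (Fin m)) 1 (m + m) := by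
  obtain ⟨A, B, hA, hB, hAB⟩ := hW
  set r := revMat m with hr
  have hrr : r * r = 1 := revMat_mul_self m
  have hru : IsUnit r := IsUnit.of_mul_eq_one _ hrr
  obtain ⟨b, hb⟩ : ∃ b, b = r * Aᵀ * r := ⟨_, rfl⟩
  have hbU : IsUpper b := by
    refine ⟨fun i j hij => ?_, ?_⟩
    · rw [hb, revMat_conj]
      exact hA.zero _ _ (Fin.rev_lt_rev.mpr hij)
    · rw [hb]
      exact (hru.mul ((Matrix.isUnit_transpose A).mpr hA.unit)).mul hru
  have hbi : b⁻¹ * b = 1 :=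
    Matrix.nonsing_inv_mul b ((Matrix.isUnit_iff_isUnit_det b).mp hbU.unit)
  have hbiu : IsUnit b⁻¹ := (Matrix.isUnit_nonsing_inv_iff).mpr hbU.unit
  refine ⟨Matrix.fromBlocks (K * b⁻¹) 0 0 (L * b⁻¹), _, ?_, ?_, Commute.one_left _,
    (isIsotropic_std m).mul_right (hbU.fromBlocks (b * (v + r * W)) hB), ?_⟩
  · rw [Matrix.isUnit_iff_isUnit_det, det_fromBlocks_zero₂₁]
    exact ((Matrix.isUnit_iff_isUnit_det _).mp (hK.mul hbiu)).mul
      ((Matrix.isUnit_iff_isUnit_det _).mp (hL.mul hbiu))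
  · rw [Commute, SemiconjBy, stdForm, fromBlocks_multiply, fromBlocks_multiply]
    simp
  · have h1 : b * (r * W) = r * B := by
      rw [hb, ← hAB, Matrix.mul_assoc _ r, ← Matrix.mul_assoc r r, hrr, Matrix.one_mul,
        Matrix.mul_assoc]
    have h2 : Matrix.fromBlocks (K * b⁻¹) 0 0 (L * b⁻¹) * (stdFrame m *
        Matrix.fromBlocks b (b * (v + r * W)) 0 B) =
        Matrix.fromBlocks K (K * (v + (2 : ℂ) • (r * W))) L (L * v) := by
      rw [stdFrame, ← hr, fromBlocks_multiply, fromBlocks_multiply]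
      simp only [Matrix.one_mul, Matrix.mul_zero, add_zero, Matrix.zero_mul, zero_add,
        Matrix.neg_mul, ← h1]
      rw [← Matrix.mul_add, ← sub_eq_add_neg, ← Matrix.mul_sub, Matrix.mul_assoc K,
        Matrix.mul_assoc K, Matrix.mul_assoc L, Matrix.mul_assoc L, ← Matrix.mul_assoc b⁻¹,
        ← Matrix.mul_assoc b⁻¹, hbi, Matrix.one_mul, Matrix.one_mul, Matrix.mul_one,
        Matrix.mul_one, add_assoc, two_smul, add_sub_cancel_right]
    rw [← h2, reindex_apply, submatrix_mul_equiv,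
      submatrix_mul _ _ id id _ Function.bijective_id, submatrix_id_id]

lemma dense_isoTranslates_std (m : ℕ) : Dense (isoTranslates (stdForm (Fin m)) 1 (m + m)) := by
  set G : Matrix (Fin m) (Fin m) ℂ → Matrix (Fin m) (Fin m) ℂ → Matrix (Fin m) (Fin m) ℂ →
      Matrix (Fin m) (Fin m) ℂ → Matrix (Fin m ⊕ Fin m) (Fin (m + m)) ℂ := fun A B C D =>
    (Matrix.fromBlocks A B C D).submatrix id (finSumFinEquiv (m := m) (n := m)).symm with hG
  have hu : ∀ A B C D, IsUnit A → IsUnit C →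
      G A B C D ∈ closure (isoTranslates (stdForm (Fin m)) 1 (m + m)) := by
    intro A B C D hA hC
    have hA' : A * A⁻¹ = 1 := Matrix.mul_nonsing_inv A ((Matrix.isUnit_iff_isUnit_det A).mp hA)
    have hC' : C * C⁻¹ = 1 := Matrix.mul_nonsing_inv C ((Matrix.isUnit_iff_isUnit_det C).mp hC)
    set v := C⁻¹ * D
    have h1 : Continuous (fun W => G A (A * (v + (2 : ℂ) • (revMat m * W))) C (C * v)) := by
      refine Continuous.matrix_submatrix (Continuous.matrix_fromBlocks continuous_const ?_
        continuous_const continuous_const) _ _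
      fun_prop
    have h2 := map_mem_closure h1 (dense_luSet m ((2 : ℂ)⁻¹ • (revMat m * (A⁻¹ * B - v))))
      fun W hW => mem_isoTranslates_std hA hC hW v
    have h3 : A * (v + (2 : ℂ) • (revMat m * ((2 : ℂ)⁻¹ • (revMat m * (A⁻¹ * B - v))))) = B := by
      rw [Matrix.mul_smul, smul_smul, mul_inv_cancel₀ two_ne_zero, one_smul, ← Matrix.mul_assoc,
        revMat_mul_self, Matrix.one_mul, add_sub_cancel, ← Matrix.mul_assoc, hA', Matrix.one_mul]
    have h4 : C * v = D := by rw [← Matrix.mul_assoc, hC', Matrix.one_mul]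
    rwa [h3, h4] at h2
  intro X
  set Y := X.submatrix id (finSumFinEquiv (m := m) (n := m)) with hY
  have hX : X = G Y.toBlocks₁₁ Y.toBlocks₁₂ Y.toBlocks₂₁ Y.toBlocks₂₂ := by
    rw [hG]; simp only [fromBlocks_toBlocks, hY, submatrix_submatrix]
    simp
  have hcont : Continuous (fun Z : Matrix (Fin m) (Fin m) ℂ × Matrix (Fin m) (Fin m) ℂ =>
      G Z.1 Y.toBlocks₁₂ Z.2 Y.toBlocks₂₂) :=
    Continuous.matrix_submatrix (Continuous.matrix_fromBlocks continuous_fst continuous_const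
      continuous_snd continuous_const) _ _
  have h1 := map_mem_closure (t := closure (isoTranslates (stdForm (Fin m)) 1 (m + m))) hcont
    (((dense_isUnit m).prod (dense_isUnit m)) (Y.toBlocks₁₁, Y.toBlocks₂₁))
    fun Z hZ => hu _ _ _ _ hZ.1 hZ.2
  rw [closure_closure] at h1
  rw [hX]
  exact h1

lemma mem_closure_isoTranslates {ι : Type*} [Fintype ι] [DecidableEq ι] {m : ℕ}
    {J E : Matrix ι ι ℂ} (hJ : Jᴴ = J) {V : Matrix ι (Fin m ⊕ Fin m) ℂ} (hV : Vᴴ * V = 1)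
    (hVE : V * Vᴴ = E) (hJV : J * V = V * stdForm (Fin m)) {k : Matrix ι (Fin (m + m)) ℂ}
    (hk : E * k = k) : k ∈ closure (isoTranslates J E (m + m)) := by
  have hVJ : Vᴴ * J = stdForm (Fin m) * Vᴴ := by
    have := congrArg conjTranspose hJV
    rw [conjTranspose_mul, conjTranspose_mul, hJ] at this
    rw [this]; simp [stdForm, fromBlocks_conjTranspose]
  have hEV : E * V = V := by rw [← hVE, Matrix.mul_assoc, hV, Matrix.mul_one]
  have hVE' : Vᴴ * E = Vᴴ := by rw [← hVE, ← Matrix.mul_assoc, hV, Matrix.one_mul]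
  have hEE : E * E = E := by nth_rewrite 1 [← hVE]; rw [Matrix.mul_assoc, hVE', hVE]
  have hEc : (1 - E) * (1 - E) = 1 - E := by
    rw [Matrix.mul_sub, Matrix.mul_one, Matrix.sub_mul, Matrix.one_mul, hEE, sub_self, sub_zero]
  have hcomm : ∀ g, Commute (stdForm (Fin m)) g → Commute J (V * g * Vᴴ) := by
    intro g hg
    rw [Commute, SemiconjBy, Matrix.mul_assoc (V * g), hVJ, ← Matrix.mul_assoc, ← Matrix.mul_assoc,
      hJV, Matrix.mul_assoc V, hg.eq]
    simp only [Matrix.mul_assoc]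
  have hJE : Commute J E := by
    have := hcomm 1 (Commute.one_right _)
    rwa [Matrix.mul_one, hVE] at this
  have h1 : Continuous (fun X : Matrix (Fin m ⊕ Fin m) (Fin (m + m)) ℂ => V * X) := by fun_prop
  have h2 := map_mem_closure (t := isoTranslates J E (m + m)) h1
    (dense_isoTranslates_std m (Vᴴ * k))
    (by
      rintro _ ⟨g, b, hg, hgJ, -, hb, rfl⟩
      have hmul : ∀ a b : Matrix (Fin m ⊕ Fin m) (Fin m ⊕ Fin m) ℂ, a * b = 1 →
          (V * a * Vᴴ + (1 - E)) * (V * b * Vᴴ + (1 - E)) = 1 := by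
        intro a b hab
        have e1 : V * a * Vᴴ * (1 - E) = 0 := by
          rw [Matrix.mul_assoc, Matrix.mul_sub, Matrix.mul_one, hVE', sub_self, Matrix.mul_zero]
        have e2 : (1 - E) * (V * b * Vᴴ) = 0 := by
          rw [← Matrix.mul_assoc, ← Matrix.mul_assoc, Matrix.sub_mul, Matrix.one_mul, hEV, sub_self,
            Matrix.zero_mul, Matrix.zero_mul]
        have e3 : V * a * Vᴴ * (V * b * Vᴴ) = E := by
          calc _ = V * (a * (Vᴴ * V) * b) * Vᴴ := by simp only [Matrix.mul_assoc]
            _ = E := by rw [hV, Matrix.mul_one, hab, Matrix.mul_one, hVE]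
        rw [Matrix.add_mul, Matrix.mul_add, Matrix.mul_add, e1, e2, e3, hEc]
        abel
      refine ⟨V * g * Vᴴ + (1 - E), V * b, ?_, ?_, ?_, ⟨?_, ?_, fun i j hij => ?_⟩, ?_⟩
      · exact IsUnit.of_mul_eq_one _ (hmul g g⁻¹ (Matrix.mul_nonsing_inv g
          ((Matrix.isUnit_iff_isUnit_det g).mp hg)))
      · exact (hcomm g hgJ).add_right ((Commute.one_right _).sub_right hJE)
      · refine Commute.add_right ?_ ((Commute.one_right _).sub_right (Commute.refl E))
        rw [Commute, SemiconjBy, Matrix.mul_assoc (V * g), hVE', ← Matrix.mul_assoc,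
          ← Matrix.mul_assoc, hEV]
      · rw [conjTranspose_mul, Matrix.mul_assoc, ← Matrix.mul_assoc Vᴴ, hV, Matrix.one_mul]
        exact hb.posDef
      · rw [← Matrix.mul_assoc, hEV]
      · have : (V * b)ᴴ * J * (V * b) = bᴴ * stdForm (Fin m) * b := by
          calc _ = bᴴ * (Vᴴ * J * V) * b := by
                rw [conjTranspose_mul]; simp only [Matrix.mul_assoc]
            _ = _ := by rw [hVJ, Matrix.mul_assoc _ Vᴴ, hV, Matrix.mul_one]
        rw [this]
        exact hb.isotropic i j hij
      · rw [Matrix.add_mul, ← Matrix.mul_assoc (1 - E), Matrix.sub_mul, Matrix.one_mul, hEV,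
          sub_self, Matrix.zero_mul, add_zero, Matrix.mul_assoc (V * g), ← Matrix.mul_assoc Vᴴ, hV,
          Matrix.one_mul, Matrix.mul_assoc])
  rwa [← Matrix.mul_assoc, hVE, hk] at h2

end Density

section Spectra

open Polynomial

/-- The monic polynomial with prescribed real roots. -/
noncomputable def charOf {m : ℕ} (w : Fin m → ℝ) : ℂ[X] := ∏ i, (X - C (w i : ℂ))

lemma charOf_injOn {m : ℕ} {v w : Fin m → ℝ} (hv : Antitone v) (hw : Antitone w)
    (h : charOf v = charOf w) : v = w := by
  have h1 : ∀ u : Fin m → ℝ, (charOf u).roots = Finset.univ.val.map fun i => (u i : ℂ) := by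
    intro u
    have := Polynomial.roots_multiset_prod_X_sub_C (Finset.univ.val.map fun i => (u i : ℂ))
    rw [Multiset.map_map] at this
    exact this
  have h2 : Finset.univ.val.map v = Finset.univ.val.map w := by
    apply Multiset.map_injective Complex.ofReal_injective
    rw [Multiset.map_map, Multiset.map_map]
    have := h1 v
    rw [h, h1 w] at this
    exact this.symm
  have h3 : ∀ u : Fin m → ℝ, Finset.univ.val.map u = (List.ofFn u : Multiset ℝ) := by
    intro u
    rw [Fin.univ_val_map]
  rw [h3, h3, Multiset.coe_eq_coe] at h2
  refine List.ofFn_injective (h2.eq_of_pairwise' (r := (· ≥ ·)) ?_ ?_)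
  · exact hv.sortedGE_ofFn.pairwise
  · exact hw.sortedGE_ofFn.pairwise

lemma antitone_eigVec {k : ℕ} (M : Matrix (Fin k) (Fin k) ℂ) (hM : M.IsHermitian) :
    Antitone (eigVec M hM) := fun _ _ hij =>
  Tuple.monotone_sort hM.eigenvalues (Fin.rev_le_rev.mpr hij)

lemma charOf_eigVec {k : ℕ} (M : Matrix (Fin k) (Fin k) ℂ) (hM : M.IsHermitian) :
    charOf (eigVec M hM) = M.charpoly := by
  rw [hM.charpoly_eq]
  exact Equiv.prod_comp (Fin.revPerm.trans (Tuple.sort hM.eigenvalues))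
    fun i => X - C (hM.eigenvalues i : ℂ)

lemma eq_eigVec_iff {k : ℕ} {w : Fin k → ℝ} (hw : Antitone w) {M : Matrix (Fin k) (Fin k) ℂ}
    (hM : M.IsHermitian) : w = eigVec M hM ↔ M.charpoly = charOf w := by
  rw [← charOf_eigVec M hM]
  exact ⟨fun h => by rw [← h], fun h => (charOf_injOn (antitone_eigVec M hM) hw h).symm⟩

section Spec

variable {κ : Type*} [Fintype κ] [DecidableEq κ] {m : ℕ}

lemma charpoly_spec {U : Matrix κ (Fin m) ℂ} (hU : Uᴴ * U = 1) (hU' : U * Uᴴ = 1)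
    (w : Fin m → ℝ) : (spec w U).charpoly = charOf w := by
  have hcard : Fintype.card κ = Fintype.card (Fin m) := by
    have h := Matrix.trace_mul_comm U Uᴴ
    rw [hU, hU', Matrix.trace_one, Matrix.trace_one] at h
    exact_mod_cast h
  have h := Matrix.charpoly_mul_comm' (U * diagonal (fun i => (w i : ℂ))) Uᴴ
  rw [hcard, ← Matrix.mul_assoc, hU, Matrix.one_mul, Matrix.charpoly_diagonal] at h
  exact mul_left_cancel₀ (pow_ne_zero _ X_ne_zero) h

lemma spec_rev (w : Fin m → ℝ) (hw : ∀ i, w i.rev = -w i) (U : Matrix κ (Fin m) ℂ) :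
    spec w (U.submatrix id Fin.rev) = -spec w U := by
  ext a b
  rw [Matrix.neg_apply, spec, spec, Matrix.mul_apply, Matrix.mul_apply, ← Finset.sum_neg_distrib,
    ← Equiv.sum_comp Fin.revPerm]
  refine Finset.sum_congr rfl fun i _ => ?_
  rw [Matrix.mul_diagonal, Matrix.mul_diagonal, Fin.revPerm_apply, hw]
  simp [Matrix.conjTranspose_apply]

lemma isometry_rev {U : Matrix κ (Fin m) ℂ} (hU : Uᴴ * U = 1) (hU' : U * Uᴴ = 1) :
    (U.submatrix id Fin.rev)ᴴ * U.submatrix id Fin.rev = 1 ∧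
      U.submatrix id Fin.rev * (U.submatrix id Fin.rev)ᴴ = 1 := by
  constructor
  · rw [Matrix.conjTranspose_submatrix, ← Matrix.submatrix_mul _ _ _ _ _ Function.bijective_id, hU]
    exact Matrix.submatrix_one _ Fin.rev_injective
  · rw [Matrix.conjTranspose_submatrix, ← Matrix.submatrix_mul _ _ _ _ _ Fin.rev_bijective, hU']
    exact Matrix.submatrix_one _ Function.injective_id

lemma charpoly_neg_spec {U : Matrix κ (Fin m) ℂ} (hU : Uᴴ * U = 1) (hU' : U * Uᴴ = 1)
    {w : Fin m → ℝ} (hw : ∀ i, w i.rev = -w i) : (-spec w U).charpoly = charOf w := by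
  rw [← spec_rev w hw]
  exact charpoly_spec (isometry_rev hU hU').1 (isometry_rev hU hU').2 w

lemma exists_spec (e : κ ≃ Fin m) {M : Matrix κ κ ℂ} (hM : M.IsHermitian) {w : Fin m → ℝ}
    (hw : Antitone w) (h : M.charpoly = charOf w) :
    ∃ U : Matrix κ (Fin m) ℂ, Uᴴ * U = 1 ∧ U * Uᴴ = 1 ∧ M = spec w U := by
  have hM' : (Matrix.reindex e e M).IsHermitian := hM.submatrix e.symm
  rw [← Matrix.charpoly_reindex e, ← eq_eigVec_iff hw hM'] at h
  obtain ⟨V, hV, hV', hVd⟩ := exists_unitary_diagonal hM'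
  have hσ : ∃ σ : Equiv.Perm (Fin m), w = hM'.eigenvalues ∘ σ :=
    ⟨Fin.revPerm.trans (Tuple.sort hM'.eigenvalues), h⟩
  obtain ⟨σ, rfl⟩ := hσ
  refine ⟨V.submatrix e σ, ?_, ?_, ?_⟩
  · rw [Matrix.conjTranspose_submatrix, ← Matrix.submatrix_mul _ _ _ _ _ e.bijective, hV]
    exact Matrix.submatrix_one _ σ.injective
  · rw [Matrix.conjTranspose_submatrix, ← Matrix.submatrix_mul _ _ _ _ _ σ.bijective, hV']
    exact Matrix.submatrix_one _ e.injective
  · have h1 : M = (Matrix.reindex e e M).submatrix e e := by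
      ext a b; simp
    have h2 : (diagonal fun i => ((hM'.eigenvalues ∘ σ) i : ℂ)) =
        (diagonal fun i => (hM'.eigenvalues i : ℂ)).submatrix σ σ :=
      (Matrix.submatrix_diagonal (fun i => (hM'.eigenvalues i : ℂ)) _ σ.injective).symm
    refine h1.trans ((congrArg (fun Y => Y.submatrix e e) hVd).trans ?_)
    rw [spec, h2, Matrix.conjTranspose_submatrix,
      ← Matrix.submatrix_mul _ _ _ _ _ σ.bijective, ← Matrix.submatrix_mul _ _ _ _ _ σ.bijective]

lemma exists_neg_spec (e : κ ≃ Fin m) {M : Matrix κ κ ℂ} (hM : M.IsHermitian) {w : Fin m → ℝ}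
    (hw : Antitone w) (hw' : ∀ i, w i.rev = -w i) (h : M.charpoly = charOf w) :
    ∃ U : Matrix κ (Fin m) ℂ, Uᴴ * U = 1 ∧ U * Uᴴ = 1 ∧ -M = spec w U := by
  obtain ⟨U, hU, hU', rfl⟩ := exists_spec e hM hw h
  exact ⟨U.submatrix id Fin.rev, (isometry_rev hU hU').1, (isometry_rev hU hU').2,
    (spec_rev w hw' U).symm⟩

end Spec

lemma charpoly_fromBlocks_zero_zero {ν : Type*} [Fintype ν] [DecidableEq ν] (A B : Matrix ν ν ℂ) :
    (fromBlocks 0 A B 0).charpoly = expand ℂ 2 (A * B).charpoly := by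
  have h1 : fromBlocks ((X : ℂ[X]) • (1 : Matrix ν ν ℂ[X])) (A.map C) 0 1 *
      (fromBlocks 0 A B 0).charmatrix =
      fromBlocks ((X ^ 2 : ℂ[X]) • (1 : Matrix ν ν ℂ[X]) - (A * B).map C) 0 (-B.map C)
        ((X : ℂ[X]) • (1 : Matrix ν ν ℂ[X])) := by
    rw [Matrix.charmatrix_fromBlocks, Matrix.charmatrix_zero, Matrix.fromBlocks_multiply,
      Matrix.map_mul, Matrix.scalar_apply, ← Matrix.smul_one_eq_diagonal]
    congr 1 <;> simp [pow_two, smul_smul, sub_eq_add_neg]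
  have h2 : ((X ^ 2 : ℂ[X]) • (1 : Matrix ν ν ℂ[X]) - (A * B).map C).det =
      expand ℂ 2 (A * B).charpoly := by
    rw [Matrix.charpoly, AlgHom.map_det]
    congr 1
    ext i j : 2
    by_cases hij : i = j
    · subst hij; simp [-Matrix.map_mul]
    · simp [-Matrix.map_mul, hij]
  have h3 := congrArg Matrix.det h1
  rw [Matrix.det_mul, Matrix.det_fromBlocks_zero₂₁, Matrix.det_fromBlocks_zero₁₂, h2,
    Matrix.det_one, mul_one, Matrix.det_smul, Matrix.det_one, mul_one, mul_comm] at h3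
  exact mul_right_cancel₀ (pow_ne_zero _ X_ne_zero) h3

section Hat

variable {n : ℕ} (γ : Fin n → ℝ)

lemma hatPQ_castAdd (i : Fin n) : hatPQ n n γ (Fin.castAdd n i) = γ i := by
  simp [hatPQ]

lemma hatPQ_natAdd (i : Fin n) : hatPQ n n γ (Fin.natAdd n i) = -γ i.rev := by
  have h : n + n - 1 - (n + (i : ℕ)) = i.rev := by rw [Fin.val_rev]; omega
  simp only [hatPQ, Fin.val_natAdd, h]
  rw [dif_neg (by omega), dif_neg (by omega)]

lemma hatPQ_rev (i : Fin (n + n)) : hatPQ n n γ i.rev = -hatPQ n n γ i := by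
  have h : ∀ i : Fin n, (Fin.castAdd n i).rev = Fin.natAdd n i.rev := fun i => by
    ext; simp only [Fin.val_rev, Fin.val_castAdd, Fin.val_natAdd]; omega
  induction i using Fin.addCases with
  | left i => rw [h, hatPQ_natAdd, hatPQ_castAdd, Fin.rev_rev]
  | right i =>
    rw [← Fin.rev_rev i, ← h, Fin.rev_rev, h, hatPQ_natAdd, hatPQ_castAdd, neg_neg, Fin.rev_rev]

variable {γ}

lemma antitone_hatPQ (hγ : Antitone γ) (h0 : ∀ i, 0 ≤ γ i) : Antitone (hatPQ n n γ) := by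
  intro i j hij
  induction i using Fin.addCases with
  | left i =>
    induction j using Fin.addCases with
    | left j =>
      rw [hatPQ_castAdd, hatPQ_castAdd]
      exact hγ hij
    | right j =>
      rw [hatPQ_castAdd, hatPQ_natAdd]
      linarith [h0 i, h0 j.rev]
  | right i =>
    induction j using Fin.addCases with
    | left j =>
      rw [Fin.le_def, Fin.val_natAdd, Fin.val_castAdd] at hij
      omega
    | right j =>
      rw [hatPQ_natAdd, hatPQ_natAdd, neg_le_neg_iff]
      exact hγ (Fin.rev_le_rev.mpr (by simpa using hij))

lemma charOf_hatPQ (γ : Fin n → ℝ) :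
    charOf (hatPQ n n γ) = expand ℂ 2 (charOf fun i => γ i ^ 2) := by
  rw [charOf, Fin.prod_univ_add, charOf, map_prod]
  simp only [hatPQ_castAdd, hatPQ_natAdd, ← Fin.revPerm_apply]
  rw [Equiv.prod_comp Fin.revPerm fun i => X - C ((-γ i : ℝ) : ℂ), ← Finset.prod_mul_distrib]
  refine Finset.prod_congr rfl fun i _ => ?_
  rw [map_sub, expand_X, expand_C]
  push_cast
  rw [C_neg, C_pow]
  ring

lemma eq_sval_iff (hγ : Antitone γ) (h0 : ∀ i, 0 ≤ γ i) (M : Matrix (Fin n) (Fin n) ℂ) :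
    (∀ i : Fin n, γ i = sval M i) ↔ (fromBlocks 0 M Mᴴ 0).charpoly = charOf (hatPQ n n γ) := by
  rw [charpoly_fromBlocks_zero_zero, charOf_hatPQ, expand_inj two_pos,
    ← eq_eigVec_iff (fun i j hij => pow_le_pow_left₀ (h0 j) (hγ hij) 2)
      (Matrix.isHermitian_mul_conjTranspose_self M), funext_iff]
  refine forall_congr' fun i => ?_
  have h1 : 0 ≤ eigVec (M * Mᴴ) (Matrix.isHermitian_mul_conjTranspose_self M) i :=
    (Matrix.posSemidef_self_mul_conjTranspose M).eigenvalues_nonneg _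
  rw [sval, dif_pos i.isLt, eq_comm, Real.sqrt_eq_iff_eq_sq h1 (h0 i), eq_comm]

end Hat

end Spectra

section Core

variable (p q : ℕ)

/-- The sizes of a square matrix and of its two diagonal blocks. -/
def halfSize : Fin 3 → ℕ
  | 0 => p + q
  | 1 => p
  | 2 => q

/-- The positions of the rows of a square matrix and of its two diagonal blocks. -/
def incl : ∀ τ, Fin (halfSize p q τ) → Fin p ⊕ Fin q
  | 0 => finSumFinEquiv.symm
  | 1 => Sum.inl
  | 2 => Sum.inr

lemma incl_injective : ∀ τ, Function.Injective (incl p q τ)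
  | 0 => finSumFinEquiv.symm.injective
  | 1 => Sum.inl_injective
  | 2 => Sum.inr_injective

/-- The positions of the rows in the augmented matrices. -/
def inclDouble (τ : Fin 3) :
    Fin (halfSize p q τ) ⊕ Fin (halfSize p q τ) → (Fin p ⊕ Fin q) ⊕ (Fin p ⊕ Fin q) :=
  Sum.map (incl p q τ) (incl p q τ)

lemma inclDouble_injective (τ : Fin 3) : Function.Injective (inclDouble p q τ) :=
  (incl_injective p q τ).sumMap (incl_injective p q τ)

/-- The matrix of the coordinate inclusion. -/
def frame (τ : Fin 3) : Matrix ((Fin p ⊕ Fin q) ⊕ (Fin p ⊕ Fin q))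
    (Fin (halfSize p q τ) ⊕ Fin (halfSize p q τ)) ℂ :=
  (1 : Matrix _ _ ℂ).submatrix id (inclDouble p q τ)

variable {p q}

lemma frame_conj (τ : Fin 3)
    (N : Matrix ((Fin p ⊕ Fin q) ⊕ (Fin p ⊕ Fin q)) ((Fin p ⊕ Fin q) ⊕ (Fin p ⊕ Fin q)) ℂ) :
    (frame p q τ)ᴴ * N * frame p q τ = N.submatrix (inclDouble p q τ) (inclDouble p q τ) := by
  rw [frame, Matrix.conjTranspose_submatrix, Matrix.conjTranspose_one]
  nth_rewrite 1 [← Matrix.submatrix_id_id N]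
  rw [← Matrix.submatrix_mul _ _ _ _ _ Function.bijective_id, Matrix.one_mul,
    ← Matrix.submatrix_mul _ _ _ _ _ Function.bijective_id, Matrix.mul_one]

lemma frame_isometry (τ : Fin 3) : (frame p q τ)ᴴ * frame p q τ = 1 := by
  have h := frame_conj τ (1 : Matrix ((Fin p ⊕ Fin q) ⊕ (Fin p ⊕ Fin q)) _ ℂ)
  rwa [Matrix.mul_one, Matrix.submatrix_one _ (inclDouble_injective p q τ)] at h

lemma frame_eq_fromBlocks (τ : Fin 3) :
    frame p q τ = fromBlocks ((1 : Matrix _ _ ℂ).submatrix id (incl p q τ)) 0 0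
      ((1 : Matrix _ _ ℂ).submatrix id (incl p q τ)) := by
  ext a b
  rcases a with a | a <;> rcases b with b | b <;> simp [frame, inclDouble, Matrix.one_apply]

lemma stdForm_mul_frame (τ : Fin 3) :
    stdForm (Fin p ⊕ Fin q) * frame p q τ = frame p q τ * stdForm (Fin (halfSize p q τ)) := by
  rw [frame_eq_fromBlocks, stdForm, stdForm, Matrix.fromBlocks_multiply,
    Matrix.fromBlocks_multiply]
  simp

variable (p q)

/-- The projection onto the rows of the first diagonal block. -/
def fstProj : Matrix ((Fin p ⊕ Fin q) ⊕ (Fin p ⊕ Fin q)) ((Fin p ⊕ Fin q) ⊕ (Fin p ⊕ Fin q)) ℂ :=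
  fromBlocks (fromBlocks 1 0 0 0) 0 0 (fromBlocks 1 0 0 0)

lemma frame_mul_conjTranspose_of_incl (τ : Fin 3) {E : Matrix (Fin p ⊕ Fin q) (Fin p ⊕ Fin q) ℂ}
    (h : (1 : Matrix _ _ ℂ).submatrix id (incl p q τ) *
      (1 : Matrix _ _ ℂ).submatrix (incl p q τ) id = E) :
    frame p q τ * (frame p q τ)ᴴ = fromBlocks E 0 0 E := by
  rw [frame_eq_fromBlocks, Matrix.fromBlocks_conjTranspose, Matrix.fromBlocks_multiply,
    Matrix.conjTranspose_submatrix, Matrix.conjTranspose_one, h]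
  simp

lemma submatrix_inl_mul {α β : Type*} [Fintype α] [DecidableEq α] [DecidableEq β] :
    (1 : Matrix (α ⊕ β) (α ⊕ β) ℂ).submatrix id Sum.inl *
      (1 : Matrix (α ⊕ β) (α ⊕ β) ℂ).submatrix Sum.inl id = fromBlocks 1 0 0 0 := by
  ext a b
  rcases a with a | a <;> rcases b with b | b <;> simp [Matrix.mul_apply, Matrix.one_apply]

lemma submatrix_inr_mul {α β : Type*} [Fintype β] [DecidableEq α] [DecidableEq β] :
    (1 : Matrix (α ⊕ β) (α ⊕ β) ℂ).submatrix id Sum.inr *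
      (1 : Matrix (α ⊕ β) (α ⊕ β) ℂ).submatrix Sum.inr id = fromBlocks 0 0 0 1 := by
  ext a b
  rcases a with a | a <;> rcases b with b | b <;> simp [Matrix.mul_apply, Matrix.one_apply]

lemma frame_zero : frame p q 0 * (frame p q 0)ᴴ = 1 := by
  rw [frame_mul_conjTranspose_of_incl p q 0 (E := 1), Matrix.fromBlocks_one]
  rw [← Matrix.submatrix_mul _ _ _ _ _ (show Function.Bijective (incl p q 0) from
    finSumFinEquiv.symm.bijective), Matrix.one_mul, Matrix.submatrix_id_id]

lemma frame_one : frame p q 1 * (frame p q 1)ᴴ = fstProj p q :=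
  frame_mul_conjTranspose_of_incl p q 1 submatrix_inl_mul

lemma frame_two : frame p q 2 * (frame p q 2)ᴴ = 1 - fstProj p q :=
  (frame_mul_conjTranspose_of_incl p q 2 (E := fromBlocks 0 0 0 1) submatrix_inr_mul).trans (by
    rw [fstProj, eq_sub_iff_add_eq]
    simp [Matrix.fromBlocks_add])

/-- The multiplicities of the first block in the whole matrix and in its two blocks. -/
def fstMult : Fin 3 → ℝ
  | 0 => 1
  | 1 => 1
  | 2 => 0

/-- The multiplicities of the second block in the whole matrix and in its two blocks. -/
def sndMult : Fin 3 → ℝ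
  | 0 => 1
  | 1 => 0
  | 2 => 1

lemma frame_mul_conjTranspose (τ : Fin 3) : frame p q τ * (frame p q τ)ᴴ =
    (fstMult τ : ℂ) • fstProj p q + (sndMult τ : ℂ) • (1 - fstProj p q) := by
  match τ with
  | 0 => rw [frame_zero]; simp [fstMult, sndMult]
  | 1 => rw [frame_one]; simp [fstMult, sndMult]
  | 2 => rw [frame_two]; simp [fstMult, sndMult]

variable {p q}

/-- The flag system whose solutions are augmented matrices with prescribed singular values. -/
noncomputable def system (u : ∀ τ, Fin (halfSize p q τ) → ℝ) (hu : ∀ τ, Antitone (u τ))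
    (hu0 : ∀ τ i, 0 ≤ u τ i) : FlagSystem ((Fin p ⊕ Fin q) ⊕ (Fin p ⊕ Fin q)) (Fin 3) where
  form := stdForm (Fin p ⊕ Fin q)
  form_herm := by simp [stdForm, Matrix.fromBlocks_conjTranspose]
  form_sq := by simp [stdForm, Matrix.fromBlocks_multiply]
  proj := fstProj p q
  proj_idem := by simp [fstProj, Matrix.fromBlocks_multiply]
  proj_herm := by simp [fstProj, Matrix.fromBlocks_conjTranspose]
  comm := by simp [Commute, SemiconjBy, stdForm, fstProj, Matrix.fromBlocks_multiply]
  fst := fstMult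
  fst_idem τ := by match τ with | 0 | 1 | 2 => simp [fstMult]
  snd := sndMult
  snd_idem τ := by match τ with | 0 | 1 | 2 => simp [sndMult]
  size τ := halfSize p q τ + halfSize p q τ
  trace_eq τ := by
    rw [← frame_mul_conjTranspose, Matrix.trace_mul_comm, frame_isometry, Matrix.trace_one]
    simp
  wt τ := hatPQ _ _ (u τ)
  wt_antitone τ := antitone_hatPQ (hu τ) (hu0 τ)
  wt_rev τ := hatPQ_rev (u τ)

lemma spec_mul_left {ι κ : Type*} [Fintype ι] [DecidableEq ι] [Fintype κ] [DecidableEq κ] {m : ℕ}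
    (w : Fin m → ℝ) (V : Matrix ι κ ℂ) (U : Matrix κ (Fin m) ℂ) :
    spec w (V * U) = V * spec w U * Vᴴ := by
  simp only [spec, Matrix.conjTranspose_mul, Matrix.mul_assoc]

lemma spec_isHermitian {ι : Type*} [Fintype ι] [DecidableEq ι] {m : ℕ} (w : Fin m → ℝ)
    (U : Matrix ι (Fin m) ℂ) : (spec w U).IsHermitian := by
  have h : (diagonal fun i => (w i : ℂ))ᴴ = diagonal fun i => (w i : ℂ) := by
    rw [diagonal_conjTranspose]; congr 1; ext i; simp
  rw [Matrix.IsHermitian, spec, Matrix.conjTranspose_mul, Matrix.conjTranspose_mul, h,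
    Matrix.conjTranspose_conjTranspose, Matrix.mul_assoc]

lemma eq_fromBlocks_of_anticommute {ν : Type*} [Fintype ν] [DecidableEq ν]
    {N : Matrix (ν ⊕ ν) (ν ⊕ ν) ℂ} (hN : N.IsHermitian) (h : stdForm ν * N * stdForm ν = -N) :
    N = fromBlocks 0 N.toBlocks₁₂ N.toBlocks₁₂ᴴ 0 := by
  have h0 : ∀ A : Matrix ν ν ℂ, A = -A → A = 0 := fun A hA => by
    ext i j; exact self_eq_neg.mp (congrFun (congrFun hA i) j)
  rw [← Matrix.fromBlocks_toBlocks N] at h hN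
  rw [stdForm, Matrix.fromBlocks_multiply, Matrix.fromBlocks_multiply, Matrix.fromBlocks_neg,
    Matrix.fromBlocks_inj] at h
  rw [Matrix.isHermitian_fromBlocks_iff] at hN
  simp only [Matrix.one_mul, Matrix.mul_one, Matrix.zero_mul, Matrix.mul_zero, add_zero, zero_add,
    Matrix.neg_mul, Matrix.mul_neg, neg_neg] at h
  nth_rewrite 1 [← Matrix.fromBlocks_toBlocks N]
  rw [h0 _ h.1, h0 _ h.2.2.2, hN.2.1]

lemma exists_fromBlocks {u : ∀ τ, Fin (halfSize p q τ) → ℝ} (hu : ∀ τ, Antitone (u τ))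
    (hu0 : ∀ τ i, 0 ≤ u τ i)
    {N : Matrix ((Fin p ⊕ Fin q) ⊕ (Fin p ⊕ Fin q)) ((Fin p ⊕ Fin q) ⊕ (Fin p ⊕ Fin q)) ℂ}
    (hN : N.IsHermitian)
    (h : ∀ τ, (N.submatrix (inclDouble p q τ) (inclDouble p q τ)).charpoly =
      charOf (hatPQ (halfSize p q τ) (halfSize p q τ) (u τ))) :
    ∃ M : Matrix (Fin p ⊕ Fin q) (Fin p ⊕ Fin q) ℂ, ∀ τ,
      ((fromBlocks 0 M Mᴴ 0).submatrix (inclDouble p q τ) (inclDouble p q τ)).charpoly =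
        charOf (hatPQ (halfSize p q τ) (halfSize p q τ) (u τ)) := by
  set F := system u hu hu0 with hF
  have hw := F.wt_antitone
  have hw' := F.wt_rev
  have hS : ∀ τ, F.supp τ = frame p q τ * (frame p q τ)ᴴ := fun τ =>
    (frame_mul_conjTranspose p q τ).symm
  set ε : Fin 3 → ℂ := ![1, -1, -1] with hε
  have hU : ∀ τ, ∃ U : Matrix _ (Fin (F.size τ)) ℂ, Uᴴ * U = 1 ∧ U * Uᴴ = 1 ∧
      ε τ • ((frame p q τ)ᴴ * N * frame p q τ) = spec (F.wt τ) U := by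
    intro τ
    have hh : (N.submatrix (inclDouble p q τ) (inclDouble p q τ)).IsHermitian := hN.submatrix _
    have h1 := exists_spec finSumFinEquiv hh (hw τ) (h τ)
    have h2 := exists_neg_spec finSumFinEquiv hh (hw τ) (hw' τ) (h τ)
    rw [frame_conj]
    match τ with
    | 0 => rw [show ε 0 = 1 from rfl, one_smul]; exact h1
    | 1 => rw [show ε 1 = -1 from rfl, neg_one_smul]; exact h2
    | 2 => rw [show ε 2 = -1 from rfl, neg_one_smul]; exact h2
  choose U hUi hUi' hUs using hU
  have hk0 : F.weights.blk (∑ τ, spec (F.wt τ) (frame p q τ * U τ)) = 0 := by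
    have h1 : ∑ τ, spec (F.wt τ) (frame p q τ * U τ) = N - F.weights.blk N := by
      have h2 : ∀ τ, spec (F.wt τ) (frame p q τ * U τ) = ε τ • (F.supp τ * N * F.supp τ) := by
        intro τ
        rw [spec_mul_left, ← hUs, hS, Matrix.mul_smul, Matrix.smul_mul]
        simp only [Matrix.mul_assoc]
      rw [Finset.sum_congr rfl fun τ _ => h2 τ, Fin.sum_univ_three, hS, hS, hS, frame_zero,
        frame_one, frame_two]
      have h3 : F.weights.blk N = fstProj p q * N * fstProj p q +
        (1 - fstProj p q) * N * (1 - fstProj p q) := rfl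
      rw [h3]
      simp [hε]
      abel
    rw [h1, F.weights.blk_sub, F.weights.blk_of_commute (F.weights.commute_blk N), sub_self]
  have hSk : ∀ τ, ∀ Y : Matrix (Fin (halfSize p q τ) ⊕ Fin (halfSize p q τ)) (Fin (F.size τ)) ℂ,
      F.supp τ * (frame p q τ * Y) = frame p q τ * Y := fun τ Y => by
    rw [hS, Matrix.mul_assoc, ← Matrix.mul_assoc (frame p q τ)ᴴ, frame_isometry, Matrix.one_mul]
  obtain ⟨Q, hQ, hQ0⟩ := F.exists_solution (k := fun τ => frame p q τ * U τ)
    (fun τ => by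
      rw [Matrix.conjTranspose_mul, Matrix.mul_assoc, ← Matrix.mul_assoc (frame p q τ)ᴴ,
        frame_isometry, Matrix.one_mul, hUi])
    (fun τ => by
      rw [Matrix.conjTranspose_mul, Matrix.mul_assoc, ← Matrix.mul_assoc (U τ), hUi',
        Matrix.one_mul, hS])
    (fun τ => mem_closure_isoTranslates F.form_herm (frame_isometry τ) (hS τ).symm
      (stdForm_mul_frame τ) (hSk τ (U τ)))
    hk0
  have hQs : ∀ τ, (frame p q τ)ᴴ * spec (F.wt τ) (Q τ) * frame p q τ =
      spec (F.wt τ) ((frame p q τ)ᴴ * Q τ) := fun τ => by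
    rw [spec_mul_left, Matrix.conjTranspose_conjTranspose]
  have hV : ∀ τ, ((frame p q τ)ᴴ * Q τ)ᴴ * ((frame p q τ)ᴴ * Q τ) = 1 := fun τ => by
    rw [Matrix.conjTranspose_mul, Matrix.conjTranspose_conjTranspose, Matrix.mul_assoc,
      ← Matrix.mul_assoc (frame p q τ), ← hS, ← (hQ τ).2.1, Matrix.mul_assoc, (hQ τ).1,
      Matrix.mul_one, (hQ τ).1]
  have hV' : ∀ τ, ((frame p q τ)ᴴ * Q τ) * ((frame p q τ)ᴴ * Q τ)ᴴ = 1 := fun τ => by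
    rw [Matrix.conjTranspose_mul, Matrix.conjTranspose_conjTranspose, Matrix.mul_assoc,
      ← Matrix.mul_assoc (Q τ), (hQ τ).2.1, hS, Matrix.mul_assoc, frame_isometry,
      Matrix.mul_one, frame_isometry]
  set N' := spec (F.wt 0) (Q 0)
  have hsum : ∑ τ, spec (F.wt τ) (Q τ) = N' + spec (F.wt 1) (Q 1) + spec (F.wt 2) (Q 2) :=
    Fin.sum_univ_three _
  have hkill : ∀ τ τ', F.supp τ * F.supp τ' = 0 →
      (frame p q τ)ᴴ * spec (F.wt τ') (Q τ') = 0 := by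
    intro τ τ' h0
    have h1 : (frame p q τ)ᴴ * Q τ' = 0 := by
      calc (frame p q τ)ᴴ * Q τ' = ((frame p q τ)ᴴ * frame p q τ) * (frame p q τ)ᴴ *
            (Q τ' * ((Q τ')ᴴ * Q τ')) := by
            rw [frame_isometry, (hQ τ').1, Matrix.one_mul, Matrix.mul_one]
        _ = (frame p q τ)ᴴ * ((frame p q τ * (frame p q τ)ᴴ) * (Q τ' * (Q τ')ᴴ)) * Q τ' := by
            simp only [Matrix.mul_assoc]
        _ = 0 := by rw [(hQ τ').2.1, ← hS, h0, Matrix.mul_zero, Matrix.zero_mul]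
    rw [spec, ← Matrix.mul_assoc, ← Matrix.mul_assoc, h1, Matrix.zero_mul, Matrix.zero_mul]
  have h1 : F.supp 1 = F.proj := (hS 1).trans (frame_one p q)
  have h2 : F.supp 2 = 1 - F.proj := (hS 2).trans (frame_two p q)
  have h12 : F.supp 1 * F.supp 2 = 0 := by
    rw [h1, h2, Matrix.mul_sub, Matrix.mul_one, F.proj_idem, sub_self]
  have h21 : F.supp 2 * F.supp 1 = 0 := by
    rw [h1, h2, Matrix.sub_mul, Matrix.one_mul, F.proj_idem, sub_self]
  have hblk : ∀ Y, F.weights.blk Y = F.supp 1 * Y * F.supp 1 + F.supp 2 * Y * F.supp 2 := by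
    intro Y; rw [h1, h2]; rfl
  have hcomp : ∀ τ τ', F.supp τ * F.supp τ' = 0 →
      F.supp τ * (∑ τ, spec (F.wt τ) (Q τ)) * F.supp τ + F.supp τ' * (∑ τ, spec (F.wt τ) (Q τ)) *
        F.supp τ' = 0 → (frame p q τ)ᴴ * (∑ τ, spec (F.wt τ) (Q τ)) * frame p q τ = 0 := by
    intro τ τ' h0 hs
    set Y := ∑ τ, spec (F.wt τ) (Q τ)
    have e1 : (frame p q τ)ᴴ * F.supp τ = (frame p q τ)ᴴ := by
      rw [hS, ← Matrix.mul_assoc, frame_isometry, Matrix.one_mul]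
    have e2 : F.supp τ * frame p q τ = frame p q τ := by
      rw [hS, Matrix.mul_assoc, frame_isometry, Matrix.mul_one]
    have e3 : (frame p q τ)ᴴ * F.supp τ' = 0 := by
      rw [← e1, Matrix.mul_assoc, h0, Matrix.mul_zero]
    have e4 := congrArg (fun Z => (frame p q τ)ᴴ * Z * frame p q τ) hs
    simp only [Matrix.mul_add, ← Matrix.mul_assoc, e1, e3, Matrix.zero_mul,
      add_zero, Matrix.mul_zero] at e4
    rwa [Matrix.mul_assoc _ (F.supp τ), e2] at e4
  rw [hblk] at hQ0
  have hc1 := hcomp 1 2 h12 hQ0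
  have hc2 := hcomp 2 1 h21 (by rwa [add_comm] at hQ0)
  rw [hsum, Matrix.mul_add, Matrix.mul_add, hkill 1 2 h12, add_zero, Matrix.add_mul, hQs,
    add_eq_zero_iff_eq_neg] at hc1
  rw [hsum, Matrix.mul_add, Matrix.mul_add, hkill 2 1 h21, add_zero, Matrix.add_mul, hQs,
    add_eq_zero_iff_eq_neg] at hc2
  refine ⟨N'.toBlocks₁₂, fun τ => ?_⟩
  rw [← eq_fromBlocks_of_anticommute (spec_isHermitian _ _) (hQ 0).2.2, ← frame_conj]
  match τ with
  | 0 => rw [hQs]; exact charpoly_spec (hV 0) (hV' 0) _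
  | 1 => rw [hc1]; exact charpoly_neg_spec (hV 1) (hV' 1) (hw' 1)
  | 2 => rw [hc2]; exact charpoly_neg_spec (hV 2) (hV' 2) (hw' 2)

end Core

section Cones

variable {p q : ℕ}

/-- The vectors of a triple, indexed like the blocks. -/
def tripleVec (g : Fin (p + q) → ℝ) (s : Fin p → ℝ) (t : Fin q → ℝ) :
    ∀ τ, Fin (halfSize p q τ) → ℝ
  | 0 => g
  | 1 => s
  | 2 => t

lemma charpoly_submatrix_equiv {α β : Type*} [Fintype α] [DecidableEq α] [Fintype β]
    [DecidableEq β] (e : α ≃ β) (N : Matrix β β ℂ) : (N.submatrix e e).charpoly = N.charpoly :=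
  Matrix.charpoly_reindex e.symm N

lemma charOf_comp_cast {m n : ℕ} (h : m = n) (w : Fin n → ℝ) :
    charOf (w ∘ Fin.cast h) = charOf w := by
  subst h; rfl

lemma mem_coneT_iff {g : Fin (p + q) → ℝ} {s : Fin p → ℝ} {t : Fin q → ℝ}
    (hu : ∀ τ, Antitone (tripleVec g s t τ)) (hu0 : ∀ τ i, 0 ≤ tripleVec g s t τ i) :
    (g, s, t) ∈ coneT p q ↔ ∃ M : Matrix (Fin p ⊕ Fin q) (Fin p ⊕ Fin q) ℂ, ∀ τ,
      ((fromBlocks 0 M Mᴴ 0).submatrix (inclDouble p q τ) (inclDouble p q τ)).charpoly =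
        charOf (hatPQ (halfSize p q τ) (halfSize p q τ) (tripleVec g s t τ)) := by
  have h1 : ∀ (M : Matrix (Fin p ⊕ Fin q) (Fin p ⊕ Fin q) ℂ) τ,
      ((fromBlocks 0 M Mᴴ 0).submatrix (inclDouble p q τ) (inclDouble p q τ)).charpoly =
        charOf (hatPQ (halfSize p q τ) (halfSize p q τ) (tripleVec g s t τ)) ↔
      ∀ i : Fin (halfSize p q τ),
        tripleVec g s t τ i = sval (M.submatrix (incl p q τ) (incl p q τ)) i := by
    intro M τ
    rw [eq_sval_iff (hu τ) (hu0 τ), inclDouble, Matrix.conjTranspose_submatrix]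
    have : (fromBlocks 0 M Mᴴ 0).submatrix (Sum.map (incl p q τ) (incl p q τ))
        (Sum.map (incl p q τ) (incl p q τ)) = fromBlocks 0 (M.submatrix (incl p q τ) (incl p q τ))
        (Mᴴ.submatrix (incl p q τ) (incl p q τ)) 0 := by
      ext (a | a) (b | b) <;> rfl
    rw [this]
  have h2 : ∀ X : Matrix (Fin (p + q)) (Fin (p + q)) ℂ, ∀ M : Matrix (Fin p ⊕ Fin q) _ ℂ,
      X = M.submatrix finSumFinEquiv.symm finSumFinEquiv.symm →
      (((∀ i : Fin (p + q), g i = sval X i) ∧ (∀ i : Fin p, s i = sval (blockTL p q X) i) ∧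
        ∀ i : Fin q, t i = sval (blockBR p q X) i) ↔ ∀ τ, ∀ i : Fin (halfSize p q τ),
          tripleVec g s t τ i = sval (M.submatrix (incl p q τ) (incl p q τ)) i) := by
    rintro _ M rfl
    have hTL : blockTL p q (M.submatrix finSumFinEquiv.symm finSumFinEquiv.symm) =
        M.submatrix Sum.inl Sum.inl := by
      ext a b; simp [blockTL]
    have hBR : blockBR p q (M.submatrix finSumFinEquiv.symm finSumFinEquiv.symm) =
        M.submatrix Sum.inr Sum.inr := by
      ext a b; simp [blockBR]
    rw [hTL, hBR]
    constructor
    · rintro ⟨a, b, c⟩ τ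
      match τ with
      | 0 => exact a
      | 1 => exact b
      | 2 => exact c
    · exact fun h => ⟨h 0, h 1, h 2⟩
  simp only [h1]
  constructor
  · rintro ⟨X, hX⟩
    exact ⟨X.submatrix finSumFinEquiv finSumFinEquiv, (h2 X _ (by simp)).mp hX⟩
  · rintro ⟨M, hM⟩
    exact ⟨_, (h2 _ M rfl).mpr hM⟩

/-- The regrouping of the rows of an augmented matrix by blocks. -/
def regroup (p q : ℕ) : Fin (p + p + (q + q)) ≃ (Fin p ⊕ Fin q) ⊕ (Fin p ⊕ Fin q) :=
  finSumFinEquiv.symm.trans ((finSumFinEquiv.symm.sumCongr finSumFinEquiv.symm).trans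
    (Equiv.sumSumSumComm _ _ _ _))

lemma regroup_castAdd (i : Fin (p + p)) :
    regroup p q (Fin.castAdd (q + q) i) = inclDouble p q 1 (finSumFinEquiv.symm i) := by
  have h : ∀ x : Fin p ⊕ Fin p,
      regroup p q (Fin.castAdd (q + q) (finSumFinEquiv x)) = Sum.map Sum.inl Sum.inl x := by
    intro x
    rw [← finSumFinEquiv_apply_left (n := q + q), regroup, Equiv.trans_apply,
      Equiv.symm_apply_apply, Equiv.trans_apply, Equiv.sumCongr_apply, Sum.map_inl,
      Equiv.symm_apply_apply]
    rcases x with x | x <;> rfl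
  obtain ⟨x, rfl⟩ := (finSumFinEquiv (m := p) (n := p)).surjective i
  exact (h x).trans (congrArg _ (Equiv.symm_apply_apply finSumFinEquiv x).symm)

lemma regroup_natAdd (i : Fin (q + q)) :
    regroup p q (Fin.natAdd (p + p) i) = inclDouble p q 2 (finSumFinEquiv.symm i) := by
  have h : ∀ x : Fin q ⊕ Fin q,
      regroup p q (Fin.natAdd (p + p) (finSumFinEquiv x)) = Sum.map Sum.inr Sum.inr x := by
    intro x
    rw [← finSumFinEquiv_apply_right (m := p + p), regroup, Equiv.trans_apply,
      Equiv.symm_apply_apply, Equiv.trans_apply, Equiv.sumCongr_apply, Sum.map_inr,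
      Equiv.symm_apply_apply]
    rcases x with x | x <;> rfl
  obtain ⟨x, rfl⟩ := (finSumFinEquiv (m := q) (n := q)).surjective i
  exact (h x).trans (congrArg _ (Equiv.symm_apply_apply finSumFinEquiv x).symm)

lemma mem_LRcone_iff {g : Fin (p + q) → ℝ} {s : Fin p → ℝ} {t : Fin q → ℝ}
    (hu : ∀ τ, Antitone (tripleVec g s t τ)) (hu0 : ∀ τ i, 0 ≤ tripleVec g s t τ i)
    (hc : p + p + (q + q) = p + q + (p + q)) :
    (hatPQ (p + q) (p + q) g ∘ Fin.cast hc, hatPQ p p s, hatPQ q q t) ∈ LRcone (p + p) (q + q) ↔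
      ∃ N : Matrix ((Fin p ⊕ Fin q) ⊕ (Fin p ⊕ Fin q)) ((Fin p ⊕ Fin q) ⊕ (Fin p ⊕ Fin q)) ℂ,
        N.IsHermitian ∧ ∀ τ, (N.submatrix (inclDouble p q τ) (inclDouble p q τ)).charpoly =
          charOf (hatPQ (halfSize p q τ) (halfSize p q τ) (tripleVec g s t τ)) := by
  have hw := fun τ => antitone_hatPQ (hu τ) (hu0 τ)
  have key : ∀ (N : Matrix ((Fin p ⊕ Fin q) ⊕ (Fin p ⊕ Fin q)) _ ℂ)
      (hM : (N.submatrix (regroup p q) (regroup p q)).IsHermitian),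
      (hatPQ (p + q) (p + q) g ∘ Fin.cast hc = eigVec _ hM ∧
        hatPQ p p s = eigVec _ (hM.submatrix (Fin.castAdd (q + q))) ∧
        hatPQ q q t = eigVec _ (hM.submatrix (Fin.natAdd (p + p)))) ↔
      ∀ τ, (N.submatrix (inclDouble p q τ) (inclDouble p q τ)).charpoly =
          charOf (hatPQ (halfSize p q τ) (halfSize p q τ) (tripleVec g s t τ)) := by
    intro N hM
    have hcast : Antitone (hatPQ (p + q) (p + q) g ∘ Fin.cast hc) := fun i j hij => hw 0 hij
    have hw1 : Antitone (hatPQ p p s) := hw 1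
    have hw2 : Antitone (hatPQ q q t) := hw 2
    rw [eq_eigVec_iff hcast, eq_eigVec_iff hw1, eq_eigVec_iff hw2, charOf_comp_cast,
      charpoly_submatrix_equiv]
    have h0 : (N.submatrix (inclDouble p q 0) (inclDouble p q 0)).charpoly = N.charpoly :=
      charpoly_submatrix_equiv (finSumFinEquiv.symm.sumCongr finSumFinEquiv.symm) N
    have h1 : ((N.submatrix (regroup p q) (regroup p q)).submatrix (Fin.castAdd (q + q))
        (Fin.castAdd (q + q))).charpoly =
        (N.submatrix (inclDouble p q 1) (inclDouble p q 1)).charpoly := by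
      refine Eq.trans ?_ (charpoly_submatrix_equiv finSumFinEquiv.symm _)
      congr 1
      ext a b
      simp only [Matrix.submatrix_apply, regroup_castAdd]
      rfl
    have h2 : ((N.submatrix (regroup p q) (regroup p q)).submatrix (Fin.natAdd (p + p))
        (Fin.natAdd (p + p))).charpoly =
        (N.submatrix (inclDouble p q 2) (inclDouble p q 2)).charpoly := by
      refine Eq.trans ?_ (charpoly_submatrix_equiv finSumFinEquiv.symm _)
      congr 1
      ext a b
      simp only [Matrix.submatrix_apply, regroup_natAdd]
      rfl
    rw [h1, h2, ← h0]
    constructor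
    · rintro ⟨a, b, c⟩ τ
      match τ with
      | 0 => exact a
      | 1 => exact b
      | 2 => exact c
    · exact fun h => ⟨h 0, h 1, h 2⟩
  constructor
  · rintro ⟨M, hM, h⟩
    obtain ⟨N, rfl⟩ : ∃ N : Matrix ((Fin p ⊕ Fin q) ⊕ (Fin p ⊕ Fin q)) _ ℂ,
        M = N.submatrix (regroup p q) (regroup p q) :=
      ⟨M.submatrix (regroup p q).symm (regroup p q).symm, by simp⟩
    exact ⟨N, by simpa using hM.submatrix (regroup p q).symm, (key N hM).mp h⟩
  · rintro ⟨N, hN, h⟩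
    exact ⟨_, hN.submatrix _, (key N _).mpr h⟩

end Cones

end FlagMoment

theorem stmt_12 (p q : ℕ) (hq : 1 ≤ q) (hpq : q ≤ p)
    (g : Fin (p + q) → ℝ) (hg : Antitone g) (hg0 : ∀ i, 0 ≤ g i)
    (s : Fin p → ℝ) (hs : Antitone s) (hs0 : ∀ i, 0 ≤ s i)
    (t : Fin q → ℝ) (ht : Antitone t) (ht0 : ∀ i, 0 ≤ t i) :
    (g, s, t) ∈ coneT p q ↔
      (hatPQ (p + q) (p + q) g ∘
          Fin.cast (show p + p + (q + q) = p + q + (p + q) by ring),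
        hatPQ p p s, hatPQ q q t) ∈ LRcone (p + p) (q + q) := by
  have hu : ∀ τ, Antitone (FlagMoment.tripleVec g s t τ) := fun τ => by
    match τ with
    | 0 => exact hg
    | 1 => exact hs
    | 2 => exact ht
  have hu0 : ∀ τ i, 0 ≤ FlagMoment.tripleVec g s t τ i := fun τ => by
    match τ with
    | 0 => exact hg0
    | 1 => exact hs0
    | 2 => exact ht0
  rw [FlagMoment.mem_coneT_iff hu hu0, FlagMoment.mem_LRcone_iff hu hu0]
  constructor
  · rintro ⟨M, hM⟩
    refine ⟨fromBlocks 0 M Mᴴ 0, ?_, hM⟩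
    simp [Matrix.IsHermitian, Matrix.fromBlocks_conjTranspose]
  · rintro ⟨N, hN, h⟩
    exact FlagMoment.exists_fromBlocks hu hu0 hN h
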